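/- arXiv:2104.11836 — 6 statements merged into one kernel-verified Lean document; each statement's English description precedes it below -/
import Mathlib

section
/- Let R = K[X_1,…,X_n]/I be a standard graded algebra over a field K, let V ⊆ 𝔸(R_1) be an irreducible variety whose points span the vector space R_1, and assume that K is algebraically closed or that the defining ideal of V is homogeneous. Let d > 0 and let dim_K R_d = C(k_d,d) + C(k_{d−1},d−1) + … + C(k_1,1) be the d-th Macaulay representation of dim_K R_d. Then for any p linear forms l_1,…,l_p of R that are general points of V (i.e. for all p-tuples in some nonempty Zariski open subset of V^p) one has dim_K (R/(l_1,…,l_p))_d ≤ C(k_d−p,d) + C(k_{d−1}−p,d−1) + … + C(k_1−p,1). -/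
/-- Polynomial functions on a `K`-vector space `V`: the subalgebra of `V → K`
generated by the linear functionals. -/
def polyFuns (K V : Type*) [Field K] [AddCommGroup V] [Module K V] : Subalgebra K (V → K) :=
  Algebra.adjoin K {f : V → K | ∃ φ : V →ₗ[K] K, ⇑φ = f}

/-- A subset of (the affine space of) a `K`-vector space is Zariski closed if it is the
common zero locus of a family of polynomial functions. -/
def IsZClosed (K : Type*) {V : Type*} [Field K] [AddCommGroup V] [Module K V]
    (Z : Set V) : Prop :=
  ∃ S : Set (V → K), (∀ f ∈ S, f ∈ polyFuns K V) ∧ Z = {v | ∀ f ∈ S, f v = 0}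

/-- A subset is Zariski open if its complement is Zariski closed. -/
def IsZOpen (K : Type*) {V : Type*} [Field K] [AddCommGroup V] [Module K V]
    (U : Set V) : Prop :=
  IsZClosed K Uᶜ

/-- An irreducible variety: a nonempty Zariski closed set which is not the union of two
proper closed subsets. -/
def IsIrredVariety (K : Type*) {V : Type*} [Field K] [AddCommGroup V] [Module K V]
    (W : Set V) : Prop :=
  IsZClosed K W ∧ W.Nonempty ∧
    ∀ Z₁ Z₂ : Set V, IsZClosed K Z₁ → IsZClosed K Z₂ → W ⊆ Z₁ ∪ Z₂ → (W ⊆ Z₁ ∨ W ⊆ Z₂)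

/-- Auxiliary recursion for `wordIdeal`: letters are booleans, `true` standing for the
letter `c` (colon) and `false` for the letter `s` (sum). The natural number argument keeps
track of which linear form is to be used next (0-indexed). -/
def wordIdealAux {R : Type*} [CommRing R] (l : ℕ → R) : ℕ → Ideal R → List Bool → Ideal R
  | _, I, [] => I
  | j, I, a :: o =>
      wordIdealAux l (j + 1)
        (if a then I.colon (Ideal.span {l j}) else I ⊔ Ideal.span {l j}) o

/-- The ideal `I_{l,o}` attached to a sequence of (linear) forms `l` and a word `o` in the
letters `{c, s}` (here `c = true`, `s = false`): starting from `(0)`, the `j`-th letter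
either colons (`c`) or adds (`s`) the `j`-th form. -/
def wordIdeal {R : Type*} [CommRing R] (l : ℕ → R) (o : List Bool) : Ideal R :=
  wordIdealAux l 0 ⊥ o

/-- The degree `d` component `I ∩ R_d` of an ideal `I`, as a `K`-subspace of `𝒜 d`. -/
def homComp {K R : Type*} [Field K] [CommRing R] [Algebra K R]
    (𝒜 : ℕ → Submodule K R) (I : Ideal R) (d : ℕ) : Submodule K (𝒜 d) :=
  Submodule.comap (𝒜 d).subtype (Submodule.restrictScalars K I)

/-- `dim_K (I)_d`, the dimension of the degree `d` component of the (homogeneous) ideal `I`. -/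
noncomputable def homDim {K R : Type*} [Field K] [CommRing R] [Algebra K R]
    (𝒜 : ℕ → Submodule K R) (I : Ideal R) (d : ℕ) : ℕ :=
  Module.finrank K (homComp 𝒜 I d)

/-- `dim_K (R/I)_d`, the dimension of the degree `d` component of `R/I` for a
(homogeneous) ideal `I`, computed as `dim 𝒜 d / (I ∩ 𝒜 d)`. -/
noncomputable def quotDim {K R : Type*} [Field K] [CommRing R] [Algebra K R]
    (𝒜 : ℕ → Submodule K R) (I : Ideal R) (d : ℕ) : ℕ :=
  Module.finrank K ((𝒜 d) ⧸ homComp 𝒜 I d)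

/-- `macaulayDown c d = c_⟨d⟩`: if `c = C(k_d,d) + … + C(k_1,1)` is the `d`-th Macaulay
representation of `c`, then `c_⟨d⟩ = C(k_d - 1,d) + … + C(k_1 - 1,1)`; computed greedily. -/
def macaulayDown : ℕ → ℕ → ℕ
  | _, 0 => 0
  | c, d + 1 =>
      let k := Nat.findGreatest (fun k => Nat.choose k (d + 1) ≤ c) (c + d + 1)
      Nat.choose (k - 1) (d + 1) + macaulayDown (c - Nat.choose k (d + 1)) d

/-- Property (Gr,d) for the linear forms `l 0, …, l (r-1)` (letters: `true = c`,
`false = s`): for every word `o` of length `i ≤ r`,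
(1) if `m ⊄ I_o` and `i < r` then `l_{i+1} ∉ I_o`;
(2) if `i = r` and `|o|_c < d` then `m ⊆ I_o`;
(3) if `i ≤ r - 2` then `dim (I_{o,c,s})_{d - |o|_c - 1} ≤ dim (I_{o,s,c})_{d - |o|_c - 1}`. -/
def GrProp {K R : Type*} [Field K] [CommRing R] [Algebra K R]
    (𝒜 : ℕ → Submodule K R) [GradedAlgebra 𝒜] (l : ℕ → R) (r d : ℕ) : Prop :=
  ∀ o : List Bool, o.length ≤ r →
    (¬ (HomogeneousIdeal.irrelevant 𝒜).toIdeal ≤ wordIdeal l o → o.length < r →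
        l o.length ∉ wordIdeal l o) ∧
    (o.length = r → o.count true < d →
        (HomogeneousIdeal.irrelevant 𝒜).toIdeal ≤ wordIdeal l o) ∧
    (o.length + 2 ≤ r →
        homDim 𝒜 (wordIdeal l (o ++ [true, false])) (d - o.count true - 1) ≤
          homDim 𝒜 (wordIdeal l (o ++ [false, true])) (d - o.count true - 1))



namespace Green
/-- strictly increasing on `[0,d)` -/
def SI (d : ℕ) (k : ℕ → ℕ) : Prop := ∀ i j, i < j → j < d → k i < k j
def S0 (d : ℕ) (k : ℕ → ℕ) : ℕ := ∑ i ∈ Finset.range d, (k i).choose (i + 1)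
def S1 (d : ℕ) (k : ℕ → ℕ) : ℕ := ∑ i ∈ Finset.range d, (k i - 1).choose (i + 1)

theorem S0_succ (d k) : S0 (d+1) k = S0 d k + (k d).choose (d+1) := Finset.sum_range_succ _ _
theorem S1_succ (d k) : S1 (d+1) k = S1 d k + (k d - 1).choose (d+1) := Finset.sum_range_succ _ _
theorem SI.pred {d k} (h : SI (d+1) k) : SI d k := fun i j a b => h i j a (by omega)

theorem S0_congr {d k k'} (h : ∀ i < d, k i = k' i) : S0 d k = S0 d k' :=
  Finset.sum_congr rfl fun i hi => by rw [h i (Finset.mem_range.1 hi)]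
theorem S1_congr {d k k'} (h : ∀ i < d, k i = k' i) : S1 d k = S1 d k' :=
  Finset.sum_congr rfl fun i hi => by rw [h i (Finset.mem_range.1 hi)]

theorem S1_le_S0 (d k) : S1 d k ≤ S0 d k :=
  Finset.sum_le_sum fun i _ => Nat.choose_le_choose _ (by omega)

theorem S0_lt (d : ℕ) (k) (h : SI (d+1) k) : S0 (d+1) k < (k d + 1).choose (d+1) := by
  induction d with
  | zero => simp [S0]
  | succ d ih =>
    rw [S0_succ, Nat.choose_succ_succ]
    have h1 := ih h.pred
    have h2 : (k d + 1).choose (d+1) ≤ (k (d+1)).choose (d+1) :=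
      Nat.choose_le_choose _ (h d (d+1) (by omega) (by omega))
    simp only [Nat.succ_eq_add_one] at *
    omega

theorem S1_le (d : ℕ) (k) (h : SI (d+1) k) : S1 (d+1) k ≤ (k d).choose (d+1) := by
  induction d with
  | zero => simp [S1]
  | succ d ih =>
    rw [S1_succ]
    have h1 := ih h.pred
    have h0 := h d (d+1) (by omega) (by omega)
    have h2 : (k d).choose (d+1) ≤ (k (d+1) - 1).choose (d+1) :=
      Nat.choose_le_choose _ (by omega)
    obtain ⟨q, hq⟩ : ∃ q, k (d+1) = q + 1 := ⟨k (d+1) - 1, by omega⟩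
    rw [hq] at h2 ⊢
    have := Nat.choose_succ_succ q (d+1)
    simp only [Nat.succ_eq_add_one, Nat.add_sub_cancel] at *
    omega

theorem u_le (d : ℕ) (k) (h : SI (d+1) k) : S0 (d+1) k ≤ S1 (d+1) k + (k d).choose d := by
  induction d with
  | zero => simp [S1, S0]; omega
  | succ d ih =>
    rw [S1_succ, S0_succ]
    have h1 := ih h.pred
    have h0 := h d (d+1) (by omega) (by omega)
    have h2 : (k d).choose d ≤ (k (d+1) - 1).choose d :=
      Nat.choose_le_choose _ (by omega)
    obtain ⟨q, hq⟩ : ∃ q, k (d+1) = q + 1 := ⟨k (d+1) - 1, by omega⟩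
    rw [hq] at h2 ⊢
    have := Nat.choose_succ_succ q (d+1)
    have := Nat.choose_succ_succ q d
    simp only [Nat.succ_eq_add_one, Nat.add_sub_cancel] at *
    omega

theorem compare (d : ℕ) (k k') (h : SI d k) (h' : SI d k') (hle : S0 d k ≤ S0 d k') :
    S1 d k ≤ S1 d k' ∧ S0 d k + S1 d k' ≤ S0 d k' + S1 d k := by
  induction d with
  | zero => simp [S0, S1]
  | succ d ih =>
    rcases lt_trichotomy (k d) (k' d) with hlt | heq | hgt
    · have a1 := S1_le d k h
      have a2 := u_le d k h
      have a3 := S1_le_S0 d k'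
      rw [S1_succ d k', S0_succ d k']
      have h2 : (k d).choose (d+1) ≤ (k' d - 1).choose (d+1) :=
        Nat.choose_le_choose _ (by omega)
      have h3 : (k d).choose d ≤ (k' d - 1).choose d :=
        Nat.choose_le_choose _ (by omega)
      obtain ⟨q, hq⟩ : ∃ q, k' d = q + 1 := ⟨k' d - 1, by omega⟩
      rw [hq] at h2 h3 ⊢
      have := Nat.choose_succ_succ q d
      simp only [Nat.succ_eq_add_one, Nat.add_sub_cancel] at *
      omega
    · rw [S0_succ, S0_succ, heq] at hle
      have := ih h.pred h'.pred (by omega)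
      rw [S0_succ, S0_succ, S1_succ, S1_succ, heq]
      omega
    · have h1 := S0_lt d k' h'
      have h2 : (k' d + 1).choose (d+1) ≤ (k d).choose (d+1) :=
        Nat.choose_le_choose _ (by omega)
      rw [S0_succ d k] at hle
      omega

theorem exists_rep (d c : ℕ) : ∃ k, SI (d+1) k ∧ S0 (d+1) k = c := by
  induction d generalizing c with
  | zero => exact ⟨fun _ => c, fun i j h1 h2 => by omega, by simp [S0]⟩
  | succ d ih =>
    have hex : ∃ q, c < (q+1).choose (d+2) :=
      ⟨c + d + 1, by
        have h : (c + (d+2)).choose (d+2) = (c + (d+2)).choose c := by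
          rw [Nat.choose_symm_add]
        have h2 : (c + 1).choose c ≤ (c + (d+2)).choose c := Nat.choose_le_choose _ (by omega)
        rw [Nat.choose_succ_self_right] at h2
        have : c + d + 1 + 1 = c + (d+2) := by ring
        rw [this, h]; omega⟩
    classical
    set q := Nat.find hex with hq
    have h1 : c < (q+1).choose (d+2) := Nat.find_spec hex
    have h2 : q.choose (d+2) ≤ c := by
      rcases Nat.eq_zero_or_pos q with h | h
      · rw [h]; simp
      · have := Nat.find_min hex (m := q - 1) (by omega)
        rw [Nat.sub_add_cancel h] at this
        omega
    obtain ⟨k, hk, hs⟩ := ih (c - q.choose (d+2))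
    have h3 : (q+1).choose (d+2) = q.choose (d+1) + q.choose (d+2) := Nat.choose_succ_succ q (d+1)
    have h4 : k d < q := by
      by_contra hc
      have h5 : q.choose (d+1) ≤ (k d).choose (d+1) := Nat.choose_le_choose _ (by omega)
      rw [S0_succ] at hs
      omega
    refine ⟨fun i => if i ≤ d then k i else q, ?_, ?_⟩
    · intro i j hij hj
      have hi : i ≤ d := by omega
      simp only [hi, if_true]
      by_cases hjd : j ≤ d
      · simp only [hjd, if_true]; exact hk i j hij (by omega)
      · simp only [hjd, if_false]
        rcases Nat.lt_or_ge i d with h | h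
        · exact (hk i d h (by omega)).trans h4
        · have : i = d := by omega
          rw [this]; exact h4
    · rw [S0_succ, S0_congr (k' := k) (fun i hi => by simp [show i ≤ d by omega]), hs]
      have h6 : (if d + 1 ≤ d then k (d+1) else q) = q := if_neg (by omega)
      simp only [h6]
      change c - q.choose (d+2) + q.choose (d+2) = c
      omega

noncomputable def kk (d c : ℕ) : ℕ → ℕ := (exists_rep d c).choose
theorem kk_SI (d c) : SI (d+1) (kk d c) := (exists_rep d c).choose_spec.1
theorem kk_S0 (d c) : S0 (d+1) (kk d c) = c := (exists_rep d c).choose_spec.2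
/-- `c_⟨d+1⟩` -/
noncomputable def F (d c : ℕ) : ℕ := S1 (d+1) (kk d c)

theorem F_mono (d : ℕ) {c c'} (h : c ≤ c') : F d c ≤ F d c' :=
  (compare _ _ _ (kk_SI d c) (kk_SI d c') (by simpa [kk_S0] using h)).1
theorem F_lip (d : ℕ) {c c'} (h : c ≤ c') : c + F d c' ≤ c' + F d c := by
  have := (compare _ _ _ (kk_SI d c) (kk_SI d c') (by simpa [kk_S0] using h)).2
  simpa [kk_S0, F] using this
theorem F_eq (d : ℕ) (k) (h : SI (d+1) k) : F d (S0 (d+1) k) = S1 (d+1) k :=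
  le_antisymm (compare _ _ _ (kk_SI d _) h (by simp [kk_S0])).1
    (compare _ _ _ h (kk_SI d _) (by simp [kk_S0])).1

theorem F_zero (c : ℕ) : F 0 c = c - 1 := by
  have := F_eq 0 (fun _ => c) (fun i j h1 h2 => by omega)
  simpa [S0, S1] using this

def hat (e : ℕ) (m : ℕ → ℕ) : ℕ := ∑ i ∈ Finset.range e, (m i).choose (i + 2)

theorem hat_rep (e : ℕ) (m) (hm : SI e m) :
    F e (S0 e m + hat e m) = hat e m := by
  have := F_eq e (fun i => if i = 0 then 0 else m (i-1) + 1) (by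
    intro i j hij hj
    have : j ≠ 0 := by omega
    simp only [this, if_false]
    by_cases h : i = 0
    · simp [h]
    · simp only [h, if_false]
      have := hm (i-1) (j-1) (by omega) (by omega)
      omega)
  have e1 : S0 (e+1) (fun i => if i = 0 then 0 else m (i-1) + 1) = S0 e m + hat e m := by
    simp only [S0, hat, Finset.sum_range_succ', ← Finset.sum_add_distrib]
    simp [Nat.choose_succ_succ]
  have e2 : S1 (e+1) (fun i => if i = 0 then 0 else m (i-1) + 1) = hat e m := by
    simp only [S1, hat, Finset.sum_range_succ']
    simp
  rw [e1, e2] at this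
  exact this

theorem hat_succ_rep (e : ℕ) (m) (hm : SI e m) :
    ∃ k, SI (e+1) k ∧ S0 (e+1) k = hat e m + 1 ∧ S1 (e+1) k + S1 e m = hat e m ∧
      (k e ≤ e + 1 ∨ (0 < e ∧ k e ≤ m (e-1))) := by
  induction e with
  | zero => exact ⟨fun _ => 1, fun i j _ _ => by omega, by simp [S0, hat], by simp [S1, hat],
      by simp⟩
  | succ e ih =>
    by_cases hle : m e ≤ e + 1
    · have hm' : ∀ i ≤ e, m i ≤ i + 1 := by
        intro i hi
        obtain ⟨t, ht⟩ := Nat.exists_eq_add_of_le hi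
        have key : ∀ t, i + t < e + 1 → m i + t ≤ m (i + t) := by
          intro t
          induction t with
          | zero => simp
          | succ t iht =>
            intro ht
            have := iht (by omega)
            have := hm (i+t) (i+(t+1)) (by omega) ht
            omega
        have := key t (by omega)
        rw [← ht] at this
        omega
      have h0 : hat (e+1) m = 0 := by
        refine Finset.sum_eq_zero fun i hi => Nat.choose_eq_zero_of_lt ?_
        have := hm' i (by simp at hi; omega)
        omega
      have h1 : S1 (e+1) m = 0 := by
        refine Finset.sum_eq_zero fun i hi => Nat.choose_eq_zero_of_lt ?_
        have := hm' i (by simp at hi; omega)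
        omega
      refine ⟨fun i => if i ≤ e then i else e + 2, ?_, ?_, ?_, ?_⟩
      · intro i j hij hj
        simp only [show i ≤ e by omega, if_true]
        split_ifs <;> omega
      · rw [h0, S0_succ, S0_congr (k' := fun i => i) (fun i hi => by simp [show i ≤ e by omega])]
        simp [S0]
      · rw [h0, h1, S1_succ, S1_congr (k' := fun i => i) (fun i hi => by simp [show i ≤ e by omega])]
        simp only [S1]
        rw [Finset.sum_eq_zero fun i hi => Nat.choose_eq_zero_of_lt (by omega)]
        simp
      · simp
    · obtain ⟨k, k1, k2, k3, k4⟩ := ih hm.pred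
      have hke : k e < m e := by
        rcases k4 with h | ⟨h, h'⟩
        · omega
        · have := hm (e-1) e (by omega) (by omega)
          omega
      refine ⟨fun i => if i ≤ e then k i else m e, ?_, ?_, ?_, ?_⟩
      · intro i j hij hj
        have hi : i ≤ e := by omega
        simp only [hi, if_true]
        by_cases hjd : j ≤ e
        · simp only [hjd, if_true]; exact k1 i j hij (by omega)
        · simp only [hjd, if_false]
          rcases Nat.lt_or_ge i e with h | h
          · exact (k1 i e h (by omega)).trans hke
          · have : i = e := by omega
            rw [this]; exact hke
      · rw [S0_succ, S0_congr (k' := k) (fun i hi => by simp [show i ≤ e by omega]), k2,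
          hat, hat, Finset.sum_range_succ]
        have h6 : (if e + 1 ≤ e then k (e+1) else m e) = m e := if_neg (by omega)
        simp only [h6]
        ring
      · rw [S1_succ, S1_congr (k' := k) (fun i hi => by simp [show i ≤ e by omega]), S1_succ e m]
        have : hat (e+1) m = hat e m + (m e).choose (e+2) := Finset.sum_range_succ _ _
        obtain ⟨q, hq⟩ : ∃ q, m e = q + 1 := ⟨m e - 1, by omega⟩
        have h5 : (q+1).choose (e+2) = q.choose (e+1) + q.choose (e+2) :=
          Nat.choose_succ_succ q (e+1)
        have h6 : (if e + 1 ≤ e then k (e+1) else m e) = m e := if_neg (by omega)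
        simp only [h6]
        rw [this, hq, h5]
        change _ + q.choose (e+2) + (_ + q.choose (e+1)) = _
        omega
      · right; simp

theorem numeric (e a b : ℕ) (h : a ≤ F (e+1) a + F e b) : a ≤ F (e+1) (a+b) := by
  have hm := kk_SI e b
  have hb := kk_S0 e b
  have h1 := hat_rep (e+1) _ hm
  obtain ⟨k, k1, k2, k3, -⟩ := hat_succ_rep (e+1) _ hm
  have h2 := F_eq (e+1) k k1
  rw [k2] at h2
  rw [hb] at h1
  change S1 (e+1+1) k + F e b = _ at k3
  set H := hat (e+1) (kk e b)
  have hle : a ≤ H := by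
    by_contra hc
    have := F_lip (e+1) (c := H+1) (c' := a) (by omega)
    omega
  have := F_lip (e+1) (c := a+b) (c' := b+H) (by omega)
  omega

/-- shifting a representation -/
theorem F_shift (d : ℕ) (k) (h : SI (d+1) k) (p : ℕ) :
    F d (∑ i ∈ Finset.range (d+1), (k i - p).choose (i+1)) =
      ∑ i ∈ Finset.range (d+1), (k i - (p+1)).choose (i+1) := by
  have := F_eq d (fun i => max (k i - p) i) (by
    intro i j hij hj
    have := h i j hij hj
    simp only []
    omega)
  have e1 : ∀ i, (max (k i - p) i).choose (i+1) = (k i - p).choose (i+1) := by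
    intro i
    rcases le_total i (k i - p) with h | h
    · rw [max_eq_left h]
    · rw [max_eq_right h, Nat.choose_eq_zero_of_lt (by omega), Nat.choose_eq_zero_of_lt (by omega)]
  have e2 : ∀ i, (max (k i - p) i - 1).choose (i+1) = (k i - (p+1)).choose (i+1) := by
    intro i
    rcases le_total i (k i - p) with h | h
    · rw [max_eq_left h]; congr 1
    · rw [max_eq_right h, Nat.choose_eq_zero_of_lt (by omega), Nat.choose_eq_zero_of_lt (by omega)]
  simpa only [S0, S1, e1, e2] using this
end Green
namespace Green
open Module

theorem li_iff {K B : Type*} [Field K] [AddCommGroup B] [Module K B] {r : ℕ} (b : Fin r → B) :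
    LinearIndependent K b ↔ ∃ φ : Fin r → (B →ₗ[K] K), (Matrix.of fun i j => φ j (b i)).det ≠ 0 := by
  constructor
  · intro h
    obtain ⟨g, hg⟩ := LinearMap.exists_leftInverse_of_injective
      (Fintype.linearCombination K b) (LinearMap.ker_eq_bot.2
        (linearIndependent_iff_injective_fintypeLinearCombination.1 h))
    refine ⟨fun j => (LinearMap.proj j) ∘ₗ g, ?_⟩
    have : (Matrix.of fun i j => ((LinearMap.proj j : (Fin r → K) →ₗ[K] K) ∘ₗ g) (b i)) = 1 := by
      ext i j
      have := LinearMap.congr_fun hg (Pi.single i 1)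
      simp [Fintype.linearCombination_apply_single] at this
      simp [this, Matrix.one_apply, Pi.single_apply, eq_comm]
    rw [this]; simp
  · rintro ⟨φ, hφ⟩
    refine LinearIndependent.of_comp (LinearMap.pi φ) ?_
    have := (Matrix.linearIndependent_rows_iff_isUnit (A := Matrix.of fun i j => φ j (b i))).2
      ((Matrix.isUnit_iff_isUnit_det _).2 (isUnit_iff_ne_zero.2 hφ))
    exact this

theorem closed_rank {K B X A : Type*} [Field K] [AddCommGroup B] [Module K B]
    [AddCommGroup X] [Module K X] (P : X → Submodule K B) [∀ x, FiniteDimensional K (P x)]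
    (T : X → A → B) (hT : ∀ x b, b ∈ P x ↔ ∃ a, T x a = b)
    (hpoly : ∀ a (φ : B →ₗ[K] K), (fun x => φ (T x a)) ∈ polyFuns K X) (r : ℕ) :
    IsZClosed K {x | finrank K (P x) < r} := by
  refine ⟨{f | ∃ (a : Fin r → A) (φ : Fin r → (B →ₗ[K] K)),
    f = fun x => (Matrix.of fun i j => φ j (T x (a i))).det}, ?_, ?_⟩
  · rintro f ⟨a, φ, rfl⟩
    have : (fun x => (Matrix.of fun i j => φ j (T x (a i))).det) =
        ∑ σ : Equiv.Perm (Fin r), (Equiv.Perm.sign σ : ℤ) •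
          ∏ i, (fun x => φ i (T x (a (σ i)))) := by
      ext x
      rw [Matrix.det_apply]
      simp [Finset.sum_apply, Finset.prod_apply, Units.smul_def]
    rw [this]
    exact Subalgebra.sum_mem _ fun σ _ => Subalgebra.zsmul_mem _
      (Subalgebra.prod_mem _ fun i _ => hpoly _ _) _
  · ext x
    simp only [Set.mem_ofPred_eq]
    constructor
    · rintro hx f ⟨a, φ, rfl⟩
      by_contra hne
      have hli : LinearIndependent K (fun i => T x (a i)) := (li_iff _).2 ⟨φ, hne⟩
      have hli2 : LinearIndependent K
          (fun i => (⟨T x (a i), (hT x _).2 ⟨_, rfl⟩⟩ : P x)) :=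
        LinearIndependent.of_comp (P x).subtype hli
      have := hli2.fintype_card_le_finrank
      simp at this
      omega
    · intro h
      by_contra hx
      push Not at hx
      obtain ⟨b, hb⟩ : ∃ b : Fin r → P x, LinearIndependent K b := by
        refine ⟨fun i => finBasis K (P x) (Fin.castLE hx i), ?_⟩
        exact (finBasis K (P x)).linearIndependent.comp _ (Fin.castLE_injective hx)
      have hb2 := hb.map' (P x).subtype (Submodule.ker_subtype _)
      choose a ha using fun i => (hT x (b i)).1 (b i).2
      obtain ⟨φ, hφ⟩ := (li_iff _).1 hb2
      apply hφ
      have := h _ ⟨a, φ, rfl⟩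
      simpa [ha] using this

theorem IsZClosed_union {K X : Type*} [Field K] [AddCommGroup X] [Module K X] {Z Z' : Set X}
    (h : IsZClosed K Z) (h' : IsZClosed K Z') : IsZClosed K (Z ∪ Z') := by
  obtain ⟨S, hS, rfl⟩ := h
  obtain ⟨S', hS', rfl⟩ := h'
  refine ⟨{f | ∃ a ∈ S, ∃ b ∈ S', f = a * b}, ?_, ?_⟩
  · rintro f ⟨a, ha, b, hb, rfl⟩
    exact Subalgebra.mul_mem _ (hS a ha) (hS' b hb)
  · ext v
    simp only [Set.mem_union, Set.mem_ofPred_eq]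
    constructor
    · rintro (h | h) f ⟨a, ha, b, hb, rfl⟩
      · simp [h a ha]
      · simp [h b hb]
    · intro h
      by_contra hc
      push Not at hc
      obtain ⟨⟨a, ha, ha'⟩, b, hb, hb'⟩ := hc
      have := h _ ⟨a, ha, b, hb, rfl⟩
      simp [ha', hb'] at this

section
variable {K R : Type*} [Field K] [CommRing R] [Algebra K R]

/-- `l A` -/
def mulS (l : R) (A : Submodule K R) : Submodule K R := A.map (LinearMap.mulLeft K l)
/-- `(N : l) ∩ A` -/
def colS (l : R) (A N : Submodule K R) : Submodule K R := A ⊓ N.comap (LinearMap.mulLeft K l)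

instance (l : R) (A : Submodule K R) [FiniteDimensional K A] : FiniteDimensional K (mulS l A) := by
  unfold mulS; infer_instance
instance (l : R) (A N : Submodule K R) [FiniteDimensional K A] :
    FiniteDimensional K (colS l A N) :=
  Submodule.finiteDimensional_of_le (S₂ := A) inf_le_left

theorem finrank_map_add (f : R →ₗ[K] R) (A : Submodule K R) [FiniteDimensional K A] :
    finrank K (A.map f) + finrank K (A ⊓ LinearMap.ker f : Submodule K R) = finrank K A := by
  have := LinearMap.finrank_range_add_finrank_ker (f.domRestrict A)
  rw [LinearMap.range_domRestrict] at this
  rw [← this]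
  congr 1
  rw [← Submodule.finrank_map_subtype_eq A (LinearMap.ker (f.domRestrict A))]
  congr 2
  all_goals
    ext x
    simp [LinearMap.domRestrict, and_comm]

theorem finrank_colon (l : R) (A N : Submodule K R) [FiniteDimensional K A]
    [FiniteDimensional K N] :
    finrank K (colS l A N) + finrank K (N ⊔ mulS l A : Submodule K R) =
      finrank K N + finrank K A := by
  have h1 := finrank_map_add (LinearMap.mulLeft K l) A
  have h2 := finrank_map_add (LinearMap.mulLeft K l) (colS l A N)
  have h3 := Submodule.finrank_sup_add_finrank_inf_eq N (mulS l A)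
  have e1 : (colS l A N).map (LinearMap.mulLeft K l) = N ⊓ mulS l A := by
    ext x
    simp only [colS, mulS, Submodule.mem_map, Submodule.mem_inf, Submodule.mem_comap]
    constructor
    · rintro ⟨y, ⟨h, h'⟩, rfl⟩; exact ⟨h', y, h, rfl⟩
    · rintro ⟨h', y, h, rfl⟩; exact ⟨y, ⟨h, h'⟩, rfl⟩
  have e2 : colS l A N ⊓ LinearMap.ker (LinearMap.mulLeft K l) =
      A ⊓ LinearMap.ker (LinearMap.mulLeft K l) := by
    ext x
    simp only [colS, Submodule.mem_inf, Submodule.mem_comap, LinearMap.mem_ker]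
    constructor
    · rintro ⟨⟨h, h'⟩, h2⟩; exact ⟨h, h2⟩
    · rintro ⟨h, h2⟩; exact ⟨⟨h, by rw [h2]; exact N.zero_mem⟩, h2⟩
  rw [e1, e2] at h2
  change finrank K (mulS l A) + _ = _ at h1
  omega

/-- codimension of `N` in `A` -/
noncomputable def cod (A N : Submodule K R) : ℕ := finrank K A - finrank K N

variable (𝒜 : ℕ → Submodule K R)

theorem fd (h0 : 𝒜 0 = (1 : Submodule K R)) (hstd : ∀ n, 𝒜 (n + 1) = 𝒜 1 * 𝒜 n)
    [FiniteDimensional K (𝒜 1)] (e : ℕ) : FiniteDimensional K (𝒜 e) := by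
  have key : ∀ e, (𝒜 e).FG := by
    intro e
    induction e with
    | zero => rw [h0, Submodule.one_eq_span]; exact Submodule.fg_span_singleton _
    | succ e ih =>
      rw [hstd]
      exact Submodule.FG.mul (Module.Finite.iff_fg.1 inferInstance) ih
  exact Module.Finite.iff_fg.2 (key e)

theorem mulS_le (hstd : ∀ n, 𝒜 (n + 1) = 𝒜 1 * 𝒜 n) (l : 𝒜 1) (e : ℕ) :
    mulS (l : R) (𝒜 e) ≤ 𝒜 (e+1) := by
  rintro _ ⟨y, hy, rfl⟩
  rw [hstd]
  exact Submodule.mul_mem_mul l.2 hy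

theorem closed_cod [FiniteDimensional K (𝒜 1)] (N A : Submodule K R) [FiniteDimensional K A]
    [FiniteDimensional K N] (r : ℕ) :
    IsZClosed K {l : 𝒜 1 | finrank K (N ⊔ mulS (l : R) A : Submodule K R) < r} := by
  refine closed_rank (A := N × A) (fun l : 𝒜 1 => N ⊔ mulS (l : R) A)
    (fun l x => (x.1 : R) + (l : R) * (x.2 : R)) ?_ ?_ r
  · intro l b
    simp only [Submodule.mem_sup, mulS, Submodule.mem_map]
    constructor
    · rintro ⟨y, hy, _, ⟨z, hz, rfl⟩, rfl⟩
      exact ⟨(⟨y, hy⟩, ⟨z, hz⟩), rfl⟩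
    · rintro ⟨⟨y, z⟩, rfl⟩
      exact ⟨y, y.2, _, ⟨z, z.2, rfl⟩, rfl⟩
  · intro a φ
    have : (fun x : 𝒜 1 => φ ((a.1 : R) + (x : R) * (a.2 : R))) =
        algebraMap K _ (φ a.1) +
          ⇑(φ ∘ₗ (LinearMap.mulRight K (a.2 : R)) ∘ₗ (𝒜 1).subtype) := by
      ext x; simp
    rw [this]
    exact Subalgebra.add_mem _ (Subalgebra.algebraMap_mem _ _)
      (Algebra.subset_adjoin ⟨_, rfl⟩)

theorem exists_min (hstd : ∀ n, 𝒜 (n + 1) = 𝒜 1 * 𝒜 n)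
    [∀ e, FiniteDimensional K (𝒜 e)] (V : Set (𝒜 1)) (hV : V.Nonempty)
    (hspan : Submodule.span K V = (⊤ : Submodule K (𝒜 1))) (e : ℕ)
    (N : Submodule K R) (hN : N ≤ 𝒜 (e+1)) :
    ∃ l ∈ V, (∀ l' ∈ V, cod (𝒜 (e+1)) (N ⊔ mulS (l : R) (𝒜 e)) ≤
        cod (𝒜 (e+1)) (N ⊔ mulS (l' : R) (𝒜 e))) ∧
      (cod (𝒜 (e+1)) N = 0 ∨
        cod (𝒜 (e+1)) (N ⊔ mulS (l : R) (𝒜 e)) < cod (𝒜 (e+1)) N) := by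
  set f : 𝒜 1 → ℕ := fun l => cod (𝒜 (e+1)) (N ⊔ mulS (l : R) (𝒜 e)) with hf
  have hm : ∃ l ∈ V, ∀ l' ∈ V, f l ≤ f l' :=
    ⟨_, Function.argminOn_mem f V hV, fun l' hl' => Function.argminOn_le f V hl'⟩
  obtain ⟨l, hl, hmin⟩ := hm
  refine ⟨l, hl, hmin, ?_⟩
  by_contra hc
  push Not at hc
  obtain ⟨hc0, hc1⟩ := hc
  have hle : ∀ l' ∈ V, mulS (l' : R) (𝒜 e) ≤ N := by
    intro l' hl'
    have h1 : cod (𝒜 (e+1)) N ≤ cod (𝒜 (e+1)) (N ⊔ mulS (l' : R) (𝒜 e)) := hc1.trans (hmin l' hl')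
    have hsup : N ⊔ mulS (l' : R) (𝒜 e) ≤ 𝒜 (e+1) := sup_le hN (mulS_le 𝒜 hstd l' e)
    have : FiniteDimensional K (N ⊔ mulS (l' : R) (𝒜 e) : Submodule K R) :=
      Submodule.finiteDimensional_of_le hsup
    have h2 := Submodule.finrank_mono hsup
    have h3 := Submodule.finrank_mono hN
    unfold cod at h1 hc0
    have h4 : N = N ⊔ mulS (l' : R) (𝒜 e) :=
      Submodule.eq_of_le_of_finrank_le le_sup_left (by omega)
    rw [h4]; exact le_sup_right
  have hall : 𝒜 (e+1) ≤ N := by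
    rw [hstd, Submodule.mul_le]
    intro x hx y hy
    have hx' : (⟨x, hx⟩ : 𝒜 1) ∈ Submodule.span K V := hspan ▸ Submodule.mem_top
    have hV' : Submodule.span K V ≤
        N.comap ((LinearMap.mulRight K y) ∘ₗ (𝒜 1).subtype) := by
      rw [Submodule.span_le]
      intro v hv
      exact hle v hv ⟨y, hy, rfl⟩
    exact hV' hx'
  apply hc0
  rw [cod, le_antisymm hN hall, Nat.sub_self]

theorem green (h0 : 𝒜 0 = (1 : Submodule K R)) (hstd : ∀ n, 𝒜 (n + 1) = 𝒜 1 * 𝒜 n)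
    [FiniteDimensional K (𝒜 1)] (V : Set (𝒜 1)) (hV : IsIrredVariety K V)
    (hspan : Submodule.span K V = (⊤ : Submodule K (𝒜 1))) (e : ℕ) :
    ∀ (c : ℕ) (N : Submodule K R), N ≤ 𝒜 (e+1) → cod (𝒜 (e+1)) N = c →
      ∃ l ∈ V, cod (𝒜 (e+1)) (N ⊔ mulS (l : R) (𝒜 e)) ≤ F e c := by
  have := fd 𝒜 h0 hstd
  have hfin : ∀ {j : ℕ} {N : Submodule K R}, N ≤ 𝒜 j → FiniteDimensional K N :=
    fun h => Submodule.finiteDimensional_of_le h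
  induction e with
  | zero =>
    intro c N hN hc
    have := hfin hN
    obtain ⟨l, hl, -, h⟩ := exists_min 𝒜 hstd V hV.2.1 hspan 0 N hN
    refine ⟨l, hl, ?_⟩
    rw [F_zero]
    have h3 := Submodule.finrank_mono (show N ≤ N ⊔ mulS (l : R) (𝒜 0) from le_sup_left)
    unfold cod at *
    omega
  | succ e ihe =>
    intro c
    induction c using Nat.strong_induction_on with
    | _ c ihc =>
    intro N hN hc
    have := hfin hN
    obtain ⟨l, hl, hmin, h⟩ := exists_min 𝒜 hstd V hV.2.1 hspan (e+1) N hN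
    refine ⟨l, hl, ?_⟩
    have hNl : N ⊔ mulS (l : R) (𝒜 (e+1)) ≤ 𝒜 (e+1+1) := sup_le hN (mulS_le 𝒜 hstd l _)
    have hNl_le := Submodule.finrank_mono
      (show N ≤ N ⊔ mulS (l : R) (𝒜 (e+1)) from le_sup_left)
    have hNl_le2 := Submodule.finrank_mono hNl
    rcases h with h | h
    · unfold cod at *
      omega
    set a := cod (𝒜 (e+1+1)) (N ⊔ mulS (l : R) (𝒜 (e+1))) with ha
    rw [hc] at h
    -- condition A
    obtain ⟨l₁, hl₁, hA⟩ := ihc a h _ hNl rfl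
    -- condition B
    have hcol : colS (l : R) (𝒜 (e+1)) N ≤ 𝒜 (e+1) := inf_le_left
    have hfr := finrank_colon (l : R) (𝒜 (e+1)) N
    have hcolcod : cod (𝒜 (e+1)) (colS (l : R) (𝒜 (e+1)) N) = c - a := by
      unfold cod at *
      omega
    obtain ⟨l₂, hl₂, hB⟩ := ihe _ _ hcol hcolcod
    -- the common general point
    have hNle : finrank K N ≤ finrank K (𝒜 (e+1+1)) := Submodule.finrank_mono hN
    set DA := finrank K (𝒜 (e+1+1)) with hDA
    set DB := finrank K (𝒜 (e+1)) with hDB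
    have closedA := closed_cod 𝒜 (N ⊔ mulS (l : R) (𝒜 (e+1))) (𝒜 (e+1)) (DA - F (e+1) a)
    have closedB := closed_cod 𝒜 (colS (l : R) (𝒜 (e+1)) N) (𝒜 e) (DB - F e (c - a))
    have closedC := closed_cod 𝒜 N (𝒜 (e+1)) (DA - a)
    have hex : ∃ l' ∈ V,
        DA - F (e+1) a ≤ finrank K (N ⊔ mulS (l : R) (𝒜 (e+1)) ⊔ mulS (l' : R) (𝒜 (e+1)) :
          Submodule K R) ∧
        DB - F e (c - a) ≤ finrank K (colS (l : R) (𝒜 (e+1)) N ⊔ mulS (l' : R) (𝒜 e) :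
          Submodule K R) ∧
        DA - a ≤ finrank K (N ⊔ mulS (l' : R) (𝒜 (e+1)) : Submodule K R) := by
      by_contra hcon
      push Not at hcon
      rcases hV.2.2 _ _ closedA (IsZClosed_union closedB closedC) (by
        intro l' hl'
        by_cases h1 : DA - F (e+1) a ≤ finrank K
          (N ⊔ mulS (l : R) (𝒜 (e+1)) ⊔ mulS (l' : R) (𝒜 (e+1)) : Submodule K R)
        · right
          by_cases h2 : DB - F e (c - a) ≤ finrank K
            (colS (l : R) (𝒜 (e+1)) N ⊔ mulS (l' : R) (𝒜 e) : Submodule K R)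
          · right; exact hcon l' hl' h1 h2
          · left; exact not_le.1 h2
        · left; exact not_le.1 h1) with h1 | h1
      · have h2 : finrank K _ < _ := h1 hl₁
        unfold cod at hA
        omega
      · rcases hV.2.2 _ _ closedB closedC h1 with h1 | h1
        · have h2 : finrank K _ < _ := h1 hl₂
          unfold cod at hB
          omega
        · have h2 : finrank K _ < _ := h1 hl
          unfold cod at ha
          omega
    obtain ⟨l', hl', hA', hB', hC'⟩ := hex
    have hN1 : N ⊔ mulS (l' : R) (𝒜 (e+1)) ≤ 𝒜 (e+1+1) := sup_le hN (mulS_le 𝒜 hstd l' _)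
    have hN1f := Submodule.finrank_mono hN1
    have hfr1 := finrank_colon (l : R) (𝒜 (e+1)) (N ⊔ mulS (l' : R) (𝒜 (e+1)))
    have hsub : colS (l : R) (𝒜 (e+1)) N ⊔ mulS (l' : R) (𝒜 e) ≤
        colS (l : R) (𝒜 (e+1)) (N ⊔ mulS (l' : R) (𝒜 (e+1))) := by
      refine sup_le ?_ ?_
      · exact inf_le_inf_left _ (Submodule.comap_mono le_sup_left)
      · refine le_inf (mulS_le 𝒜 hstd l' e) ?_
        rintro _ ⟨y, hy, rfl⟩
        refine Submodule.mem_sup_right ⟨(l : R) * y, ?_, ?_⟩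
        · rw [hstd]; exact Submodule.mul_mem_mul l.2 hy
        · simp only [LinearMap.mulLeft_apply]; ring
    have hsubf := Submodule.finrank_mono hsub
    have hm1 := hmin l' hl'
    rw [sup_right_comm] at hA'
    have key : a ≤ F (e+1) a + F e (c - a) := by
      unfold cod at hm1 ha
      omega
    have := numeric e a (c - a) key
    rwa [Nat.add_sub_cancel' h.le] at this

theorem exists_tuple (h0 : 𝒜 0 = (1 : Submodule K R)) (hstd : ∀ n, 𝒜 (n + 1) = 𝒜 1 * 𝒜 n)
    [FiniteDimensional K (𝒜 1)] (V : Set (𝒜 1)) (hV : IsIrredVariety K V)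
    (hspan : Submodule.span K V = (⊤ : Submodule K (𝒜 1))) (e : ℕ) (k : ℕ → ℕ)
    (hk : SI (e+1) k) (hrep : finrank K (𝒜 (e+1)) = S0 (e+1) k) (p : ℕ) :
    ∃ x : Fin p → 𝒜 1, (∀ t, x t ∈ V) ∧
      cod (𝒜 (e+1)) (⨆ t, mulS (x t : R) (𝒜 e)) ≤
        ∑ i ∈ Finset.range (e+1), (k i - p).choose (i+1) := by
  induction p with
  | zero =>
    refine ⟨Fin.elim0, fun t => t.elim0, ?_⟩
    simp only [cod, hrep]
    exact Nat.sub_le _ _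
  | succ p ih =>
    obtain ⟨x, hx, hc⟩ := ih
    obtain ⟨l, hl, hlc⟩ := green 𝒜 h0 hstd V hV hspan e _ (⨆ t, mulS (x t : R) (𝒜 e))
      (iSup_le fun t => mulS_le 𝒜 hstd _ _) rfl
    refine ⟨Fin.cons l x, ?_, ?_⟩
    · intro t
      refine Fin.cases ?_ ?_ t
      · exact hl
      · exact hx
    · have e1 : (⨆ t, mulS ((Fin.cons l x : Fin (p+1) → 𝒜 1) t : R) (𝒜 e)) =
          (⨆ t, mulS (x t : R) (𝒜 e)) ⊔ mulS (l : R) (𝒜 e) := by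
        apply le_antisymm
        · refine iSup_le fun t => ?_
          refine Fin.cases ?_ (fun t => ?_) t
          · exact le_sup_right
          · exact le_sup_of_le_left (le_iSup (fun t => mulS (x t : R) (𝒜 e)) t)
        · refine sup_le (iSup_le fun t => ?_) ?_
          · exact le_iSup (fun t => mulS ((Fin.cons l x : Fin (p+1) → 𝒜 1) t : R) (𝒜 e)) t.succ
          · exact le_iSup (fun t => mulS ((Fin.cons l x : Fin (p+1) → 𝒜 1) t : R) (𝒜 e)) 0
      rw [e1, ← F_shift e k hk p]
      exact hlc.trans (F_mono e hc)

theorem closed_tuple (p : ℕ) (A : Submodule K R) [FiniteDimensional K A] (r : ℕ) :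
    IsZClosed K {x : Fin p → 𝒜 1 | finrank K (⨆ t, mulS (x t : R) A : Submodule K R) < r} := by
  refine closed_rank (A := Fin p → A) (fun x : Fin p → 𝒜 1 => ⨆ t, mulS (x t : R) A)
    (fun x y => ∑ t, (x t : R) * (y t : R)) ?_ ?_ r
  · intro x b
    rw [Submodule.mem_iSup_iff_exists_finsupp]
    constructor
    · rintro ⟨f, hf, rfl⟩
      choose y hy hy' using hf
      refine ⟨fun t => ⟨y t, hy t⟩, ?_⟩
      rw [Finsupp.sum_fintype _ _ (by simp)]
      exact Finset.sum_congr rfl fun t _ => hy' t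
    · rintro ⟨y, rfl⟩
      refine ⟨Finsupp.equivFunOnFinite.symm fun t => (x t : R) * (y t : R), ?_, ?_⟩
      · intro t; exact ⟨y t, (y t).2, rfl⟩
      · rw [Finsupp.sum_fintype _ _ (by simp)]; rfl
  · intro a φ
    refine Algebra.subset_adjoin
      ⟨φ ∘ₗ ∑ t, (LinearMap.mulRight K (a t : R)) ∘ₗ (𝒜 1).subtype ∘ₗ LinearMap.proj t, ?_⟩
    ext x
    simp

end
end Green
/-- **Theorem (restriction by general points of an irreducible variety).**
Let `R = K[X_1,…,X_n]/I` be a standard graded algebra (presented by a graded surjection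
`g`), let `V ⊆ 𝔸(R_1)` be an irreducible variety spanning `R_1`, and assume `K` is
algebraically closed or the defining ideal of `V` is homogeneous (i.e. `V` is cut out by
homogeneous polynomial functions).  If `dim_K R_d = C(k_d,d) + … + C(k_1,1)` is the
`d`-th Macaulay representation, then for `p` linear forms that are general points of `V`
one has `dim_K (R/(l_1,…,l_p))_d ≤ C(k_d - p,d) + … + C(k_1 - p,1)`. -/
theorem restriction_by_general_points_of_variety
    {K R : Type*} [Field K] [CommRing R] [Algebra K R]
    (𝒜 : ℕ → Submodule K R) [GradedAlgebra 𝒜]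
    (h0 : 𝒜 0 = (1 : Submodule K R)) (hstd : ∀ n, 𝒜 (n + 1) = 𝒜 1 * 𝒜 n)
    [FiniteDimensional K (𝒜 1)]
    (n : ℕ) (g : MvPolynomial (Fin n) K →ₐ[K] R) (hg : Function.Surjective g)
    (hgX : ∀ i, g (MvPolynomial.X i) ∈ 𝒜 1)
    (V : Set (𝒜 1)) (hV : IsIrredVariety K V)
    (hspan : Submodule.span K V = (⊤ : Submodule K (𝒜 1)))
    (hcase : IsAlgClosed K ∨
      ∃ S : Set ((𝒜 1) → K),
        (∀ f ∈ S, f ∈ polyFuns K (𝒜 1) ∧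
          ∃ m : ℕ, ∀ (c : K) (v : 𝒜 1), f (c • v) = c ^ m * f v) ∧
        V = {v | ∀ f ∈ S, f v = 0})
    (d : ℕ) (hd : 0 < d)
    (k : ℕ → ℕ) (hk : ∀ i j, 1 ≤ i → i < j → j ≤ d → k i < k j)
    (hrep : Module.finrank K (𝒜 d) = ∑ i ∈ Finset.Icc 1 d, (k i).choose i)
    (p : ℕ) :
    ∃ U : Set (Fin p → 𝒜 1),
      (∃ W : Set (Fin p → 𝒜 1), IsZOpen K W ∧ U = {x | ∀ t, x t ∈ V} ∩ W) ∧
      U.Nonempty ∧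
      ∀ x ∈ U,
        quotDim 𝒜 (Ideal.span (Set.range fun t => (x t : R))) d ≤
          ∑ i ∈ Finset.Icc 1 d, (k i - p).choose i := by
  obtain ⟨e, rfl⟩ : ∃ e, d = e + 1 := ⟨d - 1, by omega⟩
  have hsum : ∀ q, ∑ i ∈ Finset.Icc 1 (e+1), (k i - q).choose i =
      ∑ i ∈ Finset.range (e+1), (k (i+1) - q).choose (i+1) := by
    intro q
    rw [← Finset.Ico_add_one_right_eq_Icc, Finset.sum_Ico_eq_sum_range]
    refine Finset.sum_congr (by simp) fun i _ => by rw [add_comm 1 i]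
  have hrep' : Module.finrank K (𝒜 (e+1)) = Green.S0 (e+1) (fun i => k (i+1)) := by
    rw [hrep]; exact hsum 0
  have hfd := Green.fd 𝒜 h0 hstd
  obtain ⟨x, hxV, hx⟩ := Green.exists_tuple 𝒜 h0 hstd V hV hspan e (fun i => k (i+1))
    (fun i j hij hj => hk _ _ (by omega) (by omega) (by omega)) hrep' p
  rw [hsum p]
  set B := ∑ i ∈ Finset.range (e+1), (k (i+1) - p).choose (i+1) with hB
  set D := Module.finrank K (𝒜 (e+1)) with hD
  refine ⟨_, ⟨{y | Module.finrank K (⨆ t, Green.mulS (y t : R) (𝒜 e) : Submodule K R) < D - B}ᶜ,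
    ?_, rfl⟩, ⟨x, hxV, ?_⟩, ?_⟩
  · unfold IsZOpen
    rw [compl_compl]
    exact Green.closed_tuple 𝒜 p (𝒜 e) _
  · intro h
    have h' : Module.finrank K _ < _ := h
    unfold Green.cod at hx
    omega
  · rintro y ⟨-, hy⟩
    have hy' : D - B ≤ Module.finrank K (⨆ t, Green.mulS (y t : R) (𝒜 e) : Submodule K R) :=
      not_lt.1 hy
    set I := Ideal.span (Set.range fun t => (y t : R)) with hI
    have h1 : (⨆ t, Green.mulS (y t : R) (𝒜 e) : Submodule K R) ≤
        (homComp 𝒜 I (e+1)).map (𝒜 (e+1)).subtype := by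
      refine iSup_le fun t => ?_
      rintro z hz
      have hz2 := Green.mulS_le 𝒜 hstd (y t) e hz
      obtain ⟨w, hw, rfl⟩ := hz
      refine ⟨⟨_, hz2⟩, ?_, rfl⟩
      change (y t : R) * w ∈ I
      exact Ideal.mul_mem_right _ _ (Ideal.subset_span ⟨t, rfl⟩)
    have h2 := Submodule.finrank_mono h1
    rw [Submodule.finrank_map_subtype_eq] at h2
    have h3 := Submodule.finrank_quotient_add_finrank (homComp 𝒜 I (e+1))
    unfold quotDim
    omega
end

section
/- (Hyperplane restriction) Let R be a standard graded algebra over an arbitrary field K and let d > 0 be a degree. Then there exist finitely many proper linear subspaces L_1,…,L_m of the affine space 𝔸(R_1) such that for every linear form l ∉ L_1 ∪ … ∪ L_m one has dim_K (R/lR)_d ≤ (dim_K R_d)_{⟨d⟩}. -/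
lemma mD_zero_right (c : ℕ) : macaulayDown c 0 = 0 := by simp [macaulayDown]

lemma mD_rep (k d a : ℕ) (h : a < Nat.choose k d) :
    macaulayDown (Nat.choose k (d + 1) + a) (d + 1) =
      Nat.choose (k - 1) (d + 1) + macaulayDown a d := by
  have hk : d ≤ k := by
    by_contra hlt
    rw [Nat.choose_eq_zero_of_lt (by omega)] at h
    omega
  have hle : k ≤ Nat.choose k (d + 1) + d := by
    clear h
    induction k, hk using Nat.le_induction with
    | base => omega
    | succ n hn ih =>
      have := Nat.choose_pos hn
      rw [Nat.choose_succ_succ, Nat.succ_eq_add_one]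
      omega
  have key : Nat.findGreatest (fun j => Nat.choose j (d + 1) ≤ Nat.choose k (d + 1) + a)
      (Nat.choose k (d + 1) + a + d + 1) = k := by
    rw [Nat.findGreatest_eq_iff]
    refine ⟨by omega, fun _ => Nat.le_add_right _ _, ?_⟩
    intro n hn _ hc
    have h1 : Nat.choose (k + 1) (d + 1) ≤ Nat.choose n (d + 1) := Nat.choose_le_choose _ hn
    rw [Nat.choose_succ_succ] at h1
    simp only [Nat.succ_eq_add_one] at h1
    omega
  rw [macaulayDown]
  simp only [key]
  rw [Nat.add_sub_cancel_left]

lemma exists_rep (d c : ℕ) : ∃ k c', d ≤ k ∧ c' < Nat.choose k d ∧ c = Nat.choose k (d + 1) + c' := by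
  induction c with
  | zero => exact ⟨d, 0, le_rfl, by simp, by simp⟩
  | succ c ih =>
    obtain ⟨k, c', hk, hc, rfl⟩ := ih
    by_cases h : c' + 1 < Nat.choose k d
    · exact ⟨k, c' + 1, hk, h, by ring⟩
    · refine ⟨k + 1, 0, by omega, Nat.choose_pos (by omega), ?_⟩
      rw [Nat.choose_succ_succ]
      simp only [Nat.succ_eq_add_one]
      omega

lemma mD_choose (k d : ℕ) : macaulayDown (Nat.choose k (d + 1)) (d + 1) = Nat.choose (k - 1) (d + 1) := by
  have z : ∀ d, macaulayDown 0 d = 0 := by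
    intro d
    induction d with
    | zero => exact mD_zero_right 0
    | succ d ih =>
      have := mD_rep d d 0 (by simp)
      rw [ih] at this
      simpa [Nat.choose_eq_zero_of_lt] using this
  by_cases h : d ≤ k
  · have := mD_rep k d 0 (Nat.choose_pos h)
    simpa [z] using this
  · rw [Nat.choose_eq_zero_of_lt (by omega), Nat.choose_eq_zero_of_lt (by omega), z]

lemma mD_zero (d : ℕ) : macaulayDown 0 d = 0 := by
  cases d with
  | zero => exact mD_zero_right 0
  | succ d => simpa using mD_choose 0 d

lemma pascal (k d : ℕ) (h : 1 ≤ k) :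
    Nat.choose k (d + 1) = Nat.choose (k - 1) d + Nat.choose (k - 1) (d + 1) := by
  obtain ⟨j, rfl⟩ : ∃ j, k = j + 1 := ⟨k - 1, by omega⟩
  simp [Nat.choose_succ_succ]

lemma mD_lt (d : ℕ) : ∀ k c, d + 1 ≤ k → c < Nat.choose k d → macaulayDown c d < Nat.choose (k - 1) d := by
  induction d with
  | zero => intro k c hk hc; simp [mD_zero_right]
  | succ d ih =>
    intro k c hk hc
    obtain ⟨j, c', hj, hc', rfl⟩ := exists_rep d c
    have hjk : j < k := by
      by_contra hh
      have := Nat.choose_le_choose (d + 1) (not_lt.mp hh)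
      omega
    rw [mD_rep j d c' hc']
    have hmono := Nat.choose_le_choose (d + 1) (show j ≤ k - 1 by omega)
    by_cases hjd : d + 1 ≤ j
    · have h1 := ih j c' hjd hc'
      have h2 := pascal j d (by omega)
      omega
    · have : j = d := by omega
      subst this
      have hz : c' = 0 := by simpa using hc'
      subst hz
      rw [mD_zero, Nat.choose_eq_zero_of_lt (by omega)]
      exact Nat.choose_pos (by omega)

lemma mD_le (d k c : ℕ) (hc : c < Nat.choose k d) : macaulayDown c d ≤ Nat.choose (k - 1) d := by
  by_cases h : d + 1 ≤ k
  · exact (mD_lt d k c h hc).le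
  · have hdk : d ≤ k := by
      by_contra hlt
      rw [Nat.choose_eq_zero_of_lt (by omega)] at hc
      omega
    have : k = d := by omega
    subst this
    have hz : c = 0 := by simpa using hc
    subst hz
    rw [mD_zero]
    exact Nat.zero_le _

lemma mD_step (d : ℕ) : ∀ c, macaulayDown c d ≤ macaulayDown (c + 1) d ∧
    macaulayDown (c + 1) d ≤ macaulayDown c d + 1 := by
  induction d with
  | zero => intro c; simp [mD_zero_right]
  | succ d ih =>
    intro c
    obtain ⟨k, c', hk, hc, rfl⟩ := exists_rep d c
    rw [mD_rep k d c' hc]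
    by_cases h : c' + 1 < Nat.choose k d
    · rw [add_assoc, mD_rep k d (c' + 1) h]
      have := ih c'
      omega
    · have e : Nat.choose k (d + 1) + c' + 1 = Nat.choose (k + 1) (d + 1) := by
        rw [Nat.choose_succ_succ]
        simp only [Nat.succ_eq_add_one]
        omega
      rw [e, mD_choose]
      have hle := mD_le d k c' hc
      simp only [Nat.add_sub_cancel]
      cases d with
      | zero =>
        simp [mD_zero_right]
        omega
      | succ d =>
        have hp := pascal k (d + 1) (by omega)
        have h2 := (ih c').2
        have e2 : c' + 1 = Nat.choose k (d + 1) := by omega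
        rw [e2, mD_choose] at h2
        omega

lemma mD_mono (d : ℕ) {a b : ℕ} (h : a ≤ b) : macaulayDown a d ≤ macaulayDown b d := by
  induction b, h using Nat.le_induction with
  | base => exact le_rfl
  | succ n hn ih => exact ih.trans (mD_step d n).1

lemma mD_lip (d : ℕ) {a b : ℕ} (h : a ≤ b) : a + macaulayDown b d ≤ b + macaulayDown a d := by
  induction b, h using Nat.le_induction with
  | base => exact le_rfl
  | succ n hn ih => have := (mD_step d n).2; omega

lemma mD_one (c : ℕ) : macaulayDown c 1 = c - 1 := by
  have := mD_choose c 0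
  simpa using this

lemma mD_lt_self (d a : ℕ) (h : 0 < a) : macaulayDown a d < a := by
  cases d with
  | zero => simpa [mD_zero_right] using h
  | succ d =>
    have h1 := mD_choose (d + 1) d
    have h2 := mD_lip (d + 1) (show 1 ≤ a from h)
    simp at h1
    omega

lemma mD_key (d : ℕ) : ∀ a c, macaulayDown c (d + 1) < a →
    macaulayDown a (d + 1) + macaulayDown (c - a) d < a := by
  induction d with
  | zero =>
    intro a c h
    rw [mD_zero_right]
    have := mD_lt_self 1 a (by omega)
    simpa using this
  | succ d ih =>
    intro a c h
    have hself := mD_lt_self (d + 1 + 1) a (by omega)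
    obtain ⟨k, c', hk, hc, rfl⟩ := exists_rep (d + 1) c
    by_cases hkd : k = d + 1
    · subst hkd
      have hz : c' = 0 := by simpa using hc
      subst hz
      simp [mD_zero] at *
      exact hself
    rw [mD_rep k _ c' hc] at h
    have hp2 := pascal k (d + 1) (by omega)
    by_cases ha : Nat.choose k (d + 1 + 1) ≤ a
    · have h1 := mD_lip (d + 1 + 1) ha
      rw [mD_choose] at h1
      have h2 := mD_mono (d + 1) (show Nat.choose k (d + 1 + 1) + c' - a ≤ c' by omega)
      have h3 := mD_lt (d + 1) k c' (by omega) hc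
      have h4 := hp2
      rw [pascal k (d + 1) (by omega)] at ha h1
      omega
    · obtain ⟨a', rfl⟩ : ∃ a', a = Nat.choose (k - 1) (d + 1 + 1) + a' :=
        ⟨a - Nat.choose (k - 1) (d + 1 + 1), by omega⟩
      have ha' : macaulayDown c' (d + 1) < a' := by omega
      have ha2 : a' < Nat.choose (k - 1) (d + 1) := by
        have := pascal k (d + 1) (by omega)
        omega
      rw [mD_rep (k - 1) _ a' ha2]
      have hp3 := pascal (k - 1) (d + 1) (by omega)
      have e : Nat.choose k (d + 1 + 1) + c' - (Nat.choose (k - 1) (d + 1 + 1) + a') =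
        Nat.choose (k - 1) (d + 1) + c' - a' := by omega
      rw [e]
      by_cases hca : a' ≤ c'
      · have hl := mD_lip (d + 1) hc.le
        rw [mD_choose] at hl
        have hp4 := pascal k d (by omega)
        have hlt : c' - a' < Nat.choose (k - 1) d := by omega
        rw [Nat.add_sub_assoc hca, mD_rep (k - 1) d _ hlt]
        have := ih a' c' ha'
        omega
      · have h1 := mD_mono (d + 1)
          (show Nat.choose (k - 1) (d + 1) + c' - a' ≤ Nat.choose (k - 1) (d + 1) by omega)
        rw [mD_choose] at h1
        have h2 := mD_lt_self (d + 1) a' (by omega)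
        omega

open Submodule in
lemma finrank_map_add_inf_ker {K V V' : Type*} [Field K] [AddCommGroup V] [Module K V]
    [AddCommGroup V'] [Module K V'] (g : V →ₗ[K] V') (X : Submodule K V) [FiniteDimensional K X] :
    Module.finrank K (X.map g) + Module.finrank K (X ⊓ LinearMap.ker g : Submodule K V)
      = Module.finrank K X := by
  have h := LinearMap.finrank_range_add_finrank_ker (g.domRestrict X)
  rw [LinearMap.range_domRestrict] at h
  rw [← h]
  congr 1
  have e : (X ⊓ LinearMap.ker g : Submodule K V) =
      (LinearMap.ker (g.domRestrict X)).map X.subtype := by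
    ext x
    simp [Submodule.mem_map, LinearMap.mem_ker, and_comm]
  rw [e, Submodule.finrank_map_subtype_eq]

lemma finrank_sup_map {K V : Type*} [Field K] [AddCommGroup V] [Module K V]
    (f : V →ₗ[K] V) (W X : Submodule K V) [FiniteDimensional K X] [FiniteDimensional K W] :
    Module.finrank K (W ⊔ X.map f : Submodule K V) +
      Module.finrank K (X ⊓ W.comap f : Submodule K V)
      = Module.finrank K W + Module.finrank K X := by
  have h1 := finrank_map_add_inf_ker (W.mkQ ∘ₗ f) X
  have h2 := finrank_map_add_inf_ker W.mkQ (W ⊔ X.map f)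
  have e1 : LinearMap.ker (W.mkQ ∘ₗ f) = W.comap f := by
    rw [LinearMap.ker_comp, Submodule.ker_mkQ]
  have e2 : (W ⊔ X.map f).map W.mkQ = X.map (W.mkQ ∘ₗ f) := by
    rw [Submodule.map_sup, Submodule.map_comp]
    simp
  have e3 : (W ⊔ X.map f) ⊓ LinearMap.ker W.mkQ = W := by
    rw [Submodule.ker_mkQ]
    exact inf_eq_right.mpr le_sup_left
  rw [e1] at h1
  rw [e2, e3] at h2
  omega

lemma graded_finite {K R : Type*} [Field K] [CommRing R] [Algebra K R]
    (𝒜 : ℕ → Submodule K R)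
    (h0 : 𝒜 0 = (1 : Submodule K R)) (hstd : ∀ n, 𝒜 (n + 1) = 𝒜 1 * 𝒜 n)
    [FiniteDimensional K (𝒜 1)] (n : ℕ) : FiniteDimensional K (𝒜 n) := by
  have h1 : (𝒜 1).FG := Module.Finite.iff_fg.mp inferInstance
  refine Module.Finite.iff_fg.mpr ?_
  induction n with
  | zero => rw [h0, Submodule.one_eq_span]; exact Submodule.fg_span_singleton 1
  | succ n ih => rw [hstd]; exact h1.mul ih

lemma eventually_lt {K R : Type*} [Field K] [CommRing R] [Algebra K R]
    (𝒜 : ℕ → Submodule K R) (hstd : ∀ n, 𝒜 (n + 1) = 𝒜 1 * 𝒜 n)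
    (U : Ultrafilter (𝒜 1)) (hU : ∀ L : Submodule K (𝒜 1), L ≠ ⊤ → ∀ᶠ l in U, l ∉ L)
    (n : ℕ) (W : Submodule K R) (hW : W < 𝒜 (n + 1)) :
    ∀ᶠ l : 𝒜 1 in U, W < W ⊔ (𝒜 n).map (LinearMap.mulLeft K (l : R)) := by
  let L : Submodule K (𝒜 1) :=
    { carrier := {l | ∀ x ∈ 𝒜 n, (l : R) * x ∈ W}
      add_mem' := by
        intro a b ha hb x hx
        simpa [add_mul] using W.add_mem (ha x hx) (hb x hx)
      zero_mem' := by
        intro x hx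
        simp
      smul_mem' := by
        intro c a ha x hx
        simpa using W.smul_mem c (ha x hx) }
  have hL : L ≠ ⊤ := by
    intro h
    refine hW.not_ge ?_
    rw [hstd, Submodule.mul_le]
    intro v hv x hx
    have : (⟨v, hv⟩ : 𝒜 1) ∈ L := h ▸ Submodule.mem_top
    exact this x hx
  filter_upwards [hU L hL] with l hl
  refine lt_of_le_of_ne le_sup_left ?_
  intro h
  refine hl ?_
  intro x hx
  rw [h]
  exact Submodule.mem_sup_right ⟨x, hx, rfl⟩

lemma map_mul_le {K R : Type*} [Field K] [CommRing R] [Algebra K R]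
    (𝒜 : ℕ → Submodule K R) (hstd : ∀ n, 𝒜 (n + 1) = 𝒜 1 * 𝒜 n) (n : ℕ) (l : 𝒜 1) :
    (𝒜 n).map (LinearMap.mulLeft K (l : R)) ≤ 𝒜 (n + 1) := by
  rintro _ ⟨x, hx, rfl⟩
  rw [hstd]
  exact Submodule.mul_mem_mul l.2 hx

/-- The two-form inequality. -/
lemma two_forms {K R : Type*} [Field K] [CommRing R] [Algebra K R]
    (A C W : Submodule K R) [FiniteDimensional K A] [FiniteDimensional K C]
    [FiniteDimensional K W] (l₁ l₂ : R) (hC : C.map (LinearMap.mulLeft K l₁) ≤ A)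
    (hC₂ : C.map (LinearMap.mulLeft K l₂) ≤ A) :
    let W₁ := W ⊔ A.map (LinearMap.mulLeft K l₁)
    let W₂ := W ⊔ A.map (LinearMap.mulLeft K l₂)
    let N := A ⊓ W.comap (LinearMap.mulLeft K l₁)
    Module.finrank K W₁ + Module.finrank K N = Module.finrank K W + Module.finrank K A ∧
    Module.finrank K (W₁ ⊔ A.map (LinearMap.mulLeft K l₂) : Submodule K R) +
      Module.finrank K (N ⊔ C.map (LinearMap.mulLeft K l₂) : Submodule K R) ≤
      Module.finrank K W₂ + Module.finrank K A := by
  intro W₁ W₂ N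
  have F1 := finrank_sup_map (LinearMap.mulLeft K l₁) W A
  refine ⟨F1, ?_⟩
  have : FiniteDimensional K N := Submodule.finiteDimensional_of_le inf_le_left
  have F2 := finrank_sup_map (LinearMap.mulLeft K l₁) W (N ⊔ C.map (LinearMap.mulLeft K l₂))
  have e1 : (N ⊔ C.map (LinearMap.mulLeft K l₂)) ⊓ W.comap (LinearMap.mulLeft K l₁) = N := by
    apply le_antisymm
    · exact inf_le_inf_right _ (sup_le inf_le_left hC₂)
    · exact le_inf le_sup_left inf_le_right
  rw [e1] at F2
  have hQ : W₁ ⊔ A.map (LinearMap.mulLeft K l₂) = W₁ ⊔ W₂ := by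
    simp only [W₁, W₂]
    apply le_antisymm
    · exact sup_le le_sup_left (le_sup_right.trans le_sup_right)
    · exact sup_le le_sup_left (sup_le (le_sup_left.trans le_sup_left) le_sup_right)
  have F3 := Submodule.finrank_sup_add_finrank_inf_eq W₁ W₂
  have hP : W ⊔ (N ⊔ C.map (LinearMap.mulLeft K l₂)).map (LinearMap.mulLeft K l₁) ≤ W₁ ⊓ W₂ := by
    refine sup_le (le_inf le_sup_left le_sup_left) ?_
    rw [Submodule.map_sup]
    refine sup_le ?_ (le_inf ?_ ?_)
    · have : N.map (LinearMap.mulLeft K l₁) ≤ W := Submodule.map_le_iff_le_comap.mpr inf_le_right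
      exact this.trans (le_inf le_sup_left le_sup_left)
    · exact (Submodule.map_mono hC₂).trans le_sup_right
    · refine le_trans ?_ le_sup_right
      rintro _ ⟨_, ⟨x, hx, rfl⟩, rfl⟩
      refine ⟨l₁ * x, hC ⟨x, hx, rfl⟩, ?_⟩
      simp only [LinearMap.mulLeft_apply]
      ring
  have F4 := Submodule.finrank_mono hP
  rw [hQ]
  have F1' : Module.finrank K W₁ + Module.finrank K N =
    Module.finrank K W + Module.finrank K A := F1
  omega

lemma green_generic {K R : Type*} [Field K] [CommRing R] [Algebra K R]
    (𝒜 : ℕ → Submodule K R)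
    (h0 : 𝒜 0 = (1 : Submodule K R)) (hstd : ∀ n, 𝒜 (n + 1) = 𝒜 1 * 𝒜 n)
    [FiniteDimensional K (𝒜 1)]
    (U : Ultrafilter (𝒜 1)) (hU : ∀ L : Submodule K (𝒜 1), L ≠ ⊤ → ∀ᶠ l in U, l ∉ L)
    (n : ℕ) : ∀ W : Submodule K R, W ≤ 𝒜 (n + 1) → ∀ᶠ l : 𝒜 1 in U,
      Module.finrank K (𝒜 (n + 1)) -
        Module.finrank K (W ⊔ (𝒜 n).map (LinearMap.mulLeft K (l : R)) : Submodule K R) ≤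
      macaulayDown (Module.finrank K (𝒜 (n + 1)) - Module.finrank K W) (n + 1) := by
  have := graded_finite 𝒜 h0 hstd
  have hle := map_mul_le 𝒜 hstd
  induction n with
  | zero =>
    intro W hW
    rcases hW.eq_or_lt with rfl | hlt
    · filter_upwards with l
      have := Submodule.finrank_mono (le_sup_left :
        𝒜 (0 + 1) ≤ 𝒜 (0 + 1) ⊔ (𝒜 0).map (LinearMap.mulLeft K (l : R)))
      omega
    · have : FiniteDimensional K W := Submodule.finiteDimensional_of_le hW
      filter_upwards [eventually_lt 𝒜 hstd U hU 0 W hlt] with l hl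
      have := Submodule.finrank_lt_finrank_of_lt hl
      rw [mD_one]
      omega
  | succ n ih =>
    intro W
    induction hN : Module.finrank K (𝒜 (n + 1 + 1)) - Module.finrank K W
      using Nat.strong_induction_on generalizing W with
    | _ N ih2 =>
    intro hW
    subst hN
    rcases hW.eq_or_lt with rfl | hlt
    · filter_upwards with l
      have := Submodule.finrank_mono (le_sup_left : 𝒜 (n + 1 + 1) ≤
        𝒜 (n + 1 + 1) ⊔ (𝒜 (n + 1)).map (LinearMap.mulLeft K (l : R)))
      omega
    have : FiniteDimensional K W := Submodule.finiteDimensional_of_le hW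
    set f : 𝒜 1 → ℕ := fun l => Module.finrank K (𝒜 (n + 1 + 1)) -
      Module.finrank K (W ⊔ (𝒜 (n + 1)).map (LinearMap.mulLeft K (l : R)) : Submodule K R) with hf
    obtain ⟨a, ha⟩ : ∃ a, ∀ᶠ l in U, f l = a := by
      have hfin : (Set.Iic (Module.finrank K (𝒜 (n + 1 + 1)))) ∈ U.map f := by
        refine Filter.Eventually.of_forall (f := (U : Filter (𝒜 1))) ?_
        intro l
        exact Nat.sub_le _ _
      obtain ⟨a, -, ha⟩ := Ultrafilter.eq_pure_of_finite_mem (Set.finite_Iic _) hfin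
      refine ⟨a, ?_⟩
      have : ({a} : Set ℕ) ∈ U.map f := by rw [ha]; exact rfl
      exact this
    have hev := eventually_lt 𝒜 hstd U hU (n + 1) W hlt
    have hsup : ∀ l : 𝒜 1, W ⊔ (𝒜 (n + 1)).map (LinearMap.mulLeft K (l : R)) ≤ 𝒜 (n + 1 + 1) :=
      fun l => sup_le hW (hle (n + 1) l)
    have hWr := Submodule.finrank_mono hW
    obtain ⟨l₁, ha₁, hlt₁⟩ := (ha.and hev).exists
    have hr₁ := Submodule.finrank_mono (hsup l₁)
    have hr₁' := Submodule.finrank_lt_finrank_of_lt hlt₁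
    simp only [hf] at ha₁
    have h2 := ih2 _ (by omega) _ rfl (hsup l₁)
    have h3 := ih ((𝒜 (n + 1)) ⊓ W.comap (LinearMap.mulLeft K (l₁ : R))) inf_le_left
    obtain ⟨l₂, ⟨ha₂, h2⟩, h3⟩ := ((ha.and h2).and h3).exists
    have hr₂ := Submodule.finrank_mono (hsup l₂)
    simp only [hf] at ha₂
    have hr₃ := Submodule.finrank_mono (sup_le (hsup l₁) (hle (n + 1) l₂))
    obtain ⟨T1, T2⟩ := two_forms (𝒜 (n + 1)) (𝒜 n) W (l₁ : R) (l₂ : R) (hle n l₁) (hle n l₂)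
    have hr₄ := Submodule.finrank_mono (inf_le_left :
      (𝒜 (n + 1)) ⊓ W.comap (LinearMap.mulLeft K (l₁ : R)) ≤ 𝒜 (n + 1))
    rw [ha₁] at h2
    have hca : Module.finrank K (𝒜 (n + 1)) -
        Module.finrank K ((𝒜 (n + 1)) ⊓ W.comap (LinearMap.mulLeft K (l₁ : R)) : Submodule K R) =
        Module.finrank K (𝒜 (n + 1 + 1)) - Module.finrank K W - a := by
      omega
    rw [hca] at h3
    have hkey : a ≤ macaulayDown (Module.finrank K (𝒜 (n + 1 + 1)) - Module.finrank K W)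
        (n + 1 + 1) := by
      by_contra hcon
      have := mD_key (n + 1) a _ (not_le.mp hcon)
      omega
    filter_upwards [ha] with l hl
    exact hl.le.trans hkey

/-- **Hyperplane restriction (main theorem).**  For a standard graded algebra `R` over an
arbitrary field `K` and a degree `d > 0` there are finitely many proper linear subspaces
`L_1, …, L_m` of `𝔸(R_1)` such that every linear form `l ∉ L_1 ∪ … ∪ L_m` satisfies
`dim_K (R/lR)_d ≤ (dim_K R_d)_⟨d⟩`. -/
theorem hyperplane_restriction
    {K R : Type*} [Field K] [CommRing R] [Algebra K R]
    (𝒜 : ℕ → Submodule K R) [GradedAlgebra 𝒜]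
    (h0 : 𝒜 0 = (1 : Submodule K R)) (hstd : ∀ n, 𝒜 (n + 1) = 𝒜 1 * 𝒜 n)
    [FiniteDimensional K (𝒜 1)] (d : ℕ) (hd : 0 < d) :
    ∃ (m : ℕ) (L : Fin m → Submodule K (𝒜 1)), (∀ i, L i ≠ ⊤) ∧
      ∀ l : 𝒜 1, (∀ i, l ∉ L i) →
        quotDim 𝒜 (Ideal.span {(l : R)}) d ≤ macaulayDown (Module.finrank K (𝒜 d)) d := by
  classical
  have := graded_finite 𝒜 h0 hstd
  by_contra hcon
  push Not at hcon
  set S : Set (𝒜 1) := {l | macaulayDown (Module.finrank K (𝒜 d)) d <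
    quotDim 𝒜 (Ideal.span {(l : R)}) d} with hS
  set T : Set (Set (𝒜 1)) := insert S {Z | ∃ L : Submodule K (𝒜 1), L ≠ ⊤ ∧ Z = (L : Set (𝒜 1))ᶜ}
    with hT
  have hne : (Filter.generate T).NeBot := by
    rw [Filter.generate_neBot_iff]
    intro t ht hfin
    set I : Set (Submodule K (𝒜 1)) := {L | L ≠ ⊤ ∧ (L : Set (𝒜 1))ᶜ ∈ t} with hI
    have hIfin : I.Finite := by
      have hinj : Function.Injective (fun L : Submodule K (𝒜 1) => (L : Set (𝒜 1))ᶜ) :=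
        compl_injective.comp SetLike.coe_injective
      exact (hfin.preimage hinj.injOn).subset fun L hL => hL.2
    have := hIfin.fintype
    let e := Fintype.equivFin I
    obtain ⟨l, hl1, hl2⟩ := hcon (Fintype.card I) (fun i => (e.symm i : Submodule K (𝒜 1)))
      (fun i => (e.symm i).2.1)
    refine ⟨l, ?_⟩
    intro Z hZ
    rcases ht hZ with rfl | ⟨L, hL, rfl⟩
    · exact hl2
    · have := hl1 (e ⟨L, hL, hZ⟩)
      simpa using this
  let U : Ultrafilter (𝒜 1) := Ultrafilter.of (Filter.generate T)
  have hUT : ∀ Z ∈ T, Z ∈ U := fun Z hZ =>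
    Ultrafilter.of_le (Filter.generate T) (Filter.mem_generate_of_mem hZ)
  have hU : ∀ L : Submodule K (𝒜 1), L ≠ ⊤ → ∀ᶠ l in U, l ∉ L := fun L hL =>
    hUT _ (Set.mem_insert_of_mem _ ⟨L, hL, rfl⟩)
  have hUS : ∀ᶠ l in U, l ∈ S := hUT _ (Set.mem_insert _ _)
  obtain ⟨n, rfl⟩ : ∃ n, d = n + 1 := ⟨d - 1, by omega⟩
  have hg := green_generic 𝒜 h0 hstd U hU n ⊥ bot_le
  obtain ⟨l, hl, hlS⟩ := (hg.and hUS).exists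
  rw [bot_sup_eq, finrank_bot, Nat.sub_zero] at hl
  have hq : quotDim 𝒜 (Ideal.span {(l : R)}) (n + 1) + Module.finrank K
      (homComp 𝒜 (Ideal.span {(l : R)}) (n + 1)) = Module.finrank K (𝒜 (n + 1)) :=
    Submodule.finrank_quotient_add_finrank _
  have hm : (𝒜 n).map (LinearMap.mulLeft K (l : R)) ≤
      (homComp 𝒜 (Ideal.span {(l : R)}) (n + 1)).map (𝒜 (n + 1)).subtype := by
    rintro _ ⟨x, hx, rfl⟩
    refine ⟨⟨(l : R) * x, map_mul_le 𝒜 hstd n l ⟨x, hx, rfl⟩⟩, ?_, rfl⟩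
    exact (Ideal.span {(l : R)}).mul_mem_right x (Ideal.subset_span (Set.mem_singleton _))
  have hm2 := Submodule.finrank_mono hm
  rw [Submodule.finrank_map_subtype_eq] at hm2
  simp only [hS, Set.mem_setOf_eq] at hlS
  omega
end

section
/- (Eakin–Sathaye) Let (A,m) be a local ring with infinite residue field, let I be an ideal of A, and let i and p be positive integers such that I^i is finitely generated and the minimal number of generators v(I^i) satisfies v(I^i) < C(i+p, i). Then there exist elements h_1,…,h_p ∈ I such that I^i = (h_1,…,h_p)·I^{i−1}. -/
namespace ES
open Polynomial

variable {A : Type*} [CommRing A]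

/-- The length of the image of `X` in `A ⧸ J`. -/
noncomputable def ell (J X : Ideal A) : ℕ∞ :=
  Module.length A (Submodule.map (Submodule.mkQ J) X)

lemma ell_add (J X Y : Ideal A) (hY : Y ≤ X) :
    ell J X = ell J Y + ell (J ⊔ Y) X := by
  have hJ : J ≤ J ⊔ Y := le_sup_left
  let f : Submodule.map (Submodule.mkQ J) Y →ₗ[A] Submodule.map (Submodule.mkQ J) X :=
    Submodule.inclusion (Submodule.map_mono hY)
  have hg : ∀ x ∈ Submodule.map (Submodule.mkQ J) X,
      Submodule.factor hJ x ∈ Submodule.map (Submodule.mkQ (J ⊔ Y)) X := by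
    rintro _ ⟨x, hx, rfl⟩
    exact ⟨x, hx, rfl⟩
  let g : Submodule.map (Submodule.mkQ J) X →ₗ[A] Submodule.map (Submodule.mkQ (J ⊔ Y)) X :=
    (Submodule.factor hJ).restrict hg
  refine Module.length_eq_add_of_exact f g (Submodule.inclusion_injective _) ?_ ?_
  · rintro ⟨_, x, hx, rfl⟩
    exact ⟨⟨_, x, hx, rfl⟩, rfl⟩
  · rintro ⟨_, x, hx, rfl⟩
    constructor
    · intro h
      have h2 : Submodule.mkQ (J ⊔ Y) x = 0 := congrArg Subtype.val h
      rw [Submodule.mkQ_apply, Submodule.Quotient.mk_eq_zero] at h2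
      obtain ⟨j, hj, y, hy, rfl⟩ := Submodule.mem_sup.1 h2
      refine ⟨⟨_, y, hy, rfl⟩, ?_⟩
      apply Subtype.ext
      change Submodule.mkQ J y = Submodule.mkQ J (j + y)
      rw [map_add]
      have : Submodule.mkQ J j = 0 := by
        rw [Submodule.mkQ_apply, Submodule.Quotient.mk_eq_zero]; exact hj
      rw [this, zero_add]
    · rintro ⟨⟨_, y, hy, rfl⟩, h⟩
      have h1 : Submodule.mkQ J y = Submodule.mkQ J x := congrArg Subtype.val h
      apply Subtype.ext
      change Submodule.factor hJ (Submodule.mkQ J x) = 0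
      rw [← h1]
      change Submodule.mkQ (J ⊔ Y) y = 0
      rw [Submodule.mkQ_apply, Submodule.Quotient.mk_eq_zero]
      exact Submodule.mem_sup_right hy

/-- The colon ideal `J : h`. -/
noncomputable def col (J : Ideal A) (h : A) : Ideal A := Submodule.comap (LinearMap.mulLeft A h) J

lemma mem_col {J : Ideal A} {h x : A} : x ∈ col J h ↔ h * x ∈ J := Iff.rfl

lemma ell_col (J X : Ideal A) (h : A) : ell (col J h) X ≤ ell J (Ideal.span {h} * X) := by
  have hg : ∀ x ∈ Submodule.map (Submodule.mkQ (col J h)) X,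
      Submodule.mapQ (col J h) J (LinearMap.mulLeft A h) le_rfl x ∈
        Submodule.map (Submodule.mkQ J) (Ideal.span {h} * X) := by
    rintro _ ⟨x, hx, rfl⟩
    exact ⟨h * x, Ideal.mul_mem_mul (Ideal.mem_span_singleton_self h) hx, rfl⟩
  refine Module.length_le_of_injective
    ((Submodule.mapQ (col J h) J (LinearMap.mulLeft A h) le_rfl).restrict hg) ?_
  rw [← LinearMap.ker_eq_bot, LinearMap.ker_eq_bot']
  rintro ⟨_, x, hx, rfl⟩ h0
  have h1 : Submodule.mkQ J (h * x) = 0 := congrArg Subtype.val h0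
  rw [Submodule.mkQ_apply, Submodule.Quotient.mk_eq_zero] at h1
  apply Subtype.ext
  change Submodule.mkQ (col J h) x = 0
  rw [Submodule.mkQ_apply, Submodule.Quotient.mk_eq_zero]
  exact h1

lemma le_of_ell_lt_one {J X : Ideal A} (h : ell J X < 1) : X ≤ J := by
  have h0 : ell J X = 0 := Order.lt_one_iff.1 h
  rw [ell, Module.length_eq_zero_iff, Submodule.subsingleton_iff_eq_bot] at h0
  intro x hx
  have h1 : Submodule.mkQ J x ∈ Submodule.map (Submodule.mkQ J) X := ⟨x, hx, rfl⟩
  rw [h0, Submodule.mem_bot, Submodule.mkQ_apply, Submodule.Quotient.mk_eq_zero] at h1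
  exact h1

lemma exists_gens {J X : Ideal A} (h : ell J X ≠ ⊤) :
    ∃ (d : ℕ) (e : Fin d → A), (∀ j, e j ∈ X) ∧ X ≤ Ideal.span (Set.range e) ⊔ J := by
  have h1 := (isFiniteLength_iff_isNoetherian_isArtinian.1 (Module.length_ne_top_iff.1 h)).1
  have h2 : (Submodule.map (Submodule.mkQ J) X).FG := by
    rw [← Module.Finite.iff_fg]; infer_instance
  obtain ⟨d, s, hs⟩ := Submodule.fg_iff_exists_fin_generating_family.1 h2
  have h3 : ∀ j, ∃ x ∈ X, Submodule.mkQ J x = s j := fun j => by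
    have : s j ∈ Submodule.map (Submodule.mkQ J) X := hs ▸ Submodule.subset_span ⟨j, rfl⟩
    exact this
  choose e he1 he2 using h3
  refine ⟨d, e, he1, ?_⟩
  have h4 : Submodule.map (Submodule.mkQ J) X =
      Submodule.map (Submodule.mkQ J) (Ideal.span (Set.range e)) := by
    rw [← hs, Ideal.span, Submodule.map_span, ← Set.range_comp]
    congr 2
    funext j
    exact (he2 j).symm
  have h5 := Submodule.map_le_iff_le_comap.1 h4.le
  rwa [Submodule.comap_map_eq, Submodule.ker_mkQ] at h5

lemma mem_span_mul {p : ℕ} {a : Fin p → A} {Y : Ideal A} {x : A}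
    (hx : x ∈ Ideal.span (Set.range a) * Y) :
    ∃ g : Fin p → A, (∀ k, g k ∈ Y) ∧ x = ∑ k, a k * g k := by
  rw [mul_comm, ← smul_eq_mul, Ideal.span, Submodule.mem_ideal_smul_span_iff_exists_sum] at hx
  obtain ⟨g, hg, rfl⟩ := hx
  refine ⟨g, hg, ?_⟩
  rw [Finsupp.sum_fintype _ _ (by simp)]
  exact Finset.sum_congr rfl fun k _ => by rw [smul_eq_mul, mul_comm]

/-- Zariski-open-like subsets of `I^p`. -/
def Opn {p : ℕ} (I : Ideal A) (U : (Fin p → A) → Prop) : Prop :=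
  ∀ a, U a → ∀ b : Fin p → A, (∀ k, b k ∈ I) →
    ∃ q : A[X], q.eval 0 = 1 ∧ ∀ t, IsUnit (q.eval t) → U (a + t • b)

/-- The set of good tuples. -/
def Good (I J : Ideal A) (n : ℕ) {p : ℕ} (a : Fin p → A) : Prop :=
  (∀ k, a k ∈ I) ∧ I ^ (n + 1) ≤ Ideal.span (Set.range a) * I ^ n ⊔ J

lemma good_open (I J : Ideal A) (n p : ℕ) (h : ell J (I ^ (n + 1)) ≠ ⊤) :
    Opn I (Good I J n (p := p)) := by
  intro a ha b hb
  obtain ⟨d, e, he, hX⟩ := exists_gens h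
  have h1 : ∀ j, ∃ g : Fin p → A, (∀ k, g k ∈ I ^ n) ∧ e j - ∑ k, a k * g k ∈ J := by
    intro j
    obtain ⟨y, hy, z, hz, hyz⟩ := Submodule.mem_sup.1 (ha.2 (he j))
    obtain ⟨g, hg, rfl⟩ := mem_span_mul hy
    refine ⟨g, hg, ?_⟩
    rw [← hyz]; simpa using hz
  choose g hg1 hg2 using h1
  have h2 : ∀ j, ∃ c : Fin d → A, ∑ k, b k * g j k - ∑ l, c l * e l ∈ J := by
    intro j
    have : ∑ k, b k * g j k ∈ I ^ (n + 1) := by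
      refine Ideal.sum_mem _ fun k _ => ?_
      rw [pow_succ']
      exact Ideal.mul_mem_mul (hb k) (hg1 j k)
    obtain ⟨y, hy, z, hz, hyz⟩ := Submodule.mem_sup.1 (hX this)
    obtain ⟨c, rfl⟩ := Ideal.mem_span_range_iff_exists_fun.1 hy
    refine ⟨c, ?_⟩
    rw [← hyz]; simpa using hz
  choose M hM using h2
  let MM : Matrix (Fin d) (Fin d) A := Matrix.of M
  have hev : ∀ t : A, ((1 + (X : A[X]) • MM.map C).det).eval t = (1 + t • MM).det := by
    intro t
    rw [← Polynomial.coe_evalRingHom, RingHom.map_det]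
    congr 1
    ext i j
    by_cases hij : i = j <;> simp [hij] <;> ring
  refine ⟨(1 + (X : A[X]) • MM.map C).det, ?_, ?_⟩
  · rw [hev]; simp
  · intro t ht
    rw [hev] at ht
    refine ⟨fun k => ?_, ?_⟩
    · simpa using I.add_mem (ha.1 k) (I.mul_mem_left t (hb k))
    refine hX.trans (sup_le ?_ le_sup_right)
    rw [Ideal.span_le]
    rintro _ ⟨l, rfl⟩
    let f : Fin d → A := fun j => ∑ k, (a k + t * b k) * g j k
    let N : Matrix (Fin d) (Fin d) A := 1 + t • MM
    let r : Fin d → A := f - N.mulVec e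
    have hr : ∀ j, r j ∈ J := by
      intro j
      have : r j = -(e j - ∑ k, a k * g j k) + t * (∑ k, b k * g j k - ∑ l, M j l * e l) := by
        have e1 : N.mulVec e j = e j + t * ∑ l, M j l * e l := by
          simp only [N, Matrix.add_mulVec, Matrix.one_mulVec, Matrix.smul_mulVec, Pi.add_apply,
            Pi.smul_apply, smul_eq_mul]
          rfl
        have e2 : f j = ∑ k, a k * g j k + t * ∑ k, b k * g j k := by
          simp only [f, Finset.mul_sum, ← Finset.sum_add_distrib]
          exact Finset.sum_congr rfl fun k _ => by ring
        change f j - N.mulVec e j = _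
        rw [e1, e2]; ring
      rw [this]
      exact J.add_mem (J.neg_mem (hg2 j)) (J.mul_mem_left t (hM j))
    have hf : ∀ j, f j ∈ Ideal.span (Set.range (a + t • b)) * I ^ n := by
      intro j
      refine Ideal.sum_mem _ fun k _ => Ideal.mul_mem_mul ?_ (hg1 j k)
      exact Ideal.subset_span ⟨k, by simp⟩
    have key : e l = (N⁻¹.mulVec f) l - (N⁻¹.mulVec r) l := by
      rw [← Pi.sub_apply, ← Matrix.mulVec_sub]
      simp only [r, sub_sub_cancel, Matrix.mulVec_mulVec]
      rw [Matrix.nonsing_inv_mul _ ht, Matrix.one_mulVec]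
    rw [SetLike.mem_coe, key]
    refine Submodule.sub_mem _ (Submodule.mem_sup_left ?_) (Submodule.mem_sup_right ?_)
    · change ∑ j, N⁻¹ l j * f j ∈ _
      exact Ideal.sum_mem _ fun j _ => Ideal.mul_mem_left _ _ (hf j)
    · change ∑ j, N⁻¹ l j * r j ∈ _
      exact Ideal.sum_mem _ fun j _ => Ideal.mul_mem_left _ _ (hr j)

section loc
variable [IsLocalRing A] [Infinite (IsLocalRing.ResidueField A)]

lemma exists_unit (q r : A[X]) (x y : A) (hq : q.eval x = 1) (hr : r.eval y = 1) :
    ∃ t, IsUnit (q.eval t) ∧ IsUnit (r.eval t) := by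
  by_contra! H
  let φ := IsLocalRing.residue A
  have h0 : q.map φ * r.map φ = 0 := by
    apply Polynomial.funext
    intro s
    obtain ⟨t, rfl⟩ := IsLocalRing.residue_surjective (R := A) s
    rw [eval_mul, eval_zero]
    by_cases hu : IsUnit (q.eval t)
    · have := H t hu
      have h3 : eval (φ t) (r.map φ) = 0 := by
        rw [eval_map_apply]
        exact (IsLocalRing.residue_eq_zero_iff _).2 this
      exact mul_eq_zero_of_right _ h3
    · have h3 : eval (φ t) (q.map φ) = 0 := by
        rw [eval_map_apply]
        exact (IsLocalRing.residue_eq_zero_iff _).2 hu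
      exact mul_eq_zero_of_left h3 _
  rcases mul_eq_zero.1 h0 with h | h
  · have := congrArg (eval (φ x)) h
    rw [eval_map_apply, hq] at this
    simp at this
  · have := congrArg (eval (φ y)) h
    rw [eval_map_apply, hr] at this
    simp at this

lemma inter (I : Ideal A) {p : ℕ} (U V : (Fin p → A) → Prop) (hU : Opn I U) (hV : Opn I V)
    (hUI : ∀ a, U a → ∀ k, a k ∈ I) (hVI : ∀ a, V a → ∀ k, a k ∈ I)
    (h1 : ∃ a, U a) (h2 : ∃ a, V a) : ∃ a, U a ∧ V a := by
  obtain ⟨a, ha⟩ := h1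
  obtain ⟨b, hb⟩ := h2
  obtain ⟨q, hq, hq'⟩ := hU a ha (b - a) (fun k => I.sub_mem (hVI b hb k) (hUI a ha k))
  obtain ⟨r, hr, hr'⟩ := hV b hb (a - b) (fun k => I.sub_mem (hUI a ha k) (hVI b hb k))
  obtain ⟨t, ht1, ht2⟩ := exists_unit q (r.comp (1 - X)) 0 1 hq (by simp [hr])
  refine ⟨a + t • (b - a), hq' t ht1, ?_⟩
  have : a + t • (b - a) = b + (1 - t) • (a - b) := by
    funext k; simp; ring
  rw [this]
  apply hr'
  simpa using ht2

lemma inter_open (I : Ideal A) {p : ℕ} (U V : (Fin p → A) → Prop) (hU : Opn I U)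
    (hV : Opn I V) : Opn I (fun a => U a ∧ V a) := by
  intro a ha b hb
  obtain ⟨q, hq, hq'⟩ := hU a ha.1 b hb
  obtain ⟨r, hr, hr'⟩ := hV a ha.2 b hb
  refine ⟨q * r, by simp [hq, hr], fun t ht => ?_⟩
  rw [eval_mul, IsUnit.mul_iff] at ht
  exact ⟨hq' t ht.1, hr' t ht.2⟩

lemma inter_fin (I : Ideal A) {p : ℕ} (U : A → (Fin p → A) → Prop) (H : Finset A)
    (hU : ∀ h ∈ H, Opn I (U h)) (hUI : ∀ h ∈ H, ∀ a, U h a → ∀ k, a k ∈ I)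
    (hne : ∀ h ∈ H, ∃ a, U h a) :
    ∃ a : Fin p → A, (∀ k, a k ∈ I) ∧ ∀ h ∈ H, U h a := by
  classical
  suffices h : Opn I (fun a : Fin p → A => (∀ k, a k ∈ I) ∧ ∀ h ∈ H, U h a) ∧
      ∃ a : Fin p → A, (∀ k, a k ∈ I) ∧ ∀ h ∈ H, U h a from h.2
  induction H using Finset.induction_on with
  | empty =>
    refine ⟨fun a ha b hb => ⟨1, by simp, fun t _ => ⟨fun k => ?_, by simp⟩⟩,
      0, by simp, by simp⟩
    simpa using I.add_mem (ha.1 k) (I.mul_mem_left t (hb k))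
  | insert x H hx ih =>
    obtain ⟨i1, i2⟩ := ih (fun h hh => hU h (Finset.mem_insert_of_mem hh))
      (fun h hh => hUI h (Finset.mem_insert_of_mem hh))
      (fun h hh => hne h (Finset.mem_insert_of_mem hh))
    have hx' := Finset.mem_insert_self x H
    have heq : (fun a : Fin p → A => (∀ k, a k ∈ I) ∧ ∀ h ∈ insert x H, U h a) =
        fun a => U x a ∧ ((∀ k, a k ∈ I) ∧ ∀ h ∈ H, U h a) := by
      funext a
      simp only [Finset.forall_mem_insert]
      exact propext (by tauto)
    have hin := inter I (U x) _ (hU x hx') i1 (hUI x hx') (fun a ha => ha.1) (hne x hx') i2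
    refine ⟨heq ▸ inter_open I _ _ (hU x hx') i1, ?_⟩
    obtain ⟨a, ha⟩ := hin
    exact ⟨a, (congrFun heq a).symm ▸ ha⟩

lemma exists_finite (I J : Ideal A) (n : ℕ) (h : ell J (I ^ (n + 1)) ≠ ⊤) :
    ∃ H : Finset A, (∀ x ∈ H, x ∈ I) ∧
      I ^ (n + 1) ≤ Ideal.span (H : Set A) * I ^ n ⊔ J := by
  classical
  obtain ⟨d, e, he, hX⟩ := exists_gens h
  have h1 : ∀ j, ∃ T : Finset A, (T : Set A) ⊆ I ∧ e j ∈ Ideal.span (T : Set A) * I ^ n := by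
    intro j
    have := he j
    rw [pow_succ'] at this
    obtain ⟨T, T', hT, hT', hm⟩ := Submodule.mem_span_mul_finite_of_mem_mul this
    refine ⟨T, hT, ?_⟩
    rw [← Submodule.span_mul_span] at hm
    exact Ideal.mul_mono le_rfl (Ideal.span_le.2 hT') hm
  choose T hT1 hT2 using h1
  refine ⟨Finset.univ.biUnion T, ?_, ?_⟩
  · intro x hx
    obtain ⟨j, -, hj⟩ := Finset.mem_biUnion.1 hx
    exact hT1 j hj
  · refine hX.trans (sup_le_sup_right ?_ _)
    rw [Ideal.span_le]
    rintro _ ⟨j, rfl⟩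
    refine Ideal.mul_mono (Ideal.span_mono ?_) le_rfl (hT2 j)
    exact Finset.coe_subset.2 (Finset.subset_biUnion_of_mem T (Finset.mem_univ j))

lemma step (I : Ideal A) (n p : ℕ) (J : Ideal A)
    (hJ : ell J (I ^ (n + 1)) < ((n + 1 + (p + 1)).choose (n + 1) : ℕ))
    (ihp : ∀ J : Ideal A, ell J (I ^ (n + 1)) < ((n + 1 + p).choose (n + 1) : ℕ) →
      ∃ a : Fin p → A, Good I J n a)
    (ihn : ∀ n', n = n' + 1 → ∀ J : Ideal A,
      ell J (I ^ (n' + 1)) < ((n' + 1 + (p + 1)).choose (n' + 1) : ℕ) →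
      ∃ a : Fin (p + 1) → A, Good I J n' a) :
    ∃ a : Fin (p + 1) → A, Good I J n a := by
  by_cases hc : ∃ h ∈ I, ell (J ⊔ Ideal.span {h} * I ^ n) (I ^ (n + 1)) <
      ((n + 1 + p).choose (n + 1) : ℕ)
  · obtain ⟨h, hI, hlt⟩ := hc
    obtain ⟨a, ha1, ha2⟩ := ihp _ hlt
    refine ⟨Fin.cons h a, ?_, ?_⟩
    · intro k
      refine Fin.cases ?_ (fun k => ?_) k
      · simpa using hI
      · simpa using ha1 k
    · refine ha2.trans (sup_le ?_ (sup_le le_sup_right ?_))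
      · refine le_sup_of_le_left (Ideal.mul_mono (Ideal.span_mono ?_) le_rfl)
        rintro _ ⟨k, rfl⟩
        exact ⟨k.succ, by simp⟩
      · refine le_sup_of_le_left (Ideal.mul_mono (Ideal.span_mono ?_) le_rfl)
        rintro _ rfl
        exact ⟨0, by simp⟩
  · push Not at hc
    have htop : ell J (I ^ (n + 1)) ≠ ⊤ := ne_top_of_lt hJ
    have hsmall : ∀ h ∈ I, ell (col J h) (I ^ n) < ((n + (p + 1)).choose n : ℕ) := by
      intro h hI
      refine (ell_col J (I ^ n) h).trans_lt ?_
      have hle : Ideal.span {h} * I ^ n ≤ I ^ (n + 1) := by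
        rw [pow_succ']
        exact Ideal.mul_mono ((Ideal.span_singleton_le_iff_mem I).2 hI) le_rfl
      have hadd := ell_add J (I ^ (n + 1)) _ hle
      by_contra! hge
      have h3 := add_le_add hge (hc h hI)
      rw [← hadd] at h3
      have h4 : (n + 1 + (p + 1)).choose (n + 1) =
          (n + (p + 1)).choose n + (n + 1 + p).choose (n + 1) := by
        rw [show n + 1 + (p + 1) = (n + (p + 1)) + 1 by ring, Nat.choose_succ_succ,
          show n + 1 + p = n + (p + 1) by ring]
      rw [h4] at hJ
      push_cast at hJ
      exact absurd hJ (not_lt.2 h3)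
    rcases n with _ | n
    · refine ⟨0, by simp, le_sup_of_le_right ?_⟩
      intro h hI
      have h1 := le_of_ell_lt_one (by simpa using hsmall h (by simpa using hI))
      have h2 : (1 : A) ∈ col J h := h1 (by simp)
      simpa [mem_col] using h2
    · obtain ⟨H, hHI, hH⟩ := exists_finite I J (n + 1) htop
      obtain ⟨a, haI, ha⟩ := inter_fin I (fun h => Good I (col J h) n (p := p + 1)) H
        (fun h hh => good_open I _ n _ (ne_top_of_lt (hsmall h (hHI h hh))))
        (fun h hh a ha => ha.1) (fun h hh => ihn n rfl _ (hsmall h (hHI h hh)))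
      refine ⟨a, haI, hH.trans (sup_le ?_ le_sup_right)⟩
      rw [Ideal.mul_le]
      intro r hr s hs
      rw [mul_comm r s]
      revert r
      change ∀ r ∈ Ideal.span (H : Set A), r ∈ Submodule.comap (LinearMap.mulLeft A s)
        (Ideal.span (Set.range a) * I ^ (n + 1) ⊔ J)
      change Ideal.span (H : Set A) ≤ _
      rw [Ideal.span_le]
      intro h hh
      change s * h ∈ Ideal.span (Set.range a) * I ^ (n + 1) ⊔ J
      obtain ⟨y, hy, z, hz, rfl⟩ := Submodule.mem_sup.1 ((ha h hh).2 hs)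
      rw [mul_comm _ h, mul_add]
      refine Submodule.add_mem _ (Submodule.mem_sup_left ?_) (Submodule.mem_sup_right hz)
      have := Ideal.mul_mem_mul (hHI h hh) hy
      rwa [mul_left_comm, ← pow_succ'] at this

lemma main (I : Ideal A) (n : ℕ) : ∀ (p : ℕ) (J : Ideal A),
    ell J (I ^ (n + 1)) < ((n + 1 + p).choose (n + 1) : ℕ) →
    ∃ a : Fin p → A, Good I J n a := by
  induction n with
  | zero =>
    intro p
    induction p with
    | zero =>
      intro J hJ
      refine ⟨0, by simp, (le_of_ell_lt_one (by simpa using hJ)).trans le_sup_right⟩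
    | succ p ihp => exact fun J hJ => step I 0 p J hJ ihp (fun n' h => by omega)
  | succ n ihn =>
    intro p
    induction p with
    | zero =>
      intro J hJ
      refine ⟨0, by simp, (le_of_ell_lt_one (by simpa using hJ)).trans le_sup_right⟩
    | succ p ihp =>
      refine fun J hJ => step I (n + 1) p J hJ ihp (fun n' h => ?_)
      obtain rfl : n = n' := by omega
      exact ihn (p + 1)

lemma ell_le_card (X : Ideal A) (G : Finset A) (hG : Ideal.span (G : Set A) = X) :
    ell (IsLocalRing.maximalIdeal A * X) X ≤ G.card := by
  classical
  let m := IsLocalRing.maximalIdeal A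
  let J := m * X
  have hmem : ∀ g : G, (g : A) ∈ X := fun g => hG ▸ Ideal.subset_span g.2
  let ψ : (G → A) →ₗ[A] A := Fintype.linearCombination A (fun g : G => (g : A))
  let π : (G → A) →ₗ[A] (G → A ⧸ m) := LinearMap.pi fun g => (Submodule.mkQ m) ∘ₗ LinearMap.proj g
  have hπ : Function.Surjective π := by
    intro v
    choose w hw using fun g => Submodule.mkQ_surjective m (v g)
    exact ⟨w, funext hw⟩
  have hψ : ∀ v, ψ v = ∑ g : G, v g * (g : A) := fun v => rfl
  have hψX : ∀ v, ψ v ∈ X := fun v => by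
    rw [hψ]; exact Ideal.sum_mem _ fun g _ => X.mul_mem_left _ (hmem g)
  let f : (G → A) →ₗ[A] Submodule.map (Submodule.mkQ J) X :=
    (Submodule.mkQ J ∘ₗ ψ).codRestrict _ (fun v => ⟨_, hψX v, rfl⟩)
  have hf : Function.Surjective f := by
    rintro ⟨_, x, hx, rfl⟩
    have hx' : x ∈ Ideal.span (Set.range (fun g : G => (g : A))) := by
      rw [← hG] at hx; simpa using hx
    obtain ⟨c, rfl⟩ := Ideal.mem_span_range_iff_exists_fun.1 hx'
    exact ⟨c, rfl⟩
  have hk : LinearMap.ker π ≤ LinearMap.ker f := by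
    intro v hv
    have hv' : ∀ g, v g ∈ m := fun g => by
      have : Submodule.mkQ m (v g) = 0 := congrFun hv g
      rwa [Submodule.mkQ_apply, Submodule.Quotient.mk_eq_zero] at this
    apply Subtype.ext
    change Submodule.mkQ J (ψ v) = 0
    rw [Submodule.mkQ_apply, Submodule.Quotient.mk_eq_zero, hψ]
    exact Ideal.sum_mem _ fun g _ => Ideal.mul_mem_mul (hv' g) (hmem g)
  let e := π.quotKerEquivOfSurjective hπ
  have h1 : Module.length A (Submodule.map (Submodule.mkQ J) X) ≤ Module.length A (G → A ⧸ m) := by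
    refine Module.length_le_of_surjective (((LinearMap.ker π).liftQ f hk) ∘ₗ e.symm.toLinearMap) ?_
    rw [LinearMap.coe_comp]
    refine Function.Surjective.comp ?_ e.symm.surjective
    intro y
    obtain ⟨v, hv⟩ := hf y
    exact ⟨Submodule.Quotient.mk v, hv⟩
  refine h1.trans ?_
  have hs : IsSimpleModule A (A ⧸ m) :=
    isSimpleModule_iff_isCoatom.2 (IsLocalRing.maximalIdeal.isMaximal A).out
  rw [Module.length_pi, Module.length_eq_one_iff.2 hs]
  simp

end loc
end ES

/-- **Eakin–Sathaye theorem.**  Let `(A,m)` be a local ring with infinite residue field,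
`I` an ideal, and `i, p` positive integers.  If `I^i` is finitely generated with minimal
number of generators `< C(i+p, i)` (equivalently, `I^i` admits a generating set of
cardinality `< C(i+p, i)`), then there are `h_1, …, h_p ∈ I` with
`I^i = (h_1, …, h_p)·I^{i-1}`. -/
theorem eakin_sathaye
    {A : Type*} [CommRing A] [IsLocalRing A]
    [Infinite (IsLocalRing.ResidueField A)]
    (I : Ideal A) (i p : ℕ) (hi : 0 < i) (hp : 0 < p)
    (hv : ∃ G : Finset A, Ideal.span (G : Set A) = I ^ i ∧ G.card < (i + p).choose i) :
    ∃ h : Fin p → A, (∀ t, h t ∈ I) ∧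
      I ^ i = Ideal.span (Set.range h) * I ^ (i - 1) := by
  obtain ⟨G, hG, hc⟩ := hv
  obtain ⟨n, rfl⟩ : ∃ n, i = n + 1 := ⟨i - 1, by omega⟩
  have hl : ES.ell (IsLocalRing.maximalIdeal A * I ^ (n + 1)) (I ^ (n + 1)) <
      ((n + 1 + p).choose (n + 1) : ℕ) :=
    (ES.ell_le_card _ G hG).trans_lt (by exact_mod_cast hc)
  obtain ⟨a, ha1, ha2⟩ := ES.main I n p _ hl
  refine ⟨a, ha1, ?_⟩
  rw [Nat.add_sub_cancel]
  apply le_antisymm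
  · refine Submodule.le_of_le_smul_of_le_jacobson_bot (I := IsLocalRing.maximalIdeal A)
      ⟨G, hG⟩ ?_ ha2
    rw [IsLocalRing.jacobson_eq_maximalIdeal _ bot_ne_top]
  · rw [pow_succ']
    refine Ideal.mul_mono (Ideal.span_le.2 ?_) le_rfl
    rintro _ ⟨k, rfl⟩
    exact ha1 k
end

section
/- (O'Carroll) Let (A,m) be a local ring with infinite residue field, let I_1,…,I_s be ideals of A and set I = I_1·I_2⋯I_s, and let i and p be positive integers such that I^i is finitely generated and v(I^i) < C(i+p, i). Then there exist elements h_1,…,h_p, each of the form h_t = l_{t,1}·l_{t,2}⋯l_{t,s} with l_{t,j} ∈ I_j, such that I^i = (h_1,…,h_p)·I^{i−1}. -/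
namespace ESO

open Polynomial
open scoped Pointwise

section
variable {A : Type*} [CommRing A]

/-- length of the image of `X` in `A ⧸ Q` -/
noncomputable def qlen (Q X : Ideal A) : ℕ∞ := Module.length A (Submodule.map Q.mkQ X)

lemma fin_of_qlen {Q X : Ideal A} (h : qlen Q X ≠ ⊤) :
    ∃ G : Finset A, X ≤ Q ⊔ Ideal.span (G : Set A) := by
  classical
  have h1 := Module.length_ne_top_iff.mp h
  have h2 := (isFiniteLength_iff_isNoetherian_isArtinian.mp h1).1
  have h3 : (Submodule.map Q.mkQ X).FG := Module.Finite.iff_fg.mp inferInstance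
  obtain ⟨G, hG⟩ := h3
  choose f hf using Submodule.mkQ_surjective Q
  refine ⟨G.image f, ?_⟩
  have : Submodule.map Q.mkQ X ≤ Submodule.map Q.mkQ (Ideal.span ((G.image f : Finset A) : Set A)) := by
    rw [← hG, Submodule.span_le]
    intro g hg
    exact ⟨f g, Ideal.subset_span (by simpa using ⟨g, hg, rfl⟩), hf g⟩
  rw [Submodule.map_le_iff_le_comap, Submodule.comap_map_eq, Submodule.ker_mkQ] at this
  rwa [sup_comm] at this

lemma compact_aux {Q X : Ideal A} (h : qlen Q X ≠ ⊤) (S : Set A) (hS : X ≤ Q ⊔ Ideal.span S)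
    (hSX : S ⊆ X) :
    ∃ T : Finset A, (T : Set A) ⊆ S ∧ X ≤ Q ⊔ Ideal.span (T : Set A) := by
  classical
  have h1 := Module.length_ne_top_iff.mp h
  have h2 := (isFiniteLength_iff_isNoetherian_isArtinian.mp h1).1
  have h3 : (Submodule.map Q.mkQ X).FG := Module.Finite.iff_fg.mp inferInstance
  have h4 : Submodule.map Q.mkQ X = Submodule.span A (Q.mkQ '' S) := by
    rw [← Submodule.map_span]
    apply le_antisymm
    · rw [Submodule.map_le_iff_le_comap, Submodule.comap_map_eq, Submodule.ker_mkQ, sup_comm]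
      exact hS
    · exact Submodule.map_mono (Submodule.span_le.mpr hSX)
  rw [h4, Submodule.fg_span_iff_fg_span_finset_subset] at h3
  obtain ⟨s', hs', hs⟩ := h3
  obtain ⟨T, hT, rfl⟩ := Finset.subset_set_image_iff.mp hs'
  refine ⟨T, hT, ?_⟩
  have h5 : Submodule.map Q.mkQ X ≤ Submodule.map Q.mkQ (Ideal.span (T : Set A)) := by
    rw [h4, hs, Finset.coe_image, ← Submodule.map_span]
  rw [Submodule.map_le_iff_le_comap, Submodule.comap_map_eq, Submodule.ker_mkQ] at h5
  rwa [sup_comm] at h5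

lemma qlen_lt_one {Q X : Ideal A} (h : qlen Q X < 1) : X ≤ Q := by
  have h1 : qlen Q X = 0 := Order.lt_one_iff.mp h
  rw [qlen, Module.length_eq_zero_iff, Submodule.subsingleton_iff_eq_bot, ← le_bot_iff,
    Submodule.map_le_iff_le_comap, Submodule.comap_bot, Submodule.ker_mkQ] at h1
  exact h1

/-- The colon ideal `Q : h`. -/
def colonEl (Q : Ideal A) (h : A) : Ideal A := Submodule.comap (LinearMap.mulLeft A h) Q

lemma mem_colonEl {Q : Ideal A} {h x : A} : x ∈ colonEl Q h ↔ h * x ∈ Q := Iff.rfl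

lemma qlen_mul (Q Y : Ideal A) (h : A) :
    qlen Q (Ideal.span {h} * Y) = qlen (colonEl Q h) Y := by
  let f : (A ⧸ colonEl Q h) →ₗ[A] (A ⧸ Q) :=
    Submodule.mapQ (colonEl Q h) Q (LinearMap.mulLeft A h) le_rfl
  have hf : Function.Injective f := by
    rw [← LinearMap.ker_eq_bot]
    have := Submodule.ker_mapQ (colonEl Q h) Q (LinearMap.mulLeft A h) le_rfl
    rw [this]
    change Submodule.map _ (colonEl Q h) = ⊥
    simp
  have e := (Submodule.equivMapOfInjective f hf (Submodule.map (colonEl Q h).mkQ Y)).length_eq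
  rw [qlen, qlen, e]
  have : Submodule.map f (Submodule.map (colonEl Q h).mkQ Y) =
      Submodule.map Q.mkQ (Ideal.span {h} * Y) := by
    rw [← Submodule.map_comp]
    have hc : f ∘ₗ (colonEl Q h).mkQ = Q.mkQ ∘ₗ LinearMap.mulLeft A h := by
      apply LinearMap.ext
      intro x
      rfl
    rw [hc, Submodule.map_comp]
    congr 1
    ext x
    simp [Ideal.mem_span_singleton_mul]
  rw [this]

lemma qlen_add (Q X Y : Ideal A) (hYX : Y ≤ X) :
    qlen Q X = qlen Q Y + qlen (Q ⊔ Y) X := by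
  let g0 : (A ⧸ Q) →ₗ[A] (A ⧸ (Q ⊔ Y)) := Submodule.factor le_sup_left
  have hg0 : Submodule.map g0 (Submodule.map Q.mkQ X) = Submodule.map (Q ⊔ Y).mkQ X := by
    rw [← Submodule.map_comp]; rfl
  let g : (Submodule.map Q.mkQ X) →ₗ[A] (Submodule.map (Q ⊔ Y).mkQ X) :=
    g0.restrict (fun x hx => hg0 ▸ Submodule.mem_map_of_mem hx)
  let f : (Submodule.map Q.mkQ Y) →ₗ[A] (Submodule.map Q.mkQ X) :=
    Submodule.inclusion (Submodule.map_mono hYX)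
  refine Module.length_eq_add_of_exact f g (Submodule.inclusion_injective _) ?_ ?_
  · rintro ⟨x, y, hy, rfl⟩
    exact ⟨⟨Q.mkQ y, Submodule.mem_map_of_mem hy⟩, rfl⟩
  · rintro ⟨x, y, hy, rfl⟩
    constructor
    · intro hx
      have hx' : (Q ⊔ Y).mkQ y = 0 := congrArg Subtype.val hx
      rw [Submodule.mkQ_apply, Submodule.Quotient.mk_eq_zero] at hx'
      obtain ⟨q, hq, z, hz, rfl⟩ := Submodule.mem_sup.mp hx'
      refine ⟨⟨Q.mkQ z, Submodule.mem_map_of_mem hz⟩, ?_⟩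
      apply Subtype.ext
      change Q.mkQ z = Q.mkQ (q + z)
      rw [map_add]
      have : Q.mkQ q = 0 := (Submodule.Quotient.mk_eq_zero Q).mpr hq
      rw [this, zero_add]
    · rintro ⟨⟨w, z, hz, rfl⟩, hw⟩
      have hw' : Q.mkQ z = Q.mkQ y := congrArg Subtype.val hw
      apply Subtype.ext
      change g0 (Q.mkQ y) = 0
      rw [← hw']
      change (Q ⊔ Y).mkQ z = 0
      rw [Submodule.mkQ_apply, Submodule.Quotient.mk_eq_zero]
      exact Submodule.mem_sup_right hz

lemma mem_sup_span_range {ι : Type*} [Fintype ι] {Q : Ideal A} {v : ι → A} {x : A}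
    (hx : x ∈ Q ⊔ Ideal.span (Set.range v)) : ∃ c : ι → A, x - ∑ j, c j * v j ∈ Q := by
  obtain ⟨q, hq, y, hy, rfl⟩ := Submodule.mem_sup.mp hx
  obtain ⟨c, rfl⟩ := (Ideal.mem_span_range_iff_exists_fun).mp hy
  exact ⟨c, by simpa using hq⟩

variable [IsLocalRing A]

lemma open_line {ι : Type*} [Fintype ι] (Q Y : Ideal A) (v : ι → A[X])
    (hv : ∀ k e, (v k).coeff e ∈ Y)
    (h0 : Y ≤ Q ⊔ Ideal.span (Set.range fun k => (v k).eval 0)) :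
    ∃ F : Finset (IsLocalRing.ResidueField A), ∀ τ : A, IsLocalRing.residue A τ ∉ F →
      Y ≤ Q ⊔ Ideal.span (Set.range fun k => (v k).eval τ) := by
  classical
  have hB : ∀ k e, ∃ c : ι → A, (v k).coeff e - ∑ j, c j * (v j).eval 0 ∈ Q := fun k e =>
    mem_sup_span_range (h0 (hv k e))
  choose B hB using hB
  let W : Matrix ι ι A[X] := Matrix.of fun k j =>
    ∑ e ∈ Finset.range (v k).divX.natDegree.succ, C (B k (e+1) j) * X ^ e
  let D : Matrix ι ι A[X] := 1 + (X : A[X]) • W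
  have hD : ∀ τ k, (v k).eval τ - ∑ j, (D k j).eval τ * (v j).eval 0 ∈ Q := by
    intro τ k
    have e1 : (v k).eval τ = (v k).eval 0 + τ * ∑ e ∈ Finset.range (v k).divX.natDegree.succ,
        (v k).coeff (e+1) * τ ^ e := by
      conv_lhs => rw [← Polynomial.divX_mul_X_add (v k)]
      rw [eval_add, eval_mul, eval_X, eval_C, Polynomial.eval_eq_sum_range, coeff_zero_eq_eval_zero]
      simp only [coeff_divX]
      ring
    have e2 : ∑ j, (D k j).eval τ * (v j).eval 0 = (v k).eval 0 +
        τ * ∑ e ∈ Finset.range (v k).divX.natDegree.succ, (∑ j, B k (e+1) j * (v j).eval 0) * τ ^ e := by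
      simp only [D, W, Matrix.add_apply, Matrix.smul_apply, Matrix.of_apply, eval_add, add_mul,
        Finset.sum_add_distrib]
      congr 1
      · simp [Matrix.one_apply, apply_ite (eval τ)]
      · simp only [smul_eq_mul, eval_mul, eval_X, eval_finsetSum, eval_C, eval_pow, mul_assoc,
          ← Finset.mul_sum, Finset.sum_mul]
        rw [Finset.sum_comm]
        congr 1
        refine Finset.sum_congr rfl fun e _ => Finset.sum_congr rfl fun j _ => by ring
    rw [e1, e2, add_sub_add_left_eq_sub, ← mul_sub, ← Finset.sum_sub_distrib]
    refine Ideal.mul_mem_left _ _ (Ideal.sum_mem _ fun e _ => ?_)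
    rw [← sub_mul]
    exact Ideal.mul_mem_right _ _ (hB k (e+1))
  let f := D.det
  have hdet : ∀ τ, f.eval τ = (D.map (eval τ)).det := by
    intro τ
    exact RingHom.map_det (evalRingHom τ) D
  have hf0 : f.eval 0 = 1 := by
    rw [hdet]
    convert Matrix.det_one (n := ι) (R := A)
    ext k j
    simp [D, Matrix.one_apply, apply_ite (eval (0:A))]
  have hfne : f.map (IsLocalRing.residue A) ≠ 0 := by
    intro h
    have h1 := congrArg (eval 0) h
    rw [eval_zero, ← map_zero (IsLocalRing.residue A), eval_map_apply, hf0] at h1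
    simp at h1
  refine ⟨(f.map (IsLocalRing.residue A)).roots.toFinset, fun τ hτ => ?_⟩
  have hu : IsUnit (f.eval τ) := by
    rw [Multiset.mem_toFinset, mem_roots hfne, IsRoot.def, eval_map_apply] at hτ
    rwa [← IsLocalRing.residue_ne_zero_iff_isUnit]
  refine h0.trans (sup_le le_sup_left ?_)
  rw [Ideal.span_le]
  rintro _ ⟨i, rfl⟩
  change (v i).eval 0 ∈ Q ⊔ Ideal.span (Set.range fun k => (v k).eval τ)
  rw [← Ideal.unit_mul_mem_iff_mem _ hu]
  set R := Q ⊔ Ideal.span (Set.range fun k => (v k).eval τ) with hR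
  have h1 : ∀ k, ∑ j, (D k j).eval τ * (v j).eval 0 ∈ R := by
    intro k
    have a : (v k).eval τ ∈ R := Submodule.mem_sup_right (Ideal.subset_span ⟨k, rfl⟩)
    have b := R.sub_mem a (Submodule.mem_sup_left (hD τ k))
    simpa using b
  have h2 : f.eval τ * (v i).eval 0 =
      ∑ k, (D.map (eval τ)).adjugate i k * ∑ j, (D k j).eval τ * (v j).eval 0 := by
    rw [hdet]
    have := congrFun (congrArg (fun M => Matrix.mulVec M (fun j => (v j).eval 0))
      (Matrix.adjugate_mul (D.map (eval τ)))) i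
    simp only [← Matrix.mulVec_mulVec, Matrix.smul_mulVec, Matrix.one_mulVec, Pi.smul_apply,
      smul_eq_mul] at this
    rw [← this]
    rfl
  rw [h2]
  exact Ideal.sum_mem _ fun k _ => Ideal.mul_mem_left _ _ (h1 k)

variable {s : ℕ} (J : Fin s → Ideal A)

/-- The ideal `(h_1, …, h_p) I^{d-1}`, read as zero when `d = 0`. -/
def redu (I : Ideal A) : (d : ℕ) → {p : ℕ} → (l : Fin p → Fin s → A) → Ideal A
  | 0, _, _ => ⊥
  | d+1, _, l => Ideal.span (Set.range fun t => ∏ j : Fin s, l t j) * I ^ d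

lemma line_open (I : Ideal A) (hI : I = ∏ j, J j) (d p : ℕ) (Q : Ideal A)
    (hfin : qlen Q (I ^ d) ≠ ⊤) (l l' : Fin p → Fin s → A) (hl : ∀ t j, l t j ∈ J j)
    (hl' : ∀ t j, l' t j ∈ J j) (h : I ^ d ≤ Q ⊔ redu I d l) :
    ∃ F : Finset (IsLocalRing.ResidueField A), ∀ τ : A, IsLocalRing.residue A τ ∉ F →
      I ^ d ≤ Q ⊔ redu I d (fun t j => l t j + τ * (l' t j - l t j)) := by
  classical
  cases d with
  | zero => exact ⟨∅, fun τ _ => h⟩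
  | succ d =>
    simp only [redu] at h ⊢
    have hprod : ∀ t, ∏ j, l t j ∈ I := fun t => hI ▸ Ideal.prod_mem_prod fun j _ => hl t j
    obtain ⟨T, hTS, hT⟩ := compact_aux hfin
      ((Set.range fun t => ∏ j : Fin s, l t j) * ((I ^ d : Ideal A) : Set A))
      (by
        rw [← Ideal.span_mul_span', Ideal.span_eq]
        exact h)
      (by
        rintro _ ⟨_, ⟨t, rfl⟩, r, hr, rfl⟩
        rw [pow_succ']
        exact Ideal.mul_mem_mul (hprod t) hr)
    have hx : ∀ x : T, ∃ t, ∃ r ∈ I ^ d, (∏ j, l t j) * r = x := by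
      rintro ⟨x, hx⟩
      obtain ⟨_, ⟨t, rfl⟩, r, hr, rfl⟩ := hTS hx
      exact ⟨t, r, hr, rfl⟩
    choose t r hr hx using hx
    let v : T → A[X] := fun x => (∏ j, (C (l (t x) j) + X * C (l' (t x) j - l (t x) j))) * C (r x)
    have hev : ∀ τ x, (v x).eval τ =
        (∏ j, (l (t x) j + τ * (l' (t x) j - l (t x) j))) * r x := by
      intro τ x
      simp [v, eval_prod]
    obtain ⟨F, hF⟩ := open_line Q (I ^ (d+1)) v
      (by
        intro x e
        have : v x ∈ (I ^ (d+1)).map (C : A →+* A[X]) := by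
          rw [pow_succ', Ideal.map_mul]
          refine Ideal.mul_mem_mul ?_ (Ideal.mem_map_of_mem _ (hr x))
          rw [hI, ← Ideal.mapHom_apply, map_prod]
          refine Ideal.prod_mem_prod fun j _ => ?_
          exact Ideal.add_mem _ (Ideal.mem_map_of_mem _ (hl _ _)) (Ideal.mul_mem_left _ _
            (Ideal.mem_map_of_mem _ (Ideal.sub_mem _ (hl' _ _) (hl _ _))))
        exact Ideal.mem_map_C_iff.mp this e)
      (by
        convert hT using 3
        ext y
        simp [hev, hx])
    refine ⟨F, fun τ hτ => (hF τ hτ).trans (sup_le_sup_left ?_ _)⟩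
    rw [Ideal.span_le]
    rintro _ ⟨x, rfl⟩
    change (v x).eval τ ∈ _
    rw [hev]
    exact Ideal.mul_mem_mul (Ideal.subset_span ⟨t x, rfl⟩) (hr x)

variable [Infinite (IsLocalRing.ResidueField A)]

lemma common (I : Ideal A) (hI : I = ∏ j, J j) (d p : ℕ) {ι : Type*} (Q : ι → Ideal A)
    (S : Finset ι)
    (hfin : ∀ k ∈ S, qlen (Q k) (I ^ d) ≠ ⊤)
    (hex : ∀ k ∈ S, ∃ l : Fin p → Fin s → A, (∀ t j, l t j ∈ J j) ∧ I ^ d ≤ Q k ⊔ redu I d l) :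
    ∃ l : Fin p → Fin s → A, (∀ t j, l t j ∈ J j) ∧ ∀ k ∈ S, I ^ d ≤ Q k ⊔ redu I d l := by
  classical
  induction S using Finset.induction_on with
  | empty => exact ⟨fun _ _ => 0, fun _ _ => Ideal.zero_mem _, by simp⟩
  | insert k0 S hk0 ih =>
    obtain ⟨l, hl, hlS⟩ := ih (fun k hk => hfin k (Finset.mem_insert_of_mem hk))
      (fun k hk => hex k (Finset.mem_insert_of_mem hk))
    obtain ⟨l', hl', hlk⟩ := hex k0 (Finset.mem_insert_self _ _)
    obtain ⟨F', hF'⟩ := line_open J I hI d p (Q k0) (hfin _ (Finset.mem_insert_self _ _)) l' l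
      hl' hl hlk
    have := fun k : S => line_open J I hI d p (Q k)
      (hfin _ (Finset.mem_insert_of_mem k.2)) l l' hl hl' (hlS k k.2)
    choose F hF using this
    obtain ⟨a, ha⟩ := Infinite.exists_notMem_finset
      ((Finset.univ.biUnion F) ∪ F'.image (fun x => 1 - x))
    obtain ⟨τ, rfl⟩ := IsLocalRing.residue_surjective a
    simp only [Finset.mem_union, Finset.mem_biUnion, Finset.mem_univ, true_and, Finset.mem_image,
      not_or, not_exists, not_and] at ha
    refine ⟨fun t j => l t j + τ * (l' t j - l t j), fun t j => Ideal.add_mem _ (hl _ _)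
      (Ideal.mul_mem_left _ _ (Ideal.sub_mem _ (hl' _ _) (hl _ _))), ?_⟩
    intro k hk
    rcases Finset.mem_insert.mp hk with rfl | hk
    · have := hF' (1 - τ) (fun h => ha.2 _ h (by simp))
      convert this using 3
      funext t j
      ring
    · exact hF ⟨k, hk⟩ τ (ha.1 ⟨k, hk⟩)

lemma prod_eq_span : ∏ j, J j =
    Ideal.span {x | ∃ l : Fin s → A, (∀ j, l j ∈ J j) ∧ x = ∏ j, l j} := by
  apply le_antisymm
  · have := Ideal.prod_span Finset.univ (fun j => (J j : Set A))
    simp only [Ideal.span_eq] at this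
    rw [this]
    apply Ideal.span_mono
    intro x hx
    rw [Set.mem_finsetProd] at hx
    obtain ⟨g, hg, rfl⟩ := hx
    exact ⟨g, fun j => hg (Finset.mem_univ j), rfl⟩
  · rw [Ideal.span_le]
    rintro _ ⟨l, hl, rfl⟩
    exact Ideal.prod_mem_prod fun j _ => hl j

lemma main (I : Ideal A) (hI : I = ∏ j, J j) (d p : ℕ) (Q : Ideal A)
    (h : qlen Q (I ^ d) < ((d + p).choose d : ℕ)) :
    ∃ l : Fin p → Fin s → A, (∀ t j, l t j ∈ J j) ∧ I ^ d ≤ Q ⊔ redu I d l := by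
  induction d generalizing p Q with
  | zero =>
    refine ⟨fun _ _ => 0, fun _ _ => Ideal.zero_mem _, (qlen_lt_one ?_).trans le_sup_left⟩
    simpa using h
  | succ d ihd =>
    induction p generalizing Q with
    | zero =>
      refine ⟨fun _ _ => 0, fun _ _ => Ideal.zero_mem _, (qlen_lt_one ?_).trans le_sup_left⟩
      simpa using h
    | succ p ihp =>
      by_cases hc : ∃ l0 : Fin s → A, (∀ j, l0 j ∈ J j) ∧
          qlen (Q ⊔ Ideal.span {∏ j, l0 j} * I ^ d) (I ^ (d+1)) < ((d + 1 + p).choose (d+1) : ℕ)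
      · obtain ⟨l0, hl0, hc⟩ := hc
        obtain ⟨l, hl, hle⟩ := ihp _ hc
        refine ⟨Fin.cons l0 l, fun t => Fin.cases hl0 hl t, hle.trans ?_⟩
        rw [sup_assoc]
        refine sup_le_sup_left ?_ _
        simp only [redu]
        refine sup_le (Ideal.mul_mono_left ?_) (Ideal.mul_mono_left ?_)
        · rw [Ideal.span_singleton_le_iff_mem]
          exact Ideal.subset_span ⟨0, by simp⟩
        · apply Ideal.span_mono
          rintro _ ⟨t, rfl⟩
          exact ⟨t.succ, by simp⟩
      · push Not at hc
        have hfin : qlen Q (I ^ (d+1)) ≠ ⊤ := ne_top_of_lt h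
        have hprod : ∀ l0 : Fin s → A, (∀ j, l0 j ∈ J j) → ∏ j, l0 j ∈ I := fun l0 hl0 =>
          hI ▸ Ideal.prod_mem_prod fun j _ => hl0 j
        have hlt : ∀ l0 : Fin s → A, (∀ j, l0 j ∈ J j) →
            qlen (colonEl Q (∏ j, l0 j)) (I ^ d) < ((d + (p+1)).choose d : ℕ) := by
          intro l0 hl0
          have h1 := hc l0 hl0
          rw [← qlen_mul]
          have h2 := qlen_add Q (I ^ (d+1)) (Ideal.span {∏ j, l0 j} * I ^ d) (by
            rw [pow_succ']
            exact Ideal.mul_mono_left ((Ideal.span_singleton_le_iff_mem _).mpr (hprod l0 hl0)))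
          by_contra h3
          push Not at h3
          have h4 := add_le_add h3 h1
          rw [← h2] at h4
          refine absurd h (not_lt.mpr (le_trans (le_of_eq ?_) h4))
          have : d + 1 + (p + 1) = (d + (p+1)) + 1 := by ring
          rw [this, Nat.choose_succ_succ, show d + 1 + p = d + (p+1) by ring]
          push_cast
          rfl
        obtain ⟨T, hTS, hT⟩ := compact_aux hfin
          ({x | ∃ l : Fin s → A, (∀ j, l j ∈ J j) ∧ x = ∏ j, l j} * ((I ^ d : Ideal A) : Set A))
          (by
            rw [← Ideal.span_mul_span', Ideal.span_eq, ← prod_eq_span, ← hI, pow_succ']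
            exact le_sup_right)
          (by
            rintro _ ⟨_, ⟨l, hl, rfl⟩, r, hr, rfl⟩
            rw [pow_succ']
            exact Ideal.mul_mem_mul (hprod l hl) hr)
        have hx : ∀ x : T, ∃ l : Fin s → A, (∀ j, l j ∈ J j) ∧
            ∃ r ∈ I ^ d, (∏ j, l j) * r = x := by
          rintro ⟨x, hx⟩
          obtain ⟨_, ⟨l, hl, rfl⟩, r, hr, rfl⟩ := hTS hx
          exact ⟨l, hl, r, hr, rfl⟩
        choose m hm r hr hx using hx
        obtain ⟨l, hl, hlT⟩ := common J I hI d (p+1) (fun x : T => colonEl Q (∏ j, m x j))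
          Finset.univ (fun x _ => ne_top_of_lt (hlt _ (hm x)))
          (fun x _ => ihd (p+1) _ (hlt _ (hm x)))
        refine ⟨l, hl, hT.trans (sup_le le_sup_left ?_)⟩
        rw [Ideal.span_le]
        intro x hxT
        have h1 := hlT ⟨x, hxT⟩ (Finset.mem_univ _) (hr ⟨x, hxT⟩)
        obtain ⟨q, hq, y, hy, hqy⟩ := Submodule.mem_sup.mp h1
        have h2 := hx ⟨x, hxT⟩
        simp only at h2
        rw [← hqy, mul_add] at h2
        rw [← h2]
        refine Submodule.add_mem_sup (mem_colonEl.mp hq) ?_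
        cases d with
        | zero =>
          simp only [redu, Submodule.mem_bot] at hy
          rw [hy, mul_zero]
          exact Ideal.zero_mem _
        | succ d =>
          simp only [redu] at hy ⊢
          rw [pow_succ', mul_left_comm]
          exact Ideal.mul_mem_mul (hprod _ (hm _)) hy

lemma qlen_le_card (X : Ideal A) (G : Finset A) (hG : Ideal.span (G : Set A) = X) :
    qlen (IsLocalRing.maximalIdeal A * X) X ≤ G.card := by
  classical
  let m := IsLocalRing.maximalIdeal A
  let Q := m * X
  let M := Submodule.map Q.mkQ X
  have hmem : ∀ g : G, (g : A) ∈ X := fun g => hG ▸ Ideal.subset_span g.2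
  let φ : (G → A) →ₗ[A] (A ⧸ Q) := Fintype.linearCombination A (fun g : G => Q.mkQ g)
  let k : Submodule A (G → A) := Submodule.pi Set.univ (fun _ => m)
  have hk : k ≤ LinearMap.ker φ := by
    intro c hc
    rw [LinearMap.mem_ker, Fintype.linearCombination_apply]
    refine Finset.sum_eq_zero fun g _ => ?_
    rw [← map_smul, Submodule.mkQ_apply, Submodule.Quotient.mk_eq_zero]
    exact Ideal.mul_mem_mul (hc g (Set.mem_univ _)) (hmem g)
  let ψ : ((G → A) ⧸ k) →ₗ[A] (A ⧸ Q) := k.liftQ φ hk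
  have hrange : LinearMap.range ψ = M := by
    rw [Submodule.range_liftQ, Fintype.range_linearCombination]
    change _ = Submodule.map Q.mkQ X
    rw [← hG, Ideal.span, Submodule.map_span]
    congr 1
    ext y
    simp
  have h1 : Module.length A M ≤ Module.length A ((G → A) ⧸ k) := by
    rw [← hrange]
    exact Module.length_le_of_surjective ψ.rangeRestrict ψ.surjective_rangeRestrict
  refine h1.trans (le_of_eq ?_)
  rw [(Submodule.quotientPi (fun _ : G => (m : Submodule A A))).length_eq, Module.length_pi]
  have : IsSimpleModule A (A ⧸ m) := by
    rw [isSimpleModule_iff_isCoatom]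
    exact (IsLocalRing.maximalIdeal.isMaximal A).out
  rw [Module.length_eq_one]
  simp

end

end ESO

/-- **O'Carroll's theorem on complete reductions.**  Let `(A,m)` be a local ring with
infinite residue field, `I = I_1 ⋯ I_s` a product of ideals, and `i, p` positive
integers.  If `I^i` is finitely generated with minimal number of generators
`< C(i+p, i)`, then there are elements `h_t = l_{t,1}⋯l_{t,s}` with `l_{t,j} ∈ I_j`
such that `I^i = (h_1, …, h_p)·I^{i-1}`. -/
theorem eakin_sathaye_ocarroll
    {A : Type*} [CommRing A] [IsLocalRing A]
    [Infinite (IsLocalRing.ResidueField A)]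
    (s : ℕ) (J : Fin s → Ideal A) (I : Ideal A) (hI : I = ∏ j : Fin s, J j)
    (i p : ℕ) (hi : 0 < i) (hp : 0 < p)
    (hv : ∃ G : Finset A, Ideal.span (G : Set A) = I ^ i ∧ G.card < (i + p).choose i) :
    ∃ l : Fin p → Fin s → A, (∀ t j, l t j ∈ J j) ∧
      I ^ i = Ideal.span (Set.range fun t => ∏ j : Fin s, l t j) * I ^ (i - 1) := by
  obtain ⟨G, hG, hcard⟩ := hv
  obtain ⟨l, hl, h⟩ := ESO.main J I hI i p (IsLocalRing.maximalIdeal A * I ^ i)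
    ((ESO.qlen_le_card _ G hG).trans_lt (by exact_mod_cast hcard))
  refine ⟨l, hl, ?_⟩
  obtain ⟨d, rfl⟩ := Nat.exists_eq_succ_of_ne_zero hi.ne'
  simp only [ESO.redu, Nat.succ_eq_add_one, Nat.add_sub_cancel] at h ⊢
  apply le_antisymm
  · refine Submodule.le_of_le_smul_of_le_jacobson_bot (I := IsLocalRing.maximalIdeal A)
      ⟨G, hG⟩ (IsLocalRing.maximalIdeal_le_jacobson _) ?_
    rw [sup_comm]
    exact h
  · rw [pow_succ' I d]
    refine Ideal.mul_mono_left ?_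
    rw [Ideal.span_le]
    rintro _ ⟨t, rfl⟩
    rw [hI]
    exact Ideal.prod_mem_prod fun j _ => hl t j
end

section
/- Let (A,m) be a local ring whose residue field has characteristic 0 (in particular it is infinite), let J be an ideal of A, let b be a positive integer and set I = J^b, and let i and p be positive integers such that I^i is finitely generated and v(I^i) < C(i+p, i). Then there exist elements h_1,…,h_p, each of the form h_t = l_t^b with l_t ∈ J, such that I^i = (h_1,…,h_p)·I^{i−1}. -/
open Polynomial in
lemma es_perturb {A W : Type*} [CommRing A] [IsLocalRing A] [AddCommGroup W] [Module A W]
    (φ : A →ₗ[A] W) (J : Ideal A) (b i p : ℕ) (l d : Fin p → A)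
    (hl : ∀ t, l t ∈ J) (hd : ∀ t, d t ∈ J)
    (hfg : (Submodule.map φ ((J ^ b) ^ (i + 1))).FG)
    (h : Submodule.map φ ((J ^ b) ^ (i + 1)) ≤
      Submodule.map φ (Ideal.span (Set.range fun t => l t ^ b) * (J ^ b) ^ i)) :
    Set.Finite (IsLocalRing.residue A '' {s | ¬ Submodule.map φ ((J ^ b) ^ (i + 1)) ≤
      Submodule.map φ (Ideal.span (Set.range fun t => (l t + s * d t) ^ b) * (J ^ b) ^ i)}) := by
  classical
  set N := Submodule.map φ ((J ^ b) ^ (i + 1)) with hN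
  set S : Set W := {w | ∃ t, ∃ y ∈ (J ^ b) ^ i, w = φ (l t ^ b * y)} with hS
  have hNS : N = Submodule.span A S := by
    apply le_antisymm
    · refine h.trans ?_
      rw [Submodule.map_le_iff_le_comap, Ideal.mul_le]
      intro r hr y hy
      have : r ∈ Submodule.comap (LinearMap.mulRight A y)
          (Submodule.comap φ (Submodule.span A S)) := by
        refine (Ideal.span_le (I := Submodule.comap (LinearMap.mulRight A y)
          (Submodule.comap φ (Submodule.span A S)))).2 ?_ hr
        rintro _ ⟨t, rfl⟩
        exact Submodule.subset_span ⟨t, y, hy, rfl⟩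
      exact this
    · rw [Submodule.span_le]
      rintro _ ⟨t, y, hy, rfl⟩
      refine Submodule.mem_map_of_mem ?_
      rw [pow_succ']
      exact Ideal.mul_mem_mul (Ideal.pow_mem_pow (hl t) b) hy
  have hfg2 := hfg
  rw [hNS, Submodule.fg_span_iff_fg_span_finset_subset] at hfg2
  obtain ⟨u, huS, hu⟩ := hfg2
  rw [← hNS] at hu
  have hex : ∀ w : u, ∃ t, ∃ y ∈ (J ^ b) ^ i, (w : W) = φ (l t ^ b * y) := fun w => huS w.2
  choose t y hy hw using hex
  let q : u → A[X] := fun w => (C (l (t w)) + X * C (d (t w))) ^ b * C (y w)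
  have hq : ∀ w n, φ ((q w).coeff n) ∈ N := by
    intro w n
    refine Submodule.mem_map_of_mem ?_
    refine Ideal.mem_map_C_iff.1 ?_ n
    rw [pow_succ', Ideal.map_mul, Ideal.map_pow]
    refine Ideal.mul_mem_mul (Ideal.pow_mem_pow ?_ b) (Ideal.mem_map_of_mem _ (hy w))
    exact Ideal.add_mem _ (Ideal.mem_map_of_mem _ (hl _))
      (Ideal.mul_mem_left _ _ (Ideal.mem_map_of_mem _ (hd _)))
  have hc : ∀ w n, ∃ c : u → A, ∑ k, c k • (k : W) = φ ((q w).coeff n) := by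
    intro w n
    have := hq w n
    rw [hu] at this
    have h2 : (u : Set W) = Set.range (Subtype.val : u → W) := by simp
    rw [h2] at this
    exact (Submodule.mem_span_range_iff_exists_fun A).1 this
  choose a ha using hc
  let M : Matrix u u A[X] := fun w k =>
    (if w = k then 1 else 0) + X * ∑ n ∈ Finset.range (q w).natDegree, C (a w (n+1) k) * X ^ n
  have hM0 : (M.det).eval 0 = 1 := by
    have : M.map (Polynomial.evalRingHom 0) = 1 := by
      ext w k
      rw [Matrix.map_apply, Matrix.one_apply]
      simp only [M]
      split_ifs <;> simp
    have h3 := RingHom.map_det (Polynomial.evalRingHom (0 : A)) M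
    rw [RingHom.mapMatrix_apply, this, Matrix.det_one] at h3
    exact h3
  have hq0 : ∀ w, φ ((q w).coeff 0) = w := by
    intro w
    rw [hw w]; congr 1
    rw [Polynomial.coeff_zero_eq_eval_zero]; simp [q]
  have hMs : ∀ s w, ∑ k, (M w k).eval s • (k : W) = φ ((q w).eval s) := by
    intro s w
    rw [Polynomial.eval_eq_sum_range, Finset.sum_range_succ', map_add, map_sum]
    simp only [M, eval_add, add_smul, Finset.sum_add_distrib]
    rw [add_comm]
    congr 1
    · simp only [eval_mul, eval_X, eval_finsetSum, eval_C, eval_pow, Finset.mul_sum,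
        Finset.sum_smul]
      rw [Finset.sum_comm]
      refine Finset.sum_congr rfl fun n _ => ?_
      rw [mul_comm ((q w).coeff (n+1)), ← smul_eq_mul, map_smul, ← ha, Finset.smul_sum]
      refine Finset.sum_congr rfl fun k _ => ?_
      rw [smul_smul]; congr 1; ring
    · rw [pow_zero, mul_one, hq0]
      rw [Finset.sum_eq_single w]
      · simp
      · intro k _ hk; simp [hk.symm]
      · simp
  have hF : (M.det.map (IsLocalRing.residue A)) ≠ 0 := by
    intro h0
    have : (M.det.map (IsLocalRing.residue A)).eval (IsLocalRing.residue A 0) = 1 := by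
      rw [Polynomial.eval_map_apply, hM0, map_one]
    rw [h0] at this
    simp at this
  refine (M.det.map (IsLocalRing.residue A)).rootSet_finite (IsLocalRing.ResidueField A) |>.subset ?_
  rintro _ ⟨s, hs, rfl⟩
  rw [Polynomial.mem_rootSet]
  refine ⟨hF, ?_⟩
  by_contra hne
  apply hs
  have hne' : IsUnit (M.det.eval s) := by
    rw [← IsLocalRing.residue_ne_zero_iff_isUnit]
    simpa [Polynomial.eval_map_apply] using hne
  rw [hu, Submodule.span_le]
  intro k hk
  set T := Submodule.map φ (Ideal.span (Set.range fun t => (l t + s * d t) ^ b) * (J ^ b) ^ i)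
  have hqT : ∀ w, φ ((q w).eval s) ∈ T := by
    intro w
    refine Submodule.mem_map_of_mem ?_
    simp only [q, eval_mul, eval_pow, eval_add, eval_C, eval_X]
    exact Ideal.mul_mem_mul (Ideal.subset_span ⟨t w, rfl⟩) (hy w)
  let Ms : Matrix u u A := M.map (Polynomial.evalRingHom s)
  have hdet : Ms.det = M.det.eval s := (RingHom.map_det (Polynomial.evalRingHom s) M).symm
  have key : ∑ w, Ms.adjugate ⟨k, hk⟩ w • φ ((q w).eval s) = Ms.det • k := by
    simp_rw [← hMs, Finset.smul_sum, smul_smul]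
    rw [Finset.sum_comm]
    simp_rw [← Finset.sum_smul]
    have : ∀ j, ∑ w, Ms.adjugate ⟨k, hk⟩ w * (M w j).eval s = if ⟨k, hk⟩ = j then Ms.det else 0 := by
      intro j
      have := congrFun (congrFun (Matrix.adjugate_mul Ms) ⟨k, hk⟩) j
      rw [Matrix.mul_apply] at this
      simpa [Matrix.one_apply, Ms] using this
    simp_rw [this, ite_smul, zero_smul]
    simp
  have h5 : Ms.det • k ∈ T := by
    rw [← key]
    exact Submodule.sum_mem _ fun w _ => T.smul_mem _ (hqT w)
  rw [hdet] at h5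
  exact (Submodule.smul_mem_iff_of_isUnit _ hne').1 h5

lemma es_coeff {A : Type*} [CommRing A] (hu : ∀ n : ℕ, 0 < n → IsUnit (n : A)) (S : Ideal A)
    (n : ℕ) (c : ℕ → A) (h : ∀ s : ℕ, ∑ k ∈ Finset.range (n + 1), c k * (s : A) ^ k ∈ S) :
    ∀ k ≤ n, c k ∈ S := by
  let V : Matrix (Fin (n+1)) (Fin (n+1)) A := Matrix.vandermonde fun j => ((j : ℕ) : A)
  have hV : IsUnit V.det := by
    rw [Matrix.det_vandermonde]
    refine (IsUnit.prod_iff).2 fun i _ => (IsUnit.prod_iff).2 fun j hj => ?_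
    have hij : (i : ℕ) < j := by simpa using hj
    rw [← Nat.cast_sub hij.le]
    exact hu _ (by omega)
  have key : ∀ k, ∑ j, V.adjugate k j * (∑ m, V j m * c m) = V.det * c k := by
    intro k
    have : (V.adjugate.mulVec (V.mulVec fun m => c m)) k = (V.det • (1 : Matrix _ _ A)).mulVec (fun m : Fin (n+1) => c m) k := by
      rw [Matrix.mulVec_mulVec, Matrix.adjugate_mul]
    simpa [Matrix.mulVec, dotProduct, Matrix.one_apply] using this
  intro k hk
  have h1 : V.det * c k ∈ S := by
    rw [← key ⟨k, by omega⟩]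
    refine S.sum_mem fun j _ => S.mul_mem_left _ ?_
    have := h j
    rw [Finset.sum_range] at this
    simpa [V, Matrix.vandermonde_apply, mul_comm] using this
  exact (Ideal.unit_mul_mem_iff_mem _ hV).1 h1

lemma es_pow {A : Type*} [CommRing A] (hu : ∀ n : ℕ, 0 < n → IsUnit (n : A)) (J S : Ideal A)
    (b : ℕ) (h : ∀ x ∈ J, x ^ b ∈ S) : J ^ b ≤ S := by
  have main : ∀ k m, k + m = b → ∀ v ∈ J, ∀ z ∈ J ^ k, z * v ^ m ∈ S := by
    intro k
    induction k with
    | zero =>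
      intro m hm v hv z _
      have : m = b := by omega
      subst this
      exact S.mul_mem_left _ (h v hv)
    | succ k ih =>
      intro m hm v hv z hz
      rw [pow_succ] at hz
      refine Submodule.mul_induction_on hz ?_ ?_
      · intro z hz u hu'
        have := es_coeff hu S (m + 1) (fun j => z * (u ^ j * v ^ (m + 1 - j) * ((m+1).choose j : A))) ?_ 1 (by omega)
        · simp only [pow_one, Nat.add_sub_cancel, Nat.choose_one_right] at this
          have h2 : (((m + 1 : ℕ)) : A) * (z * u * v ^ m) ∈ S := by
            convert this using 1; ring
          exact (Ideal.unit_mul_mem_iff_mem _ (hu _ (by omega))).1 h2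
        · intro s
          have := ih (m + 1) (by omega) (s * u + v) (J.add_mem (J.mul_mem_left _ hu') hv) z hz
          rw [add_pow, Finset.mul_sum] at this
          convert this using 2 with j
          rw [mul_pow]; ring
      · intro x y hx hy
        rw [add_mul]; exact S.add_mem hx hy
  intro z hz
  simpa using main b 0 (by omega) 0 J.zero_mem z hz

/-- Line-genericity of a set of tuples in `J`. -/
def ESGen {A : Type*} [CommRing A] [IsLocalRing A] (J : Ideal A) (p : ℕ)
    (S : Set (Fin p → A)) : Prop :=
  ∀ l ∈ S, (∀ t, l t ∈ J) → ∀ d : Fin p → A, (∀ t, d t ∈ J) →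
    Set.Finite (IsLocalRing.residue A '' {s | (fun t => l t + s * d t) ∉ S})

lemma es_gen_inter {A : Type*} [CommRing A] [IsLocalRing A]
    [Infinite (IsLocalRing.ResidueField A)] (J : Ideal A) (p : ℕ) (S T : Set (Fin p → A))
    (hS : ESGen J p S) (hT : ESGen J p T) (l l' : Fin p → A) (hl : ∀ t, l t ∈ J)
    (hl' : ∀ t, l' t ∈ J) (hlS : l ∈ S) (hlT : l' ∈ T) :
    ESGen J p (S ∩ T) ∧ ∃ m : Fin p → A, (∀ t, m t ∈ J) ∧ m ∈ S ∩ T := by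
  constructor
  · intro m hm hmJ d hd
    refine ((hS m hm.1 hmJ d hd).union (hT m hm.2 hmJ d hd)).subset ?_
    rw [← Set.image_union]
    refine Set.image_mono ?_
    intro s hs
    by_contra h
    simp only [Set.mem_union, Set.mem_ofPred_eq, not_or, not_not] at h
    exact hs h
  · have h1 := hS l hlS hl (fun t => l' t - l t) fun t => J.sub_mem (hl' t) (hl t)
    have h2 := hT l' hlT hl' (fun t => l t - l' t) fun t => J.sub_mem (hl t) (hl' t)
    have h3 := h2.image (fun x => 1 - x)
    obtain ⟨x, hx⟩ := (h1.union h3).infinite_compl.nonempty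
    obtain ⟨s, rfl⟩ := IsLocalRing.residue_surjective x
    refine ⟨fun t => l t + s * (l' t - l t), fun t => J.add_mem (hl t)
      (J.mul_mem_left _ (J.sub_mem (hl' t) (hl t))), ?_, ?_⟩
    · by_contra h
      exact hx (Or.inl ⟨s, h, rfl⟩)
    · by_contra h
      refine hx (Or.inr ⟨IsLocalRing.residue A (1 - s), ⟨1 - s, ?_, rfl⟩, by simp⟩)
      have : (fun t => l' t + (1 - s) * (l t - l' t)) = fun t => l t + s * (l' t - l t) := by
        funext t; ring
      simp only [Set.mem_ofPred_eq, this]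
      exact h

lemma es_gen_finset {A ι : Type*} [CommRing A] [IsLocalRing A]
    [Infinite (IsLocalRing.ResidueField A)] (J : Ideal A) (p : ℕ) (S : ι → Set (Fin p → A))
    (hS : ∀ k, ESGen J p (S k)) (hne : ∀ k, ∃ l : Fin p → A, (∀ t, l t ∈ J) ∧ l ∈ S k)
    (F : Finset ι) :
    ESGen J p {l | ∀ k ∈ F, l ∈ S k} ∧
      ∃ m : Fin p → A, (∀ t, m t ∈ J) ∧ ∀ k ∈ F, m ∈ S k := by
  classical
  induction F using Finset.induction_on with
  | empty =>
    refine ⟨?_, fun _ => 0, by simp, by simp⟩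
    intro l _ _ d _
    simp
  | insert k F _ ih =>
    obtain ⟨hG, m, hm, hmS⟩ := ih
    obtain ⟨l, hl, hlS⟩ := hne k
    obtain ⟨h1, m', hm', h2⟩ := es_gen_inter J p _ _ (hS k) hG l m hl hm hlS hmS
    have : {l | ∀ j ∈ insert k F, l ∈ S j} = S k ∩ {l | ∀ j ∈ F, l ∈ S j} := by
      ext l; simp
    rw [this]
    refine ⟨h1, m', hm', ?_⟩
    have h3 : m' ∈ {l | ∀ j ∈ insert k F, l ∈ S j} := by rw [this]; exact h2
    exact h3

lemma es_length {A W : Type*} [CommRing A] [AddCommGroup W] [Module A W]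
    (N K : Submodule A W) (hK : K ≤ N) :
    Module.length A N = Module.length A K + Module.length A (N.map K.mkQ) := by
  refine Module.length_eq_add_of_exact (Submodule.inclusion hK)
    (K.mkQ.submoduleMap N) (Submodule.inclusion_injective hK)
    (LinearMap.submoduleMap_surjective _ _) ?_
  intro x
  constructor
  · intro h
    have h2 : K.mkQ (x : W) = 0 := congrArg Subtype.val h
    rw [Submodule.mkQ_apply, Submodule.Quotient.mk_eq_zero] at h2
    exact ⟨⟨x, h2⟩, rfl⟩
  · rintro ⟨y, rfl⟩
    apply Subtype.ext
    change K.mkQ (y : W) = 0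
    simp

lemma es_zero {A W : Type*} [CommRing A] [AddCommGroup W] [Module A W] (N : Submodule A W)
    (h : Module.length A N < ((1 : ℕ) : ℕ∞)) : N = ⊥ := by
  rw [Nat.cast_one, Order.lt_one_iff, Module.length_eq_zero_iff] at h
  exact (Submodule.subsingleton_iff_eq_bot).1 h

lemma es_fg {A W : Type*} [CommRing A] [AddCommGroup W] [Module A W] (N : Submodule A W) (n : ℕ)
    (h : Module.length A N < (n : ℕ∞)) : N.FG := by
  have h1 : Module.length A N ≠ ⊤ := (h.trans_le le_top).ne
  rw [Module.length_ne_top_iff, isFiniteLength_iff_isNoetherian_isArtinian] at h1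
  have := h1.1
  exact Module.Finite.iff_fg.1 inferInstance

/-- the statement proved by induction -/
def ESClaim.{u} {A : Type u} [CommRing A] (J : Ideal A) (b i p : ℕ) : Prop :=
  ∀ (W : Type u) [AddCommGroup W] [Module A W] (φ : A →ₗ[A] W),
      Module.length A (Submodule.map φ ((J ^ b) ^ (i + 1))) <
        (((i + 1 + p).choose (i + 1) : ℕ) : ℕ∞) →
      ∃ l : Fin p → A, (∀ t, l t ∈ J) ∧ Submodule.map φ ((J ^ b) ^ (i + 1)) ≤
        Submodule.map φ (Ideal.span (Set.range fun t => l t ^ b) * (J ^ b) ^ i)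

/-- Common tuple for finitely many multipliers. -/
lemma es_common.{u} {A : Type u} [CommRing A] [IsLocalRing A]
    [Infinite (IsLocalRing.ResidueField A)] (J : Ideal A) (b i p : ℕ)
    (W : Type u) [AddCommGroup W] [Module A W] (φ : A →ₗ[A] W)
    (ih : ∀ j, i = j + 1 → ESClaim J b j p)
    (h : ∀ x ∈ J, Module.length A (Submodule.map (φ ∘ₗ LinearMap.mulLeft A (x ^ b)) ((J ^ b) ^ i)) <
      (((i + p).choose i : ℕ) : ℕ∞)) (F : Finset J) :
    ∃ l : Fin p → A, (∀ t, l t ∈ J) ∧ ∀ x ∈ F, ∀ y ∈ (J ^ b) ^ i, φ ((x : A) ^ b * y) ∈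
        Submodule.map φ (Ideal.span (Set.range fun t => l t ^ b) * (J ^ b) ^ i) := by
  cases i with
  | zero =>
    refine ⟨fun _ => 0, by simp, ?_⟩
    intro x _ y hy
    have h1 := h x x.2
    simp only [Nat.choose_zero_right] at h1
    have h2 := es_zero _ h1
    have h3 : φ ((x : A) ^ b * y) ∈
        Submodule.map (φ ∘ₗ LinearMap.mulLeft A ((x : A) ^ b)) ((J ^ b) ^ 0) :=
      ⟨y, hy, rfl⟩
    rw [h2, Submodule.mem_bot] at h3
    rw [h3]
    exact Submodule.zero_mem _
  | succ j =>
    obtain ⟨-, m, hm, hmF⟩ := es_gen_finset J p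
      (fun x : J => {l | Submodule.map (φ ∘ₗ LinearMap.mulLeft A ((x : A) ^ b)) ((J ^ b) ^ (j + 1)) ≤
        Submodule.map (φ ∘ₗ LinearMap.mulLeft A ((x : A) ^ b))
          (Ideal.span (Set.range fun t => l t ^ b) * (J ^ b) ^ j)})
      (fun x l hl hlJ d hd => es_perturb _ J b j p l d hlJ hd (es_fg _ _ (h x x.2)) hl)
      (fun x => ih j rfl W _ (h x x.2)) F
    refine ⟨m, hm, ?_⟩
    intro x hx y hy
    obtain ⟨z, hz, hzy⟩ := hmF x hx ⟨y, hy, rfl⟩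
    change φ ((x : A) ^ b * z) = φ ((x : A) ^ b * y) at hzy
    rw [← hzy]
    refine Submodule.mem_map_of_mem ?_
    rw [pow_succ' (J ^ b), ← mul_assoc, mul_comm _ (J ^ b), mul_assoc]
    exact Ideal.mul_mem_mul (Ideal.pow_mem_pow x.2 b) hz

lemma es_step.{u} {A : Type u} [CommRing A] [IsLocalRing A]
    [Infinite (IsLocalRing.ResidueField A)]
    (hu : ∀ n : ℕ, 0 < n → IsUnit (n : A)) (J : Ideal A) (b i p : ℕ)
    (ihp : ESClaim J b i p) (ihi : ∀ j, i = j + 1 → ESClaim J b j (p + 1)) :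
    ESClaim J b i (p + 1) := by
  classical
  intro W _ _ φ hlen
  have hKle : ∀ x ∈ J, Submodule.map (φ ∘ₗ LinearMap.mulLeft A (x ^ b)) ((J ^ b) ^ i) ≤
      Submodule.map φ ((J ^ b) ^ (i + 1)) := by
    intro x hx
    rw [Submodule.map_comp]
    refine Submodule.map_mono ?_
    rintro _ ⟨y, hy, rfl⟩
    rw [pow_succ' (J ^ b)]
    exact Ideal.mul_mem_mul (Ideal.pow_mem_pow hx b) hy
  by_cases hcase : ∃ x ∈ J, Module.length A (Submodule.map
      ((Submodule.map (φ ∘ₗ LinearMap.mulLeft A (x ^ b)) ((J ^ b) ^ i)).mkQ ∘ₗ φ)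
      ((J ^ b) ^ (i + 1))) < (((i + 1 + p).choose (i + 1) : ℕ) : ℕ∞)
  · obtain ⟨x, hx, hxl⟩ := hcase
    obtain ⟨l, hl, hle⟩ := ihp _ _ hxl
    refine ⟨Fin.cons x l, ?_, ?_⟩
    · intro t
      refine Fin.cases ?_ ?_ t
      · simpa using hx
      · simpa using hl
    · rintro _ ⟨y, hy, rfl⟩
      obtain ⟨z, hz, hzy⟩ := hle ⟨y, hy, rfl⟩
      simp only [LinearMap.comp_apply] at hzy
      rw [eq_comm, ← sub_eq_zero, ← map_sub, Submodule.mkQ_apply,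
        Submodule.Quotient.mk_eq_zero] at hzy
      obtain ⟨w, hw, hwe⟩ := hzy
      change φ (x ^ b * w) = φ y - φ z at hwe
      have : φ y = φ (x ^ b * w + z) := by rw [map_add, hwe]; abel
      rw [this]
      refine Submodule.mem_map_of_mem (Ideal.add_mem _ ?_ ?_)
      · exact Ideal.mul_mem_mul (Ideal.subset_span ⟨0, by simp⟩) hw
      · refine Ideal.mul_mono_left (Ideal.span_mono ?_) hz
        rintro _ ⟨t, rfl⟩
        exact ⟨t.succ, by simp⟩
  · push Not at hcase
    have hsmall : ∀ x ∈ J, Module.length A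
        (Submodule.map (φ ∘ₗ LinearMap.mulLeft A (x ^ b)) ((J ^ b) ^ i)) <
        (((i + (p + 1)).choose i : ℕ) : ℕ∞) := by
      intro x hx
      have h1 := es_length _ _ (hKle x hx)
      have h2 := hcase x hx
      rw [← Submodule.map_comp] at h1
      rw [h1] at hlen
      by_contra hcon
      rw [not_lt] at hcon
      have h3 := add_le_add hcon h2
      have h4 : (i + 1 + (p + 1)).choose (i + 1) =
          (i + (p + 1)).choose i + (i + 1 + p).choose (i + 1) := by
        have e1 : i + 1 + (p + 1) = (i + (p + 1)) + 1 := by ring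
        have e2 : i + 1 + p = i + (p + 1) := by ring
        rw [e1, e2, Nat.choose_succ_succ]
      rw [h4, Nat.cast_add] at hlen
      exact absurd hlen (not_lt.2 h3)
    set S : Set W := {w | ∃ x : J, ∃ y ∈ (J ^ b) ^ i, w = φ ((x : A) ^ b * y)} with hS
    have hNS : Submodule.map φ ((J ^ b) ^ (i + 1)) = Submodule.span A S := by
      apply le_antisymm
      · rw [Submodule.map_le_iff_le_comap, pow_succ' (J ^ b), Ideal.mul_le]
        intro r hr y hy
        exact es_pow hu J (Submodule.comap (LinearMap.mulRight A y)
          (Submodule.comap φ (Submodule.span A S))) b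
          (fun x hx => Submodule.subset_span ⟨⟨x, hx⟩, y, hy, rfl⟩) hr
      · rw [Submodule.span_le]
        rintro _ ⟨x, y, hy, rfl⟩
        exact hKle x x.2 ⟨y, hy, rfl⟩
    have hfg := es_fg _ _ hlen
    rw [hNS, Submodule.fg_span_iff_fg_span_finset_subset] at hfg
    obtain ⟨u, huS, hu'⟩ := hfg
    have hex : ∀ w : u, ∃ x : J, ∃ y ∈ (J ^ b) ^ i, (w : W) = φ ((x : A) ^ b * y) :=
      fun w => huS w.2
    choose x y hy hw using hex
    obtain ⟨l, hl, hlF⟩ := es_common J b i (p + 1) W φ ihi hsmall (Finset.univ.image x)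
    refine ⟨l, hl, ?_⟩
    rw [hNS, hu', Submodule.span_le]
    intro w hwu
    have := hlF (x ⟨w, hwu⟩) (by simp) (y ⟨w, hwu⟩) (hy _)
    rw [← hw] at this
    exact this

lemma es_claim.{u} {A : Type u} [CommRing A] [IsLocalRing A]
    [Infinite (IsLocalRing.ResidueField A)]
    (hu : ∀ n : ℕ, 0 < n → IsUnit (n : A)) (J : Ideal A) (b i : ℕ) :
    ∀ p, ESClaim J b i p := by
  have base : ∀ i, ESClaim J b i 0 := by
    intro i W _ _ φ h
    simp only [add_zero, Nat.choose_self] at h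
    rw [es_zero _ h]
    exact ⟨fun _ => 0, by simp, bot_le⟩
  induction i with
  | zero =>
    intro p
    induction p with
    | zero => exact base 0
    | succ p ihp => exact es_step hu J b 0 p ihp (by omega)
  | succ i ihi =>
    intro p
    induction p with
    | zero => exact base _
    | succ p ihp =>
      refine es_step hu J b (i + 1) p ihp ?_
      intro j hj
      obtain rfl : i = j := by omega
      exact ihi _

lemma es_length_le {A : Type*} [CommRing A] [IsLocalRing A] (N : Ideal A) (G : Finset A)
    (hG : Ideal.span (G : Set A) = N) :
    Module.length A (Submodule.map (IsLocalRing.maximalIdeal A * N).mkQ N) ≤ (G.card : ℕ∞) := by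
  classical
  set m := IsLocalRing.maximalIdeal A
  set Q := m * N
  have hGN : ∀ g : G, (g : A) ∈ N := fun g => hG ▸ Ideal.subset_span g.2
  let f : G → (A ⧸ m) →ₗ[A] (A ⧸ Q) := fun g =>
    Submodule.liftQ m (Q.mkQ ∘ₗ LinearMap.mulRight A (g : A)) (by
      intro r hr
      simp only [LinearMap.mem_ker, LinearMap.comp_apply, LinearMap.mulRight_apply,
        Submodule.mkQ_apply, Submodule.Quotient.mk_eq_zero]
      exact Ideal.mul_mem_mul hr (hGN g))
  let F : (G → A ⧸ m) →ₗ[A] (A ⧸ Q) := LinearMap.lsum A (fun _ => A ⧸ m) A f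
  have hF : Submodule.map Q.mkQ N ≤ LinearMap.range F := by
    rw [Submodule.map_le_iff_le_comap, ← hG]
    refine Ideal.span_le.2 ?_
    intro g hg
    refine ⟨Pi.single ⟨g, hg⟩ (Submodule.Quotient.mk 1), ?_⟩
    have h1 : F (Pi.single ⟨g, hg⟩ (Submodule.Quotient.mk 1)) =
        f ⟨g, hg⟩ (Submodule.Quotient.mk 1) := by
      simp only [F, LinearMap.lsum_apply, LinearMap.sum_apply, LinearMap.comp_apply,
        LinearMap.proj_apply]
      rw [Finset.sum_eq_single ⟨g, hg⟩]
      · rw [Pi.single_eq_same]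
      · intro k _ hk
        rw [Pi.single_eq_of_ne hk, map_zero]
      · simp
    rw [h1]
    change Q.mkQ (1 * g) = Q.mkQ g
    rw [one_mul]
  have hsimple : IsSimpleModule A (A ⧸ m) :=
    isSimpleModule_iff_isCoatom.2 (IsLocalRing.maximalIdeal.isMaximal A).out
  calc Module.length A (Submodule.map Q.mkQ N)
      ≤ Module.length A (LinearMap.range F) :=
        Module.length_le_of_injective (Submodule.inclusion hF) (Submodule.inclusion_injective hF)
    _ ≤ Module.length A (G → A ⧸ m) :=
        Module.length_le_of_surjective F.rangeRestrict F.surjective_rangeRestrict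
    _ = (G.card : ℕ∞) := by
        rw [Module.length_pi]
        simp

/-- **Eakin–Sathaye for powers (char 0 residue field).**  Let `(A,m)` be a local ring
whose residue field has characteristic `0`, `I = J^b` with `b > 0`, and `i, p` positive
integers.  If `I^i` is finitely generated with minimal number of generators
`< C(i+p, i)`, then there are elements `h_t = l_t^b` with `l_t ∈ J` such that
`I^i = (h_1, …, h_p)·I^{i-1}`. -/
theorem eakin_sathaye_powers
    {A : Type*} [CommRing A] [IsLocalRing A]
    [CharZero (IsLocalRing.ResidueField A)]
    (J : Ideal A) (b : ℕ) (hb : 0 < b) (I : Ideal A) (hI : I = J ^ b)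
    (i p : ℕ) (hi : 0 < i) (hp : 0 < p)
    (hv : ∃ G : Finset A, Ideal.span (G : Set A) = I ^ i ∧ G.card < (i + p).choose i) :
    ∃ l : Fin p → A, (∀ t, l t ∈ J) ∧
      I ^ i = Ideal.span (Set.range fun t => l t ^ b) * I ^ (i - 1) := by
  subst hI
  obtain ⟨j, rfl⟩ : ∃ j, i = j + 1 := ⟨i - 1, by omega⟩
  obtain ⟨G, hG, hcard⟩ := hv
  have : Infinite (IsLocalRing.ResidueField A) := Infinite.of_injective _ Nat.cast_injective
  have hu : ∀ n : ℕ, 0 < n → IsUnit (n : A) := by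
    intro n hn
    rw [← IsLocalRing.residue_ne_zero_iff_isUnit, map_natCast]
    exact Nat.cast_ne_zero.2 hn.ne'
  have hlen := (es_length_le _ G hG).trans_lt (Nat.cast_lt.2 hcard)
  obtain ⟨l, hl, hle⟩ := es_claim hu J b j p _ _ hlen
  refine ⟨l, hl, ?_⟩
  rw [Nat.add_sub_cancel]
  have hsub : Ideal.span (Set.range fun t => l t ^ b) * (J ^ b) ^ j ≤ (J ^ b) ^ (j + 1) := by
    rw [pow_succ' (J ^ b)]
    refine Ideal.mul_mono_left (Ideal.span_le.2 ?_)
    rintro _ ⟨t, rfl⟩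
    exact Ideal.pow_mem_pow (hl t) b
  refine le_antisymm ?_ hsub
  refine Submodule.le_of_le_smul_of_le_jacobson_bot (I := IsLocalRing.maximalIdeal A)
    ⟨G, hG⟩ (IsLocalRing.maximalIdeal_le_jacobson _) ?_
  rw [Submodule.map_le_iff_le_comap, Submodule.comap_map_mkQ, sup_comm] at hle
  exact hle
end

section
/- Let (A,m) be a local ring whose residue field has characteristic 0 (in particular it is infinite), let I_1,…,I_s be ideals of A and set I = I_1·(I_1+I_2)⋯(I_1+⋯+I_s), and let i and p be positive integers such that I^i is finitely generated and v(I^i) < C(i+p, i). Then there exist elements h_1,…,h_p, each of the form h_t = l_{t,1}·(l_{t,1}+l_{t,2})⋯(l_{t,1}+⋯+l_{t,s}) with l_{t,j} ∈ I_j, such that I^i = (h_1,…,h_p)·I^{i−1}. -/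
open Polynomial

namespace ES

noncomputable def len {A : Type*} [CommRing A] {M : Type*} [AddCommGroup M] [Module A M]
    (N Q : Submodule A M) : ℕ∞ := Module.length A (N.map Q.mkQ)

section
variable {A : Type*} [CommRing A] {M : Type*} [AddCommGroup M] [Module A M]
  {M' : Type*} [AddCommGroup M'] [Module A M']

lemma len_ker (f : M →ₗ[A] M') (N : Submodule A M) :
    Module.length A (N.map f) = len N (LinearMap.ker f) := by
  have h : (N.map (LinearMap.ker f).mkQ).map ((LinearMap.ker f).liftQ f le_rfl) = N.map f := by
    rw [← Submodule.map_comp, Submodule.liftQ_mkQ]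
  have hinj : Function.Injective ((LinearMap.ker f).liftQ f le_rfl) := by
    rw [← LinearMap.ker_eq_bot]
    exact Submodule.ker_liftQ_eq_bot _ _ _ le_rfl
  rw [← h, len]
  exact (Submodule.equivMapOfInjective _ hinj _).symm.length_eq

lemma length_sub (X N : Submodule A M) (h : X ≤ N) :
    Module.length A N = Module.length A X + len N X := by
  refine Module.length_eq_add_of_exact (Submodule.inclusion h)
    ((X.mkQ.restrict (p := N) (q := N.map X.mkQ) (fun x hx => Submodule.mem_map_of_mem hx)))
    (Submodule.inclusion_injective h) ?_ ?_
  · rintro ⟨y, x, hx, rfl⟩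
    exact ⟨⟨x, hx⟩, rfl⟩
  · rintro ⟨x, hx⟩
    constructor
    · intro h0
      have : X.mkQ x = 0 := congrArg Subtype.val h0
      refine ⟨⟨x, ?_⟩, rfl⟩
      simpa using this
    · rintro ⟨⟨y, hy⟩, h1⟩
      obtain rfl : y = x := congrArg Subtype.val h1
      apply Subtype.ext
      change X.mkQ y = 0
      simpa using hy

lemma len_add (X N Q : Submodule A M) (h : X ≤ N) :
    len N Q = len X Q + len N (Q ⊔ X) := by
  have h1 := length_sub (X.map Q.mkQ) (N.map Q.mkQ) (Submodule.map_mono h)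
  have h2 := len_ker ((X.map Q.mkQ).mkQ ∘ₗ Q.mkQ) N
  have h3 : LinearMap.ker ((X.map Q.mkQ).mkQ ∘ₗ Q.mkQ) = Q ⊔ X := by
    rw [LinearMap.ker_comp, Submodule.ker_mkQ, Submodule.comap_map_mkQ]
  rw [h3, Submodule.map_comp] at h2
  rw [← h2]
  exact h1

lemma len_lt_one (N Q : Submodule A M) (h : len N Q < 1) : N ≤ Q := by
  have h0 : Module.length A (N.map Q.mkQ) = 0 := by simpa [len] using Order.lt_one_iff.mp h
  rw [Module.length_eq_zero_iff, Submodule.subsingleton_iff_eq_bot] at h0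
  intro x hx
  have : Q.mkQ x ∈ N.map Q.mkQ := Submodule.mem_map_of_mem hx
  rw [h0] at this
  simpa using this

lemma len_fin (N Q : Submodule A M) (h : len N Q ≠ ⊤) :
    ∃ G : Finset M, (G : Set M) ⊆ N ∧ N ≤ Submodule.span A (G : Set M) ⊔ Q := by
  classical
  have h1 : IsFiniteLength A (N.map Q.mkQ) := Module.length_ne_top_iff.mp h
  have h2 := ((isFiniteLength_iff_isNoetherian_isArtinian).mp h1).1
  have h3 : (N.map Q.mkQ).FG := Module.Finite.iff_fg.mp inferInstance
  obtain ⟨G, hG⟩ := h3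
  have h4 : (G : Set _) ⊆ Q.mkQ '' (N : Set M) := by
    intro x hx
    have : x ∈ N.map Q.mkQ := hG ▸ Submodule.subset_span hx
    exact this
  obtain ⟨G', hG', rfl⟩ := Finset.subset_set_image_iff.mp h4
  refine ⟨G', hG', ?_⟩
  rw [Finset.coe_image, ← Submodule.map_span] at hG
  have := Submodule.comap_map_mkQ Q (Submodule.span A (G' : Set M))
  rw [sup_comm, ← this, hG]
  exact Submodule.le_comap_map _ _

lemma len_mul (x : A) (N Q : Ideal A) :
    len (Ideal.span {x} * N) Q = len N (Submodule.comap (LinearMap.mulLeft A x) Q) := by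
  have := len_ker (Q.mkQ ∘ₗ LinearMap.mulLeft A x) N
  rw [LinearMap.ker_comp, Submodule.ker_mkQ, Submodule.map_comp] at this
  have h2 : Submodule.map (LinearMap.mulLeft A x) N = Ideal.span {x} * N := by
    ext y
    rw [Ideal.mem_span_singleton_mul]
    rfl
  rw [h2] at this
  exact this

end

lemma len_card {A : Type*} [CommRing A] [IsLocalRing A] (N : Ideal A) (G : Finset A)
    (hG : Ideal.span (G : Set A) = N) :
    len N (IsLocalRing.maximalIdeal A • N) ≤ G.card := by
  classical
  set Q := IsLocalRing.maximalIdeal A • N with hQ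
  have hm : ∀ g : G, IsLocalRing.maximalIdeal A ≤
      LinearMap.ker (LinearMap.toSpanSingleton A (A ⧸ Q) (Q.mkQ g.1)) := by
    intro g x hx
    rw [LinearMap.mem_ker, LinearMap.toSpanSingleton_apply, ← map_smul, ← LinearMap.mem_ker,
      Submodule.ker_mkQ]
    exact Submodule.smul_mem_smul hx (hG ▸ Ideal.subset_span g.2)
  let F : (G → A ⧸ IsLocalRing.maximalIdeal A) →ₗ[A] A ⧸ Q :=
    ∑ g : G, (Submodule.liftQ (IsLocalRing.maximalIdeal A) _ (hm g)) ∘ₗ LinearMap.proj g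
  have hle : Submodule.map Q.mkQ N ≤ LinearMap.range F := by
    rw [← hG, Ideal.span, Submodule.map_span, Submodule.span_le]
    rintro _ ⟨g, hg, rfl⟩
    refine ⟨Pi.single ⟨g, hg⟩ (Ideal.Quotient.mk _ 1), ?_⟩
    simp only [F, LinearMap.sum_apply, LinearMap.comp_apply, LinearMap.proj_apply]
    rw [Finset.sum_eq_single ⟨g, hg⟩]
    · rw [Pi.single_eq_same]
      erw [Submodule.liftQ_apply]
      simp
    · intro b _ hb
      rw [Pi.single_eq_of_ne hb, map_zero]
    · simp
  have hs : IsSimpleModule A (A ⧸ IsLocalRing.maximalIdeal A) :=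
    isSimpleModule_iff_isCoatom.mpr (IsLocalRing.maximalIdeal.isMaximal A).out
  calc Module.length A (Submodule.map Q.mkQ N) ≤ Module.length A (LinearMap.range F) :=
        Module.length_le_of_injective _ (Submodule.inclusion_injective hle)
    _ ≤ Module.length A (G → A ⧸ IsLocalRing.maximalIdeal A) :=
        Module.length_le_of_surjective F.rangeRestrict F.surjective_rangeRestrict
    _ = G.card := by
        simp [Module.length_eq_one]


section
variable {A : Type*} [CommRing A] [IsLocalRing A]

/-- A set meeting every line through one of its points in a cofinite set (modulo `m`). -/
def LineOpen {E : Type*} [AddCommGroup E] [Module A E] (U : Set E) : Prop :=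
  ∀ a ∈ U, ∀ b : E, ∃ B : Set (IsLocalRing.ResidueField A), B.Finite ∧
    ∀ c : A, IsLocalRing.residue A c ∉ B → a + c • b ∈ U

lemma LineOpen.inter {E : Type*} [AddCommGroup E] [Module A E] {U V : Set E}
    (hU : LineOpen (A := A) U) (hV : LineOpen (A := A) V) : LineOpen (A := A) (U ∩ V) := by
  intro a ha b
  obtain ⟨B, hB, h1⟩ := hU a ha.1 b
  obtain ⟨B', hB', h2⟩ := hV a ha.2 b
  refine ⟨B ∪ B', hB.union hB', fun c hc => ⟨h1 c fun h => hc (Or.inl h),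
    h2 c fun h => hc (Or.inr h)⟩⟩

lemma LineOpen.inter_nonempty [Infinite (IsLocalRing.ResidueField A)]
    {E : Type*} [AddCommGroup E] [Module A E] {U V : Set E}
    (hU : LineOpen (A := A) U) (hV : LineOpen (A := A) V) (hU' : U.Nonempty) (hV' : V.Nonempty) :
    (U ∩ V).Nonempty := by
  obtain ⟨a, ha⟩ := hU'
  obtain ⟨b, hb⟩ := hV'
  obtain ⟨B, hB, h1⟩ := hU a ha (b - a)
  obtain ⟨B', hB', h2⟩ := hV b hb (a - b)
  obtain ⟨k, hk⟩ := (hB.union (hB'.image (fun x => 1 - x))).infinite_compl.nonempty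
  obtain ⟨c, rfl⟩ := IsLocalRing.residue_surjective k
  refine ⟨a + c • (b - a), h1 c fun h => hk (Or.inl h), ?_⟩
  have := h2 (1 - c) fun h => hk (Or.inr ⟨_, h, by simp⟩)
  convert this using 1
  module

lemma exists_common [Infinite (IsLocalRing.ResidueField A)]
    {E : Type*} [AddCommGroup E] [Module A E] {κ : Type*} (S : Finset κ) (U : κ → Set E)
    (hU : ∀ k, LineOpen (A := A) (U k)) (hU' : ∀ k, (U k).Nonempty) :
    LineOpen (A := A) (⋂ k ∈ S, U k) ∧ (⋂ k ∈ S, U k).Nonempty := by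
  classical
  induction S using Finset.induction_on with
  | empty =>
    simp only [Finset.notMem_empty, Set.iInter_of_empty, Set.iInter_univ]
    exact ⟨fun a _ b => ⟨∅, Set.finite_empty, fun _ _ => trivial⟩, ⟨0, trivial⟩⟩
  | insert k S hk ih =>
    rw [Finset.set_biInter_insert]
    exact ⟨(hU k).inter ih.1, (hU k).inter_nonempty ih.1 (hU' k) ih.2⟩

lemma mem_span_range_mul {A : Type*} [CommRing A] {r : ℕ} (h : Fin r → A) (N : Ideal A) (y : A)
    (hy : y ∈ Ideal.span (Set.range h) * N) :
    ∃ w : Fin r → A, (∀ t, w t ∈ N) ∧ y = ∑ t, h t * w t := by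
  classical
  induction hy using Submodule.mul_induction_on' with
  | mem_mul_mem m hm n hn =>
    obtain ⟨c, rfl⟩ := (Ideal.mem_span_range_iff_exists_fun).mp hm
    refine ⟨fun t => c t * n, fun t => N.mul_mem_left _ hn, ?_⟩
    rw [Finset.sum_mul]
    exact Finset.sum_congr rfl fun t _ => by ring
  | add x hx y hy ihx ihy =>
    obtain ⟨w, hw, rfl⟩ := ihx
    obtain ⟨w', hw', rfl⟩ := ihy
    refine ⟨fun t => w t + w' t, fun t => N.add_mem (hw t) (hw' t), ?_⟩
    rw [← Finset.sum_add_distrib]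
    exact Finset.sum_congr rfl fun t _ => by ring

lemma mem_span_finset_sup {A : Type*} [CommRing A] (G : Finset A) (Q : Ideal A) (y : A)
    (hy : y ∈ Ideal.span (G : Set A) ⊔ Q) :
    ∃ v : G → A, y - ∑ g : G, v g * g.1 ∈ Q := by
  obtain ⟨z, hz, q, hq, rfl⟩ := Submodule.mem_sup.mp hy
  have hr : (G : Set A) = Set.range (fun g : G => g.1) := by simp
  rw [hr] at hz
  obtain ⟨c, rfl⟩ := (Ideal.mem_span_range_iff_exists_fun).mp hz
  exact ⟨c, by simpa using hq⟩

/-- `φ` is polynomial on lines with coefficients in `I`. -/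
def PolyOn {E : Type*} [AddCommGroup E] [Module A E] (I : Ideal A) (φ : E → A) : Prop :=
  ∀ a b : E, ∃ f : A[X], (∀ k, f.coeff k ∈ I) ∧ ∀ c : A, φ (a + c • b) = f.eval c

lemma lineOpen_gen {E : Type*} [AddCommGroup E] [Module A E] (I : Ideal A) (φ : E → A)
    (hφ : PolyOn I φ) (N N' Q : Ideal A) (hN : I * N' ≤ N)
    (hG : ∃ G : Finset A, (G : Set A) ⊆ N ∧ N ≤ Ideal.span (G : Set A) ⊔ Q) (r : ℕ) :
    LineOpen (A := A) {l : Fin r → E | N ≤ Ideal.span (Set.range fun t => φ (l t)) * N' ⊔ Q} := by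
  classical
  intro a ha b
  simp only [Set.mem_ofPred_eq] at ha ⊢
  obtain ⟨G, hGN, hG⟩ := hG
  choose f hf hfe using fun t => hφ (a t) (b t)
  have h1 : ∀ g : G, ∃ w : Fin r → A, (∀ t, w t ∈ N') ∧ g.1 - ∑ t, φ (a t) * w t ∈ Q := by
    intro g
    obtain ⟨z, hz, q, hq, hzq⟩ := Submodule.mem_sup.mp (ha (hGN g.2))
    obtain ⟨w, hw, rfl⟩ := mem_span_range_mul _ _ _ hz
    exact ⟨w, hw, by rw [← hzq]; simpa using hq⟩
  choose w hw hwq using h1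
  let p : G → A[X] := fun g => ∑ t, f t * C (w g t)
  have hpN : ∀ g k, (p g).coeff k ∈ N := by
    intro g k
    simp only [p, finsetSum_coeff, coeff_mul_C]
    exact N.sum_mem fun t _ => hN (Ideal.mul_mem_mul (hf t k) (hw g t))
  have hp0 : ∀ g : G, g.1 - (p g).coeff 0 ∈ Q := by
    intro g
    have : (p g).coeff 0 = ∑ t, φ (a t) * w g t := by
      simp only [p, finsetSum_coeff, coeff_mul_C]
      refine Finset.sum_congr rfl fun t _ => ?_
      have := hfe t 0
      rw [zero_smul, add_zero] at this
      rw [this, coeff_zero_eq_eval_zero]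
    rw [this]
    exact hwq g
  have hv : ∀ (g : G) (k : ℕ), ∃ v : G → A, (p g).coeff k - ∑ g' : G, v g' * g'.1 ∈ Q ∧
      (k = 0 → v = Pi.single g 1) := by
    intro g k
    by_cases hk : k = 0
    · subst hk
      refine ⟨Pi.single g 1, ?_, fun _ => rfl⟩
      have : ∑ g' : G, (Pi.single g 1 : G → A) g' * g'.1 = g.1 := by
        simp [Pi.single_apply]
      rw [this]
      simpa using Q.neg_mem (hp0 g)
    · obtain ⟨v, hv⟩ := mem_span_finset_sup G Q _ (hG (hpN g k))
      exact ⟨v, hv, fun h => absurd h hk⟩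
  choose v hv hv0 using hv
  let M : Matrix G G A[X] := Matrix.of fun g g' =>
    ∑ k ∈ Finset.range ((p g).natDegree + 1), C (v g k g') * X ^ k
  have hMe : ∀ (c : A) (g : G), (p g).eval c - ∑ g' : G, (M g g').eval c * g'.1 ∈ Q := by
    intro c g
    have : (p g).eval c - ∑ g' : G, (M g g').eval c * g'.1 =
        ∑ k ∈ Finset.range ((p g).natDegree + 1),
          c ^ k * ((p g).coeff k - ∑ g' : G, v g k g' * g'.1) := by
      simp only [M, Matrix.of_apply, eval_finsetSum, eval_mul, eval_C, eval_pow, eval_X, mul_sub,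
        Finset.sum_sub_distrib, Finset.sum_mul, Finset.mul_sum]
      rw [eval_eq_sum_range, Finset.sum_comm]
      congr 1
      · exact Finset.sum_congr rfl fun k _ => by ring
      · exact Finset.sum_congr rfl fun k _ => Finset.sum_congr rfl fun g' _ => by ring
    rw [this]
    exact Q.sum_mem fun k _ => Q.mul_mem_left _ (hv g k)
  have hM0 : (evalRingHom (0 : A)).mapMatrix M = 1 := by
    ext g g'
    simp only [M, RingHom.mapMatrix_apply, Matrix.map_apply, Matrix.of_apply, coe_evalRingHom,
      eval_finsetSum, eval_mul, eval_C, eval_pow, eval_X]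
    rw [Finset.sum_range_succ', Finset.sum_eq_zero (fun k _ => by simp), hv0 g 0 rfl]
    simp [Matrix.one_apply, Pi.single_apply, eq_comm]
  let F := M.det.map (IsLocalRing.residue A)
  have hF : F ≠ 0 := by
    intro h
    have h2 : F.eval (IsLocalRing.residue A 0) = IsLocalRing.residue A (M.det.eval 0) :=
      eval_map_apply _ _
    have h3 : M.det.eval 0 = 1 := by
      have := RingHom.map_det (evalRingHom (0 : A)) M
      rw [hM0, Matrix.det_one] at this
      exact this
    rw [h3, h] at h2
    simp at h2
  refine ⟨{x | F.IsRoot x}, finite_setOfPred_isRoot hF, fun c hc => ?_⟩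
  have hd : IsUnit (M.det.eval c) := by
    rw [← IsLocalRing.residue_ne_zero_iff_isUnit]
    intro h
    apply hc
    change F.eval _ = 0
    rw [← h]
    exact eval_map_apply _ _
  set T := Ideal.span (Set.range fun t => φ ((a + c • b) t)) * N' ⊔ Q with hT
  have hpT : ∀ g, (p g).eval c ∈ T := by
    intro g
    simp only [p, eval_finsetSum, eval_mul, eval_C]
    refine T.sum_mem fun t _ => Ideal.mem_sup_left (Ideal.mul_mem_mul ?_ (hw g t))
    rw [← hfe]
    exact Ideal.subset_span ⟨t, rfl⟩
  let Mc := (evalRingHom c).mapMatrix M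
  have hdet : Mc.det = M.det.eval c := ((evalRingHom c).map_det M).symm
  have hvec : ∀ g, (Mc.mulVec (fun g : G => g.1)) g ∈ T := by
    intro g
    have h2 := T.sub_mem (hpT g) (Ideal.mem_sup_right (hMe c g) : _ ∈ T)
    rw [sub_sub_cancel] at h2
    exact h2
  have hgT : (G : Set A) ⊆ T := by
    intro g hg
    have h3 : Mc.adjugate.mulVec (Mc.mulVec (fun g : G => g.1)) = Mc.det • (fun g : G => g.1) := by
      rw [Matrix.mulVec_mulVec, Matrix.adjugate_mul, Matrix.smul_mulVec, Matrix.one_mulVec]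
    have h4 := congrFun h3 ⟨g, hg⟩
    simp only [Pi.smul_apply, smul_eq_mul] at h4
    have h5 : Mc.det * g ∈ T := by
      rw [← h4]
      exact T.sum_mem fun g' _ => T.mul_mem_left _ (hvec g')
    rw [hdet] at h5
    exact (Ideal.unit_mul_mem_iff_mem T hd).mp h5
  exact hG.trans (sup_le (Ideal.span_le.mpr hgT) le_sup_right)

/-- `0, ⊤, I, I^2, …` -/
def R {A : Type*} [CommRing A] (I : Ideal A) : ℕ → Ideal A
  | 0 => ⊥
  | n + 1 => I ^ n

lemma mul_R {A : Type*} [CommRing A] (I : Ideal A) (n : ℕ) : I * R I n ≤ R I (n + 1) := by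
  cases n with
  | zero => simp [R]
  | succ n => simp [R, pow_succ']

theorem main_s19 [Infinite (IsLocalRing.ResidueField A)]
    {E : Type*} [AddCommGroup E] [Module A E] (I : Ideal A) (φ : E → A)
    (hφ : PolyOn I φ) (hspan : Ideal.span (Set.range φ) = I) (n r : ℕ) :
    ∀ Q : Ideal A, len (R I (n + 1)) Q < ((n + r).choose n : ℕ) →
      ∃ l : Fin r → E, R I (n + 1) ≤ Ideal.span (Set.range fun t => φ (l t)) * R I n ⊔ Q := by
  classical
  induction n generalizing r with
  | zero =>
    intro Q h
    refine ⟨0, (len_lt_one _ _ ?_).trans le_sup_right⟩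
    simpa using h
  | succ n ihn =>
    induction r with
    | zero =>
      intro Q h
      refine ⟨0, (len_lt_one _ _ ?_).trans le_sup_right⟩
      simpa using h
    | succ r ihr =>
      intro Q h
      have hφI : ∀ x, φ x ∈ I := fun x => hspan ▸ Ideal.subset_span ⟨x, rfl⟩
      have hle : ∀ x, Ideal.span {φ x} * R I (n + 1) ≤ R I (n + 2) := fun x =>
        (Ideal.mul_mono_left (Ideal.span_le.mpr (by simpa using hφI x))).trans (mul_R I (n + 1))
      have hadd := fun x => len_add _ _ Q (hle x)
      by_cases hc : ∃ x : E, len (R I (n + 2)) (Q ⊔ Ideal.span {φ x} * R I (n + 1)) <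
          ((n + 1 + r).choose (n + 1) : ℕ)
      · obtain ⟨x, hx⟩ := hc
        obtain ⟨l, hl⟩ := ihr _ hx
        refine ⟨Fin.cons x l, hl.trans ?_⟩
        refine sup_le ?_ (sup_le le_sup_right ?_)
        · refine le_sup_of_le_left (Ideal.mul_mono_left (Ideal.span_mono ?_))
          rintro _ ⟨t, rfl⟩
          exact ⟨t.succ, by simp⟩
        · refine le_sup_of_le_left (Ideal.mul_mono_left (Ideal.span_mono ?_))
          rintro _ rfl
          exact ⟨0, by simp⟩
      · push Not at hc
        have hx : ∀ x, len (Ideal.span {φ x} * R I (n + 1)) Q < ((n + (r + 1)).choose n : ℕ) := by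
          intro x
          by_contra hcon
          push Not at hcon
          have h1 := add_le_add hcon (hc x)
          rw [← hadd x] at h1
          have h2 := h1.trans_lt h
          rw [← Nat.cast_add, Nat.cast_lt] at h2
          have h3 : (n + 1 + (r + 1)).choose (n + 1) =
              (n + (r + 1)).choose n + (n + 1 + r).choose (n + 1) := by
            rw [show n + 1 + (r + 1) = (n + (r + 1)) + 1 by ring, Nat.choose_succ_succ',
              show n + 1 + r = n + (r + 1) by ring]
          omega
        let U : E → Set (Fin (r + 1) → E) := fun x =>
          {l | Ideal.span {φ x} * R I (n + 1) ≤
            Ideal.span (Set.range fun t => φ (l t)) * (Ideal.span {φ x} * R I n) ⊔ Q}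
        have hUo : ∀ x, LineOpen (A := A) (U x) := by
          intro x
          refine lineOpen_gen I φ hφ _ _ Q ?_ (len_fin _ _ (hx x).ne_top) (r + 1)
          rw [mul_left_comm]
          exact Ideal.mul_mono_right (mul_R I n)
        have hUn : ∀ x, (U x).Nonempty := by
          intro x
          have h1 := hx x
          rw [len_mul] at h1
          obtain ⟨l, hl⟩ := ihn (r + 1) _ h1
          refine ⟨l, ?_⟩
          change Ideal.span {φ x} * R I (n + 1) ≤ _
          refine (Ideal.mul_mono_right hl).trans ?_
          rw [Ideal.mul_sup, mul_left_comm]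
          refine sup_le_sup le_rfl ?_
          rw [Ideal.span_singleton_mul_le_iff]
          intro z hz
          exact hz
        obtain ⟨G, hGN, hG⟩ := len_fin _ _ h.ne_top
        have hg : ∀ g : G, ∃ S : Finset E, g.1 ∈ ⨆ x ∈ S, Ideal.span {φ x} * R I (n + 1) := by
          intro g
          have h1 : g.1 ∈ R I (n + 2) := hGN g.2
          have h2 : R I (n + 2) = ⨆ x : E, Ideal.span {φ x} * R I (n + 1) := by
            rw [← Submodule.iSup_mul]
            have : (⨆ x : E, Ideal.span {φ x}) = I := by
              rw [← hspan]
              exact Submodule.span_range_eq_iSup.symm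
            rw [this]
            simp [R, pow_succ']
          rw [h2] at h1
          exact (Submodule.mem_iSup_iff_exists_finset).mp h1
        choose S hS using hg
        obtain ⟨l, hl⟩ := (exists_common (Finset.univ.biUnion S) U hUo hUn).2
        simp only [Set.mem_iInter] at hl
        refine ⟨l, hG.trans (sup_le (Ideal.span_le.mpr ?_) le_sup_right)⟩
        intro g hgG
        have h1 := hS ⟨g, hgG⟩
        refine (show (⨆ x ∈ S ⟨g, hgG⟩, Ideal.span {φ x} * R I (n + 1)) ≤ _ from
          iSup₂_le fun x hx => ?_) h1
        refine (hl x (Finset.mem_biUnion.mpr ⟨_, Finset.mem_univ _, hx⟩)).trans ?_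
        refine sup_le_sup (Ideal.mul_mono_right ?_) le_rfl
        exact (Ideal.mul_mono_left (Ideal.span_le.mpr (by simpa using hφI x))).trans (mul_R I n)

end

section polar
variable {A : Type*} [CommRing A]

/-- Inclusion-exclusion for surjectivity. -/
lemma surj_sum {s : ℕ} (τ : Fin s → Fin s) :
    ∑ S : Finset (Fin s), (-1 : A) ^ (Sᶜ.card) * ∏ j : Fin s, (if τ j ∈ S then (1 : A) else 0) =
      if Function.Bijective τ then 1 else 0 := by
  classical
  have h1 := Finset.prod_add (fun _ : Fin s => (1 : A))
    (fun u => if u ∈ Set.range τ then (0 : A) else -1) Finset.univ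
  rw [Finset.powerset_univ] at h1
  have h2 : ∀ S : Finset (Fin s),
      (-1 : A) ^ (Sᶜ.card) * ∏ j : Fin s, (if τ j ∈ S then (1 : A) else 0) =
      (∏ u ∈ S, (1 : A)) * ∏ u ∈ Finset.univ \ S, (if u ∈ Set.range τ then (0 : A) else -1) := by
    intro S
    rw [Finset.prod_const_one, one_mul, ← Finset.compl_eq_univ_sdiff]
    by_cases h : ∀ j, τ j ∈ S
    · rw [Finset.prod_eq_one (fun j _ => if_pos (h j)), mul_one]
      rw [Finset.prod_congr rfl (g := fun _ => (-1 : A)), Finset.prod_const]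
      intro u hu
      rw [if_neg]
      rintro ⟨j, rfl⟩
      exact (Finset.mem_compl.mp hu) (h j)
    · push Not at h
      obtain ⟨j, hj⟩ := h
      rw [Finset.prod_eq_zero (Finset.mem_univ j) (if_neg hj), mul_zero]
      have hr : τ j ∈ Set.range τ := ⟨j, rfl⟩
      symm
      exact Finset.prod_eq_zero (Finset.mem_compl.mpr hj) (if_pos hr)
  rw [Finset.sum_congr rfl (fun S _ => h2 S), ← h1]
  by_cases hb : Function.Bijective τ
  · rw [if_pos hb]
    exact Finset.prod_eq_one fun u _ => by simp [hb.2 u]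
  · rw [if_neg hb]
    have hs : ¬ Function.Surjective τ := fun h => hb (Finite.surjective_iff_bijective.mp h)
    rw [Function.Surjective] at hs
    push Not at hs
    obtain ⟨u, hu⟩ := hs
    refine Finset.prod_eq_zero (Finset.mem_univ u) ?_
    rw [if_neg]
    · ring
    · rintro ⟨j, hj⟩
      exact hu j hj

open Classical in
/-- Polarization: extraction of the multilinear coefficient. -/
lemma polar {s : ℕ} (a : Fin s → Fin s) (x : Fin s → A) :
    ∑ S : Finset (Fin s), (-1 : A) ^ (Sᶜ.card) *
      ∏ j : Fin s, ∑ u ∈ S with a u ≤ j, x u =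
    ((Finset.univ.filter fun τ : Fin s → Fin s =>
      Function.Bijective τ ∧ ∀ j, a (τ j) ≤ j).card : A) * ∏ j, x j := by
  have h1 : ∀ S : Finset (Fin s), ∏ j : Fin s, ∑ u ∈ S with a u ≤ j, x u =
      ∑ τ : Fin s → Fin s, (∏ j, if τ j ∈ S then (1 : A) else 0) *
        ∏ j, if a (τ j) ≤ j then x (τ j) else 0 := by
    intro S
    have h2 : ∀ j, ∑ u ∈ S with a u ≤ j, x u =
        ∑ u : Fin s, (if u ∈ S then (1 : A) else 0) * if a u ≤ j then x u else 0 := by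
      intro j
      rw [Finset.sum_filter, ← Finset.sum_filter_add_sum_filter_not Finset.univ (· ∈ S)]
      rw [Finset.sum_eq_zero (s := Finset.univ.filter (· ∉ S)), add_zero]
      · have : Finset.univ.filter (· ∈ S) = S := by ext; simp
        rw [this]
        exact Finset.sum_congr rfl fun u hu => by rw [if_pos hu, one_mul]
      · intro u hu
        rw [if_neg (Finset.mem_filter.mp hu).2, zero_mul]
    rw [Finset.prod_congr rfl (fun j _ => h2 j), Finset.prod_univ_sum, Fintype.piFinset_univ]
    exact Finset.sum_congr rfl fun τ _ => Finset.prod_mul_distrib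
  simp_rw [h1, Finset.mul_sum]
  rw [Finset.sum_comm]
  simp_rw [← mul_assoc, ← Finset.sum_mul, surj_sum]
  rw [Finset.card_filter, Nat.cast_sum, Finset.sum_mul]
  refine Finset.sum_congr rfl fun τ _ => ?_
  by_cases hb : Function.Bijective τ
  · by_cases ht : ∀ j, a (τ j) ≤ j
    · rw [if_pos hb, if_pos ⟨hb, ht⟩, Finset.prod_congr rfl (fun j _ => if_pos (ht j))]
      rw [Nat.cast_one]
      congr 1
      exact Function.Bijective.prod_comp hb x
    · rw [if_neg (c := Function.Bijective τ ∧ ∀ j, a (τ j) ≤ j) (fun h => ht h.2)]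
      push Not at ht
      obtain ⟨j, hj⟩ := ht
      rw [Finset.prod_eq_zero (Finset.mem_univ j) (if_neg (not_le.mpr hj))]
      simp
  · rw [if_neg hb, if_neg (fun h => hb h.1)]
    simp

end polar

section final
variable {A : Type*} [CommRing A]

/-- The nested product form. -/
def phi {s : ℕ} (J : Fin s → Ideal A) (l : ∀ j, J j) : A :=
  ∏ j : Fin s, ∑ k ∈ Finset.Iic j, (l k : A)

lemma sum_mem_sum {s : ℕ} (J : Fin s → Ideal A) (l : ∀ j, J j) (j : Fin s) :
    ∑ k ∈ Finset.Iic j, (l k : A) ∈ ∑ k ∈ Finset.Iic j, J k := by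
  refine Ideal.sum_mem _ fun k hk => ?_
  rw [Ideal.sum_eq_sup]
  exact (Finset.le_sup (f := J) hk) (l k).2

lemma polyOn_phi [IsLocalRing A] {s : ℕ} (J : Fin s → Ideal A) :
    PolyOn (∏ j : Fin s, ∑ k ∈ Finset.Iic j, J k) (phi J) := by
  intro a b
  refine ⟨∏ j : Fin s, (C (∑ k ∈ Finset.Iic j, (a k : A)) + X * C (∑ k ∈ Finset.Iic j, (b k : A))),
    ?_, ?_⟩
  · rw [← Ideal.mem_map_C_iff, ← Ideal.mapHom_apply, map_prod]
    refine Ideal.prod_mem_prod fun j _ => ?_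
    exact Ideal.add_mem _ (Ideal.mem_map_of_mem _ (sum_mem_sum J a j))
      (Ideal.mul_mem_left _ _ (Ideal.mem_map_of_mem _ (sum_mem_sum J b j)))
  · intro c
    simp only [phi, eval_prod, eval_add, eval_mul, eval_C, eval_X]
    refine Finset.prod_congr rfl fun j _ => ?_
    simp [Finset.sum_add_distrib, Finset.mul_sum]

open scoped Pointwise in
lemma span_phi [IsLocalRing A] [CharZero (IsLocalRing.ResidueField A)]
    {s : ℕ} (J : Fin s → Ideal A) :
    Ideal.span (Set.range (phi J)) = ∏ j : Fin s, ∑ k ∈ Finset.Iic j, J k := by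
  classical
  apply le_antisymm
  · rw [Ideal.span_le]
    rintro _ ⟨l, rfl⟩
    exact Ideal.prod_mem_prod fun j _ => sum_mem_sum J l j
  · rw [Finset.prod_univ_sum, Ideal.sum_eq_sup]
    refine Finset.sup_le fun a ha => ?_
    have ha' : ∀ j, a j ≤ j := fun j => by
      have := Fintype.mem_piFinset.mp ha j
      simpa using this
    have h1 : ∏ j, J (a j) = Ideal.span (∏ j, (J (a j) : Set A)) := by
      rw [← Ideal.prod_span]
      simp
    rw [h1, Ideal.span_le]
    intro y hy
    rw [Set.mem_fintype_prod] at hy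
    obtain ⟨x, hx, rfl⟩ := hy
    have hp := polar a x
    have hunit : IsUnit ((Finset.univ.filter fun τ : Fin s → Fin s =>
        Function.Bijective τ ∧ ∀ j, a (τ j) ≤ j).card : A) := by
      rw [← IsLocalRing.residue_ne_zero_iff_isUnit, map_natCast, Nat.cast_ne_zero]
      exact (Finset.card_pos.mpr ⟨id, Finset.mem_filter.mpr
        ⟨Finset.mem_univ _, Function.bijective_id, ha'⟩⟩).ne'
    refine (Ideal.unit_mul_mem_iff_mem _ hunit).mp ?_
    have h2 : ∀ S : Finset (Fin s), ∏ j : Fin s, ∑ u ∈ S with a u ≤ j, x u ∈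
        Ideal.span (Set.range (phi J)) := by
      intro S
      refine Ideal.subset_span ⟨fun k => ⟨∑ u ∈ S with a u = k, x u, ?_⟩, ?_⟩
      · refine Ideal.sum_mem _ fun u hu => ?_
        rw [← (Finset.mem_filter.mp hu).2]
        exact hx u
      · refine Finset.prod_congr rfl fun j _ => ?_
        simp only
        rw [← Finset.sum_fiberwise_of_maps_to (s := S.filter fun u => a u ≤ j)
          (t := Finset.Iic j) (g := a) (fun u hu => by simpa using (Finset.mem_filter.mp hu).2)]
        refine Finset.sum_congr rfl fun k hk => Finset.sum_congr ?_ fun _ _ => rfl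
        ext u
        have := Finset.mem_Iic.mp hk
        simp only [Finset.mem_filter]
        grind
    have h3 := Ideal.sum_mem (Ideal.span (Set.range (phi J))) (t := Finset.univ)
      fun (S : Finset (Fin s)) _ => Ideal.mul_mem_left _ ((-1 : A) ^ (Sᶜ.card)) (h2 S)
    rw [hp] at h3
    convert h3

end final

end ES

/-- **Eakin–Sathaye for joint-type reductions (char 0 residue field).**  Let `(A,m)` be a
local ring whose residue field has characteristic `0`, let
`I = I_1·(I_1+I_2)⋯(I_1+⋯+I_s)`, and `i, p` positive integers.  If `I^i` is finitely
generated with minimal number of generators `< C(i+p, i)`, then there are elements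
`h_t = l_{t,1}·(l_{t,1}+l_{t,2})⋯(l_{t,1}+⋯+l_{t,s})` with `l_{t,j} ∈ I_j` such that
`I^i = (h_1, …, h_p)·I^{i-1}`. -/
theorem eakin_sathaye_nested_sums
    {A : Type*} [CommRing A] [IsLocalRing A]
    [CharZero (IsLocalRing.ResidueField A)]
    (s : ℕ) (J : Fin s → Ideal A) (I : Ideal A)
    (hI : I = ∏ j : Fin s, ∑ k ∈ Finset.Iic j, J k)
    (i p : ℕ) (hi : 0 < i) (hp : 0 < p)
    (hv : ∃ G : Finset A, Ideal.span (G : Set A) = I ^ i ∧ G.card < (i + p).choose i) :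
    ∃ l : Fin p → Fin s → A, (∀ t j, l t j ∈ J j) ∧
      I ^ i = Ideal.span
          (Set.range fun t => ∏ j : Fin s, ∑ k ∈ Finset.Iic j, l t k) * I ^ (i - 1) := by
  have : Infinite (IsLocalRing.ResidueField A) := CharZero.infinite _
  obtain ⟨G, hG, hc⟩ := hv
  obtain ⟨n, rfl⟩ : ∃ n, i = n + 1 := ⟨i - 1, by omega⟩
  have hlen := ES.len_card (I ^ (n + 1)) G hG
  have hlt : ES.len (ES.R I (n + 1 + 1)) (IsLocalRing.maximalIdeal A • I ^ (n + 1)) <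
      ((n + 1 + p).choose (n + 1) : ℕ) := hlen.trans_lt (by exact_mod_cast hc)
  obtain ⟨l, hl⟩ := ES.main_s19 I (ES.phi J) (hI ▸ ES.polyOn_phi J) (hI ▸ ES.span_phi J) (n + 1) p _ hlt
  refine ⟨fun t j => (l t j : A), fun t j => (l t j).2, le_antisymm ?_ ?_⟩
  · refine Submodule.le_of_le_smul_of_le_jacobson_bot ⟨G, hG⟩
      (IsLocalRing.maximalIdeal_le_jacobson ⊥) ?_
    exact hl
  · rw [Nat.add_sub_cancel, pow_succ']
    refine Ideal.mul_mono_left (Ideal.span_le.mpr ?_)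
    rintro _ ⟨t, rfl⟩
    have h2 : ES.phi J (l t) ∈ Ideal.span (Set.range (ES.phi J)) := Ideal.subset_span ⟨_, rfl⟩
    rw [ES.span_phi, ← hI] at h2
    exact h2
end
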